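/- arXiv:1210.3997 — 3 statements merged into one kernel-verified Lean document; each statement's English description precedes it below -/
import Mathlib

section
/- Let L/K be a finite Galois extension of complete discrete valued fields of equal characteristic p > 0 with Galois group G, such that the induced extension of residue fields is separable. Then the inverse limit over n of the groups H^1(G, W_n(O_L)), taken along the maps induced by the truncation maps W_{n+1}(O_L) → W_n(O_L), vanishes. -/
/-!
Common background: complete discretely valued fields, their valuation rings,
residue fields, Galois action on the valuation ring, truncated Witt vector
functoriality, and ramification breaks.
-/

noncomputable section

open scoped Classical

/-- A field equipped with a normalized (i.e. surjective onto `ℤ`) discrete additive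
valuation `v : K → WithTop ℤ` with respect to which it is complete. -/
structure CompleteDiscreteValuation (K : Type*) [Field K] where
  v : K → WithTop ℤ
  eq_top_iff : ∀ x : K, v x = ⊤ ↔ x = 0
  map_one : v 1 = 0
  map_mul : ∀ x y : K, v (x * y) = v x + v y
  min_le_add : ∀ x y : K, min (v x) (v y) ≤ v (x + y)
  surjective : ∀ n : ℤ, ∃ x : K, v x = (n : WithTop ℤ)
  complete : ∀ x : ℕ → K,
      (∀ n : ℕ, ((n : ℤ) : WithTop ℤ) ≤ v (x (n + 1) - x n)) →
      ∃ y : K, ∀ n : ℕ, ((n : ℤ) : WithTop ℤ) ≤ v (y - x n)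

namespace TruncatedWittVector

variable {p n : ℕ} [hp : Fact p.Prime] {R S : Type*} [CommRing R] [CommRing S]

lemma truncateFun_congr_map (f : R →+* S) (a b : WittVector p R)
    (h : WittVector.truncateFun n a = WittVector.truncateFun n b) :
    WittVector.truncateFun n (WittVector.map f a) =
      WittVector.truncateFun n (WittVector.map f b) := by
  ext i
  have hc := congrArg (fun z => TruncatedWittVector.coeff i z) h
  simp only [WittVector.coeff_truncateFun] at hc ⊢
  rw [WittVector.map_coeff, WittVector.map_coeff, hc]

/-- Functoriality of truncated Witt vectors: the ring homomorphism
`W_n(R) → W_n(S)` induced by `f : R → S`, acting componentwise. -/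
def map (f : R →+* S) : TruncatedWittVector p n R →+* TruncatedWittVector p n S where
  toFun x := WittVector.truncateFun n (WittVector.map f x.out)
  map_one' := by
    show WittVector.truncateFun n (WittVector.map f (1 : TruncatedWittVector p n R).out) = 1
    have h : WittVector.truncateFun n ((1 : TruncatedWittVector p n R)).out =
        WittVector.truncateFun n (1 : WittVector p R) := by
      rw [truncateFun_out, WittVector.truncateFun_one]
    have := truncateFun_congr_map f _ _ h
    rw [this, map_one, WittVector.truncateFun_one]
  map_mul' x y := by
    show WittVector.truncateFun n (WittVector.map f (x * y).out) =
      WittVector.truncateFun n (WittVector.map f x.out) *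
        WittVector.truncateFun n (WittVector.map f y.out)
    have h : WittVector.truncateFun n (x * y).out =
        WittVector.truncateFun n (x.out * y.out) := by
      rw [truncateFun_out, WittVector.truncateFun_mul, truncateFun_out, truncateFun_out]
    have := truncateFun_congr_map f _ _ h
    rw [this, map_mul, WittVector.truncateFun_mul]
  map_zero' := by
    show WittVector.truncateFun n (WittVector.map f (0 : TruncatedWittVector p n R).out) = 0
    have h : WittVector.truncateFun n ((0 : TruncatedWittVector p n R)).out =
        WittVector.truncateFun n (0 : WittVector p R) := by
      rw [truncateFun_out, WittVector.truncateFun_zero]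
    have := truncateFun_congr_map f _ _ h
    rw [this, map_zero, WittVector.truncateFun_zero]
  map_add' x y := by
    show WittVector.truncateFun n (WittVector.map f (x + y).out) =
      WittVector.truncateFun n (WittVector.map f x.out) +
        WittVector.truncateFun n (WittVector.map f y.out)
    have h : WittVector.truncateFun n (x + y).out =
        WittVector.truncateFun n (x.out + y.out) := by
      rw [truncateFun_out, WittVector.truncateFun_add, truncateFun_out, truncateFun_out]
    have := truncateFun_congr_map f _ _ h
    rw [this, map_add, WittVector.truncateFun_add]

@[simp]
lemma map_coeff (f : R →+* S) (x : TruncatedWittVector p n R) (i : Fin n) :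
    (map f x).coeff i = f (x.coeff i) := by
  show (WittVector.truncateFun n (WittVector.map f x.out)).coeff i = f (x.coeff i)
  rw [WittVector.coeff_truncateFun, WittVector.map_coeff, coeff_out]

end TruncatedWittVector

namespace CompleteDiscreteValuation

variable {K : Type*} [Field K]

lemma v_zero (w : CompleteDiscreteValuation K) : w.v 0 = ⊤ := (w.eq_top_iff 0).2 rfl

lemma v_neg_one (w : CompleteDiscreteValuation K) : w.v (-1) = 0 := by
  have h := w.map_mul (-1) (-1)
  rw [neg_mul_neg, one_mul, w.map_one] at h
  cases h' : w.v (-1) with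
  | top =>
      exact absurd ((w.eq_top_iff (-1)).1 h') (by norm_num)
  | coe a =>
      rw [h'] at h
      have ha : a + a = 0 := by exact_mod_cast h.symm
      have : a = 0 := by omega
      rw [this]
      rfl

lemma v_neg (w : CompleteDiscreteValuation K) (x : K) : w.v (-x) = w.v x := by
  rw [show -x = -1 * x by ring, w.map_mul, w.v_neg_one, zero_add]

/-- The valuation ring (ring of integers) of a complete discretely valued field. -/
def integers (w : CompleteDiscreteValuation K) : Subring K where
  carrier := {x : K | 0 ≤ w.v x}
  zero_mem' := by simp [Set.mem_setOf_eq, v_zero]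
  one_mem' := by simp [Set.mem_setOf_eq, w.map_one]
  add_mem' {a b} ha hb := le_trans (le_min ha hb) (w.min_le_add a b)
  mul_mem' {a b} ha hb := by
    simp only [Set.mem_setOf_eq] at *
    rw [w.map_mul]
    exact add_nonneg ha hb
  neg_mem' {a} ha := by
    simp only [Set.mem_setOf_eq] at *
    rwa [w.v_neg]

lemma mem_integers_iff (w : CompleteDiscreteValuation K) (x : K) :
    x ∈ w.integers ↔ 0 ≤ w.v x := Iff.rfl

/-- The maximal ideal of the valuation ring. -/
def maxIdeal (w : CompleteDiscreteValuation K) : Ideal w.integers where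
  carrier := {x | 0 < w.v (x : K)}
  zero_mem' := by simp [Set.mem_setOf_eq, v_zero]
  add_mem' {a b} ha hb := lt_of_lt_of_le (lt_min ha hb) (w.min_le_add (a : K) (b : K))
  smul_mem' c x hx := by
    simp only [Set.mem_setOf_eq] at *
    show 0 < w.v ((c : K) * (x : K))
    rw [w.map_mul]
    exact lt_of_lt_of_le hx (le_add_of_nonneg_left c.2)

/-- The residue field of a complete discretely valued field. -/
abbrev residueField (w : CompleteDiscreteValuation K) := w.integers ⧸ w.maxIdeal

section Extension

variable {L : Type*} [Field L] [Algebra K L]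

/-- The ring homomorphism between valuation rings induced by the inclusion `K ⟶ L`,
when the valuation of `L` restricts to `e` times the valuation of `K`. -/
def integerMap (wK : CompleteDiscreteValuation K) (wL : CompleteDiscreteValuation L)
    (e : ℕ) (hcomp : ∀ x : K, wL.v (algebraMap K L x) = e • wK.v x) :
    wK.integers →+* wL.integers where
  toFun x := ⟨algebraMap K L x, by
    rw [mem_integers_iff, hcomp]
    exact nsmul_nonneg x.2 e⟩
  map_one' := Subtype.ext (by simp)
  map_mul' x y := Subtype.ext (by simp)
  map_zero' := Subtype.ext (by simp)
  map_add' x y := Subtype.ext (by simp)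

/-- The induced homomorphism between the residue fields. -/
def residueMap (wK : CompleteDiscreteValuation K) (wL : CompleteDiscreteValuation L)
    (e : ℕ) (he : 0 < e) (hcomp : ∀ x : K, wL.v (algebraMap K L x) = e • wK.v x) :
    wK.residueField →+* wL.residueField :=
  Ideal.Quotient.lift wK.maxIdeal
    ((Ideal.Quotient.mk wL.maxIdeal).comp (integerMap wK wL e hcomp))
    (by
      intro a ha
      rw [RingHom.comp_apply, Ideal.Quotient.eq_zero_iff_mem]
      show 0 < wL.v (algebraMap K L (a : K))
      rw [hcomp]
      calc (0 : WithTop ℤ) < wK.v (a : K) := ha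
        _ = 1 • wK.v (a : K) := (one_nsmul _).symm
        _ ≤ e • wK.v (a : K) := nsmul_le_nsmul_left (le_of_lt ha) he)

/-- The induced extension of residue fields `k_L / k_K` is separable. -/
def ResidueSeparable (wK : CompleteDiscreteValuation K) (wL : CompleteDiscreteValuation L)
    (e : ℕ) (he : 0 < e) (hcomp : ∀ x : K, wL.v (algebraMap K L x) = e • wK.v x) : Prop :=
  letI : Algebra wK.residueField wL.residueField := (residueMap wK wL e he hcomp).toAlgebra
  Algebra.IsSeparable wK.residueField wL.residueField

/-- A `K`-algebra automorphism of `L` (necessarily preserving the valuation, which is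
recorded in the hypothesis `hGal`) restricts to a ring homomorphism of the valuation
ring `O_L`.  This is the Galois action on `O_L`. -/
def galRes (wL : CompleteDiscreteValuation L)
    (hGal : ∀ (σ : L ≃ₐ[K] L) (x : L), wL.v (σ x) = wL.v x) (σ : L ≃ₐ[K] L) :
    wL.integers →+* wL.integers where
  toFun x := ⟨σ x, by rw [mem_integers_iff, hGal]; exact x.2⟩
  map_one' := Subtype.ext (by simp)
  map_mul' x y := Subtype.ext (by simp)
  map_zero' := Subtype.ext (by simp)
  map_add' x y := Subtype.ext (by simp)

/-- The statement that the action of the Galois group of `L/K` on `O_L/m_L^{s+1}`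
is faithful: every nontrivial automorphism moves some integer of `L` by an element
of valuation at most `s`. -/
def FaithfulOnQuotient (K : Type*) [Field K] {L : Type*} [Field L] [Algebra K L]
    (wL : CompleteDiscreteValuation L) (s : ℕ) : Prop :=
  ∀ σ : L ≃ₐ[K] L, σ ≠ 1 → ∃ x : L, 0 ≤ wL.v x ∧ wL.v (σ x - x) ≤ ((s : ℤ) : WithTop ℤ)

/-- `s` is the ramification break (lower ramification jump) of `L/K`: the smallest
nonnegative integer such that the induced action of `Gal(L/K)` on `O_L/m_L^{s+1}`
is faithful. -/
def IsRamificationBreak (K : Type*) [Field K] {L : Type*} [Field L] [Algebra K L]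
    (wL : CompleteDiscreteValuation L) (s : ℕ) : Prop :=
  FaithfulOnQuotient K wL s ∧ ∀ t : ℕ, t < s → ¬ FaithfulOnQuotient K wL t

end Extension

end CompleteDiscreteValuation

open CompleteDiscreteValuation

namespace HesAux

/-- Extension of a derivation along a separable field extension. -/
lemma exists_derivation_ext {K L : Type*} [Field K] [Field L] [Algebra K L]
    [Algebra.IsSeparable K L] (D : Derivation ℤ K K) :
    ∃ D' : Derivation ℤ L L, ∀ x : K, D' (algebraMap K L x) = algebraMap K L (D x) := by
  have := Algebra.FormallyEtale.of_isSeparable K L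
  let φ : Ω[K⁄ℤ] →ₗ[K] L := (Algebra.linearMap K L).comp D.liftKaehlerDifferential
  let ψ : Ω[L⁄ℤ] →ₗ[L] L := (φ.liftBaseChange L).comp
    (KaehlerDifferential.tensorKaehlerEquivOfFormallyEtale ℤ K L).symm.toLinearMap
  refine ⟨ψ.compDer (KaehlerDifferential.D ℤ L), fun x => ?_⟩
  have h := KaehlerDifferential.tensorKaehlerEquivOfFormallyEtale_symm_D_algebraMap ℤ K L x
  change (φ.liftBaseChange L) ((KaehlerDifferential.tensorKaehlerEquivOfFormallyEtale ℤ K L).symm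
    (KaehlerDifferential.D ℤ L (algebraMap K L x))) = _
  rw [h]
  simp [φ]

/-- The `n`-th higher logarithmic derivative map `F^n d` on Witt vectors. -/
def G {p : ℕ} {R : Type*} [CommRing R] (D : R → R) (n : ℕ) (x : WittVector p R) : R :=
  ∑ i ∈ Finset.range (n + 1), x.coeff i ^ (p ^ (n - i) - 1) * D (x.coeff i)

lemma G_ghost {p : ℕ} [hp : Fact p.Prime] {R : Type*} [CommRing R] {A : Type*} [CommRing A] [Algebra A R] (D : Derivation A R R)
    (n : ℕ) (x : WittVector p R) :
    D (WittVector.ghostComponent n x) = (p : R) ^ n * G D n x := by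
  rw [WittVector.ghostComponent_apply, wittPolynomial_eq_sum_C_mul_X_pow, map_sum, map_sum, G,
    Finset.mul_sum]
  refine Finset.sum_congr rfl fun i hi => ?_
  have hi' : i ≤ n := by simpa [Nat.lt_succ_iff] using hi
  have e1 : (MvPolynomial.aeval x.coeff) (MvPolynomial.C ((p : ℤ) ^ i) *
      MvPolynomial.X i ^ p ^ (n - i)) = ((p ^ i : ℕ) : R) * x.coeff i ^ p ^ (n - i) := by
    simp
  have e2 : (p : R) ^ n = (p : R) ^ i * (p : R) ^ (n - i) := by
    rw [← pow_add]; congr 1; omega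
  rw [e1, Derivation.leibniz, Derivation.leibniz_pow, Derivation.map_natCast, e2]
  simp only [smul_eq_mul, nsmul_eq_mul]
  push_cast
  ring

lemma G_map {p : ℕ} [hp : Fact p.Prime] {R S : Type*} [CommRing R] [CommRing S]
    (D : R → R) (D' : S → S) (f : R →+* S)
    (hf : ∀ x, D' (f x) = f (D x)) (n : ℕ) (x : WittVector p R) :
    G D' n (WittVector.map f x) = f (G D n x) := by
  simp [G, hf, WittVector.map_coeff]

lemma G_add_aux {p : ℕ} [hp : Fact p.Prime] {P : Type*} [CommRing P] [IsDomain P] [CharZero P]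
    {A : Type*} [CommRing A] [Algebra A P] (d : Derivation A P P)
    (n : ℕ) (x y : WittVector p P) : G d n (x + y) = G d n x + G d n y := by
  have hp0 : ((p : P)) ^ n ≠ 0 := pow_ne_zero _ (Nat.cast_ne_zero.2 hp.out.ne_zero)
  apply mul_left_cancel₀ hp0
  rw [mul_add, ← G_ghost, ← G_ghost, ← G_ghost, _root_.map_add, _root_.map_add]

lemma G_add {p : ℕ} [hp : Fact p.Prime] {R : Type*} [CommRing R] (D : Derivation ℤ R R)
    (n : ℕ) (x y : WittVector p R) : G D n (x + y) = G D n x + G D n y := by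
  let d : Derivation ℤ (MvPolynomial R ℤ) (MvPolynomial R ℤ) :=
    MvPolynomial.mkDerivation ℤ (fun r : R => MvPolynomial.X (D r))
  let π : MvPolynomial R ℤ →+* R := MvPolynomial.eval₂Hom (Int.castRingHom R) (id : R → R)
  have hπ : Function.Surjective π := fun r => ⟨MvPolynomial.X r, by simp [π]⟩
  have hd : ∀ f, D (π f) = π (d f) := by
    intro f
    induction f using MvPolynomial.induction_on with
    | C a => simp [π, d]
    | add f g hf hg => simp only [_root_.map_add, hf, hg]
    | mul_X f r hf =>
      simp only [_root_.map_mul, Derivation.leibniz, smul_eq_mul, _root_.map_add, hf]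
      simp [π, d]
  obtain ⟨x, rfl⟩ := WittVector.map_surjective (p := p) _ hπ x
  obtain ⟨y, rfl⟩ := WittVector.map_surjective (p := p) _ hπ y
  rw [← _root_.map_add, G_map d D _ hd, G_map d D _ hd, G_map d D _ hd, G_add_aux, _root_.map_add]

lemma G_frobenius {p : ℕ} [hp : Fact p.Prime] {R : Type*} [CommRing R] [CharP R p]
    {A : Type*} [CommRing A] [Algebra A R] (D : Derivation A R R) (n : ℕ) (x : WittVector p R) :
    G D n (WittVector.frobenius x) = 0 := by
  refine Finset.sum_eq_zero fun i _ => ?_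
  rw [WittVector.coeff_frobenius_charP, Derivation.leibniz_pow]
  simp [nsmul_eq_mul]

end HesAux

namespace HesAux

section Val
variable {K : Type*} [Field K] (w : CompleteDiscreteValuation K)

/-- The valuation as a Mathlib additive valuation. -/
def av : AddValuation K (WithTop ℤ) :=
  AddValuation.of w.v w.v_zero w.map_one w.min_le_add w.map_mul

lemma av_apply (x : K) : av w x = w.v x := rfl

lemma v_pow (x : K) (n : ℕ) : w.v (x ^ n) = n • w.v x := (av w).map_pow x n

lemma v_ne_top {x : K} (hx : x ≠ 0) : w.v x ≠ ⊤ := fun h => hx ((w.eq_top_iff x).1 h)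

lemma exists_int {x : K} (hx : x ≠ 0) : ∃ n : ℤ, w.v x = n := by
  obtain ⟨n, hn⟩ := WithTop.ne_top_iff_exists.1 (v_ne_top w hx)
  exact ⟨n, hn.symm⟩

lemma ne_zero_of_int {x : K} {n : ℤ} (h : w.v x = n) : x ≠ 0 := by
  rintro rfl
  rw [w.v_zero] at h
  exact WithTop.top_ne_coe h

lemma v_inv {x : K} {n : ℤ} (h : w.v x = n) : w.v x⁻¹ = ((-n : ℤ) : WithTop ℤ) := by
  have hx := ne_zero_of_int w h
  obtain ⟨m, hm⟩ := exists_int w (inv_ne_zero hx)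
  have := w.map_mul x x⁻¹
  rw [mul_inv_cancel₀ hx, w.map_one, h, hm] at this
  have h2 : (0 : ℤ) = n + m := by exact_mod_cast this
  rw [hm]; congr 1; omega

lemma v_pow_int {x : K} {n : ℤ} (h : w.v x = n) (k : ℕ) :
    w.v (x ^ k) = ((k * n : ℤ) : WithTop ℤ) := by
  rw [v_pow, h, ← WithTop.coe_nsmul]; simp

lemma v_zpow {x : K} {n : ℤ} (h : w.v x = n) (k : ℤ) :
    w.v (x ^ k) = ((k * n : ℤ) : WithTop ℤ) := by
  obtain ⟨k, rfl | rfl⟩ := k.eq_nat_or_neg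
  · rw [zpow_natCast, v_pow_int w h]
  · rw [zpow_neg, zpow_natCast, v_inv w (v_pow_int w h k)]; congr 1; ring

lemma v_mul_int {x y : K} {n m : ℤ} (hx : w.v x = n) (hy : w.v y = m) :
    w.v (x * y) = ((n + m : ℤ) : WithTop ℤ) := by
  rw [w.map_mul, hx, hy]; rfl

lemma v_sum {ι : Type*} {s : Finset ι} {f : ι → K} {g : WithTop ℤ}
    (h : ∀ i ∈ s, g ≤ w.v (f i)) : g ≤ w.v (∑ i ∈ s, f i) := (av w).map_le_sum h

lemma v_lt_sum {ι : Type*} {s : Finset ι} {f : ι → K} {g : ℤ}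
    (h : ∀ i ∈ s, (g : WithTop ℤ) < w.v (f i)) : (g : WithTop ℤ) < w.v (∑ i ∈ s, f i) :=
  (av w).map_lt_sum WithTop.coe_ne_top h

lemma v_sub_le {x y : K} {g : WithTop ℤ} (hx : g ≤ w.v x) (hy : g ≤ w.v y) :
    g ≤ w.v (x - y) := le_trans (le_min hx hy) ((av w).map_sub x y)

lemma v_add_le {x y : K} {g : WithTop ℤ} (hx : g ≤ w.v x) (hy : g ≤ w.v y) :
    g ≤ w.v (x + y) := le_trans (le_min hx hy) ((av w).map_add x y)

lemma v_sub_swap (x y : K) : w.v (x - y) = w.v (y - x) := (av w).map_sub_swap x y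

instance maxIdeal_isMaximal : w.maxIdeal.IsMaximal := by
  rw [Ideal.isMaximal_iff]
  refine ⟨?_, ?_⟩
  · intro h
    have : (0 : WithTop ℤ) < w.v ((1 : w.integers) : K) := h
    rw [OneMemClass.coe_one, w.map_one] at this
    exact lt_irrefl _ this
  · intro J x hJ hx hxJ
    have h0 : w.v (x : K) = ((0 : ℤ) : WithTop ℤ) := by
      refine le_antisymm (not_lt.1 fun h => hx h) x.2
    have h1 := v_inv w h0
    have hm : (x : K)⁻¹ ∈ w.integers := by
      rw [mem_integers_iff, h1]; simp
    have := J.mul_mem_left ⟨_, hm⟩ hxJ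
    convert this
    apply Subtype.ext
    simp [inv_mul_cancel₀ (ne_zero_of_int w h0)]

instance residueField_field : Field w.residueField := Ideal.Quotient.field w.maxIdeal

/-- The residue field of a subfield, as a subfield of the residue field. -/
def resSub (E : Subfield K) : Subfield w.residueField where
  carrier := {z | ∃ x : w.integers, (x : K) ∈ E ∧ Ideal.Quotient.mk w.maxIdeal x = z}
  zero_mem' := ⟨0, E.zero_mem, by simp⟩
  one_mem' := ⟨1, E.one_mem, by simp⟩
  add_mem' := by
    rintro _ _ ⟨x, hx, rfl⟩ ⟨y, hy, rfl⟩
    exact ⟨x + y, E.add_mem hx hy, by simp⟩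
  mul_mem' := by
    rintro _ _ ⟨x, hx, rfl⟩ ⟨y, hy, rfl⟩
    exact ⟨x * y, E.mul_mem hx hy, by simp⟩
  neg_mem' := by
    rintro _ ⟨x, hx, rfl⟩
    exact ⟨-x, E.neg_mem hx, by simp⟩
  inv_mem' := by
    rintro _ ⟨x, hx, rfl⟩
    by_cases hz : Ideal.Quotient.mk w.maxIdeal x = 0
    · exact ⟨0, E.zero_mem, by rw [hz]; simp⟩
    · have h0 : w.v (x : K) = ((0 : ℤ) : WithTop ℤ) := by
        refine le_antisymm (not_lt.1 fun h => hz (Ideal.Quotient.eq_zero_iff_mem.2 h)) x.2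
      have hm : (x : K)⁻¹ ∈ w.integers := by
        rw [mem_integers_iff, v_inv w h0]; simp
      refine ⟨⟨_, hm⟩, E.inv_mem hx, ?_⟩
      apply eq_inv_of_mul_eq_one_left
      rw [← _root_.map_mul, ← _root_.map_one (Ideal.Quotient.mk w.maxIdeal)]
      congr 1
      apply Subtype.ext
      simp [inv_mul_cancel₀ (ne_zero_of_int w h0)]

lemma mk_eq_mk {x y : w.integers} :
    Ideal.Quotient.mk w.maxIdeal x = Ideal.Quotient.mk w.maxIdeal y ↔
      0 < w.v ((x : K) - y) := by
  rw [Ideal.Quotient.eq]; rfl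

lemma orth_unit (p : ℕ) [hp : Fact p.Prime] [CharP K p] (E : Subfield K) (hE : ∀ x : K, x ^ p ∈ E)
    (u : K) (hu0 : w.v u = 0) (hu : ∀ y ∈ E, w.v (u - y) ≤ 0)
    (a : ℕ → K) (haE : ∀ i, a i ∈ E) (ha0 : ∀ i, 0 ≤ w.v (a i))
    (hs : 0 < w.v (∑ i ∈ Finset.range p, a i * u ^ i)) :
    ∀ i < p, 0 < w.v (a i) := by
  let κ := resSub w E
  let u' : w.integers := ⟨u, hu0.ge⟩
  let a' : ℕ → w.integers := fun i => ⟨a i, ha0 i⟩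
  let r := Ideal.Quotient.mk w.maxIdeal
  have : CharP w.residueField p := by
    have : CharP w.integers p := inferInstance
    refine (CharP.charP_iff_prime_eq_zero hp.out).2 ?_
    have : ((p : w.integers)) = 0 := CharP.cast_eq_zero _ p
    have h2 := congrArg r this
    rw [map_natCast, map_zero] at h2
    exact h2
  let z : w.residueField := r u'
  have hz : z ∉ κ := by
    rintro ⟨y, hy, hyz⟩
    have := (mk_eq_mk w).1 hyz
    rw [v_sub_swap] at this
    exact absurd (hu _ hy) (not_le.2 this)
  have hzp : z ^ p ∈ κ := ⟨u' ^ p, by simpa [u'] using hE u, by simp [z, r]⟩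
  have hirr : Irreducible (Polynomial.X ^ p - Polynomial.C (⟨z ^ p, hzp⟩ : κ)) := by
    apply X_pow_sub_C_irreducible_of_prime hp.out
    intro b hb
    have h1 : (b : w.residueField) ^ p = z ^ p := congrArg Subtype.val hb
    have h2 : (b : w.residueField) = z := frobenius_inj w.residueField p h1
    exact hz (h2 ▸ b.2)
  have hmin := minpoly.eq_of_irreducible_of_monic (x := z) hirr (by simp [Algebra.algebraMap_eq_smul_one, Subfield.smul_def])
    (Polynomial.monic_X_pow_sub_C _ hp.out.ne_zero)
  let A : ℕ → κ := fun i => ⟨r (a' i), a' i, haE i, rfl⟩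
  let f : Polynomial κ := ∑ i ∈ Finset.range p, Polynomial.C (A i) * Polynomial.X ^ i
  have hf : Polynomial.aeval z f = 0 := by
    have h1 : r (∑ i ∈ Finset.range p, a' i * u' ^ i) = 0 := by
      rw [Ideal.Quotient.eq_zero_iff_mem]
      show 0 < w.v _
      push_cast
      exact hs
    rw [← h1]
    simp [f, A, z, Algebra.algebraMap_eq_smul_one, Subfield.smul_def]
  have hfd : f.degree < p := by
    apply lt_of_le_of_lt (Polynomial.degree_sum_le _ _)
    refine (Finset.sup_lt_iff (WithBot.bot_lt_coe p)).2 ?_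
    intro i hi
    exact lt_of_le_of_lt (Polynomial.degree_C_mul_X_pow_le i _) (WithBot.coe_lt_coe.2 (Finset.mem_range.1 hi))
  have hf0 : f = 0 := by
    by_contra h0
    have := minpoly.degree_le_of_ne_zero κ z h0 hf
    rw [← hmin, Polynomial.degree_X_pow_sub_C hp.out.pos] at this
    exact absurd hfd (not_lt.2 this)
  intro i hi
  have hc : f.coeff i = A i := by
    simp [f, Polynomial.coeff_C_mul, Polynomial.coeff_X_pow, hi]
  rw [hf0, Polynomial.coeff_zero] at hc
  have := congrArg Subtype.val hc.symm
  exact Ideal.Quotient.eq_zero_iff_mem.1 (this : r (a' i) = 0)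

/-- Powers of `s` are orthogonal over `E`. -/
lemma orth (p : ℕ) [hp : Fact p.Prime] [CharP K p] (E : Subfield K) (hE : ∀ x : K, x ^ p ∈ E)
    (s : K) (hs0 : s ≠ 0) (hs : ∀ y ∈ E, w.v (s - y) ≤ w.v s)
    (c : ℕ → K) (hc : ∀ i, c i ∈ E) (m : WithTop ℤ)
    (hm : m ≤ w.v (∑ i ∈ Finset.range p, c i * s ^ i)) :
    ∀ i < p, m ≤ w.v (c i * s ^ i) := by
  by_contra! hcon
  obtain ⟨i₁, hi₁, hlt₁⟩ := hcon
  obtain ⟨i₀, hi₀, hmin⟩ := Finset.exists_min_image (Finset.range p)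
    (fun i => w.v (c i * s ^ i)) ⟨i₁, Finset.mem_range.2 hi₁⟩
  have hlt : w.v (c i₀ * s ^ i₀) < m := lt_of_le_of_lt (hmin i₁ (Finset.mem_range.2 hi₁)) hlt₁
  obtain ⟨μ, hμ⟩ := WithTop.ne_top_iff_exists.1 (ne_top_of_lt hlt)
  replace hμ := hμ.symm
  rw [hμ] at hlt
  have hci₀ : c i₀ ≠ 0 := fun h => ne_zero_of_int w hμ (by rw [h, zero_mul])
  have hj : ∃ j ∈ Finset.range p, j ≠ i₀ ∧ w.v (c j * s ^ j) = μ := by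
    by_contra! hj
    have h1 : (μ : WithTop ℤ) < w.v (∑ j ∈ (Finset.range p).erase i₀, c j * s ^ j) := by
      apply v_lt_sum
      intro j hjm
      have := Finset.mem_erase.1 hjm
      refine lt_of_le_of_ne ?_ (hj j this.2 this.1).symm
      rw [← hμ]; exact hmin j this.2
    rw [← Finset.add_sum_erase _ _ hi₀] at hm
    have h2 := (av w).map_add_eq_of_lt_left (x := c i₀ * s ^ i₀)
      (y := ∑ j ∈ (Finset.range p).erase i₀, c j * s ^ j) (by rw [av_apply, av_apply, hμ]; exact h1)
    rw [av_apply, av_apply, hμ] at h2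
    rw [h2] at hm
    exact absurd hlt (not_lt.2 hm)
  obtain ⟨j, hjp, hji, hjμ⟩ := hj
  have hcj : c j ≠ 0 := fun h => ne_zero_of_int w hjμ (by rw [h, zero_mul])
  obtain ⟨n, hn⟩ := exists_int w hci₀
  obtain ⟨n', hn'⟩ := exists_int w hcj
  obtain ⟨t, ht⟩ := exists_int w hs0
  have e1 : n + i₀ * t = μ := by
    have := v_mul_int w hn (v_pow_int w ht i₀)
    rw [hμ] at this
    exact_mod_cast this.symm
  have e2 : n' + j * t = μ := by
    have := v_mul_int w hn' (v_pow_int w ht j)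
    rw [hjμ] at this
    exact_mod_cast this.symm
  have hcop : IsCoprime ((i₀ : ℤ) - j) (p : ℤ) := by
    rw [isCoprime_comm]
    refine (Prime.coprime_iff_not_dvd (Nat.prime_iff_prime_int.1 hp.out)).2 ?_
    intro hd
    have hi₀' := Finset.mem_range.1 hi₀
    have hjp' := Finset.mem_range.1 hjp
    have := Int.eq_zero_of_abs_lt_dvd hd (by rw [abs_lt]; omega)
    omega
  obtain ⟨a, b, hab⟩ := hcop
  let y : K := (c j * (c i₀)⁻¹) ^ a * (s ^ p) ^ b
  have hyE : y ∈ E := E.mul_mem (zpow_mem (E.mul_mem (hc j) (E.inv_mem (hc i₀))) _) (zpow_mem (hE s) _)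
  have hy : w.v y = t := by
    have := v_mul_int w (v_zpow w (v_mul_int w hn' (v_inv w hn)) a) (v_zpow w (v_pow_int w ht p) b)
    rw [show w.v y = _ from this]
    congr 1
    have e3 : n' - n = (i₀ - j) * t := by linear_combination e2 - e1
    linear_combination a * e3 + t * hab
  have hy0 := ne_zero_of_int w hy
  have hyi : w.v y⁻¹ = ((-t : ℤ) : WithTop ℤ) := v_inv w hy
  clear_value y
  have hg := v_mul_int w hn (v_pow_int w hy i₀)
  rw [e1] at hg
  let g := c i₀ * y ^ i₀
  have hgE : g ∈ E := E.mul_mem (hc i₀) (E.pow_mem hyE _)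
  have hg0 : g ≠ 0 := ne_zero_of_int w hg
  have hgi : w.v g⁻¹ = ((-μ : ℤ) : WithTop ℤ) := v_inv w hg
  have hgdef : c i₀ * y ^ i₀ = g := rfl
  clear_value g
  have key := orth_unit w p E hE (s * y⁻¹) (by rw [v_mul_int w ht hyi]; simp)
    (by
      intro x hx
      have e4 : s * y⁻¹ - x = (s - x * y) * y⁻¹ := by field_simp
      rw [e4, w.map_mul, hyi]
      calc _ ≤ w.v s + ((-t : ℤ) : WithTop ℤ) := by
            gcongr; exact hs _ (E.mul_mem hx hyE)
        _ = 0 := by rw [ht, ← WithTop.coe_add]; simp)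
    (fun i => if i < p then c i * y ^ i * g⁻¹ else 0)
    (by
      intro i
      split_ifs
      · exact E.mul_mem (E.mul_mem (hc i) (E.pow_mem hyE _)) (E.inv_mem hgE)
      · exact E.zero_mem)
    (by
      intro i
      split_ifs with hip
      · have h1 : w.v (c i * y ^ i) = w.v (c i * s ^ i) := by
          rw [w.map_mul, w.map_mul, v_pow, v_pow, hy, ht]
        have h2 := hmin i (Finset.mem_range.2 hip)
        rw [hμ] at h2
        rw [w.map_mul, h1, hgi]
        calc (0 : WithTop ℤ) = (μ : WithTop ℤ) + ((-μ : ℤ) : WithTop ℤ) := by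
              rw [← WithTop.coe_add]; simp
          _ ≤ _ := by gcongr
      · rw [w.v_zero]; exact le_top)
    (by
      have e5 : ∑ i ∈ Finset.range p, (if i < p then c i * y ^ i * g⁻¹ else 0) * (s * y⁻¹) ^ i
          = (∑ i ∈ Finset.range p, c i * s ^ i) * g⁻¹ := by
        rw [Finset.sum_mul]
        refine Finset.sum_congr rfl fun i hi => ?_
        rw [if_pos (Finset.mem_range.1 hi), mul_pow, inv_pow]
        field_simp
      rw [e5, w.map_mul, hgi]
      have h3 : (μ : WithTop ℤ) < w.v (∑ i ∈ Finset.range p, c i * s ^ i) := lt_of_lt_of_le hlt hm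
      cases hv : w.v (∑ i ∈ Finset.range p, c i * s ^ i) with
      | top => simp
      | coe q =>
        rw [hv] at h3
        have h4 : μ < q := by exact_mod_cast h3
        rw [← WithTop.coe_add]
        exact_mod_cast (by omega : 0 < q + -μ))
    i₀ (Finset.mem_range.1 hi₀)
  rw [if_pos (Finset.mem_range.1 hi₀), hgdef, mul_inv_cancel₀ hg0, w.map_one] at key
  exact lt_irrefl _ key

end Val

end HesAux

namespace HesAux

section MaxField
variable {K : Type*} [Field K] (w : CompleteDiscreteValuation K)

lemma exists_prec (x : K) (n : ℤ) : ∃ m : ℤ, ∀ z, (m : WithTop ℤ) ≤ w.v z →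
    (n : WithTop ℤ) ≤ w.v (x * z) := by
  by_cases hx : x = 0
  · exact ⟨0, fun z _ => by rw [hx, zero_mul, w.v_zero]; exact le_top⟩
  · obtain ⟨t, ht⟩ := exists_int w hx
    refine ⟨n - t, fun z hz => ?_⟩
    rw [w.map_mul, ht]
    calc (n : WithTop ℤ) = (t : WithTop ℤ) + ((n - t : ℤ) : WithTop ℤ) := by
          rw [← WithTop.coe_add]; congr 1; ring
      _ ≤ _ := by gcongr

/-- A subring containing all `p`-th powers is a subfield. -/
def sfOf (p : ℕ) [hp : Fact p.Prime] (R : Subring K) (h : ∀ x : K, x ^ p ∈ R) : Subfield K where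
  toSubring := R
  inv_mem' := by
    intro x hx
    have e : x⁻¹ = x ^ (p - 1) * (x⁻¹) ^ p := by
      by_cases h0 : x = 0
      · simp [h0, hp.out.ne_zero]
      · have := hp.out.pos
        obtain ⟨q, rfl⟩ : ∃ q, p = q + 1 := ⟨p - 1, by omega⟩
        rw [Nat.add_sub_cancel, pow_succ, ← mul_assoc, ← mul_pow, mul_inv_cancel₀ h0]
        simp
    show x⁻¹ ∈ R
    rw [e]
    exact R.mul_mem (R.pow_mem hx _) (h _)

/-- Topological closure of a subfield, as a subring. -/
def clos (E : Subfield K) : Subring K where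
  carrier := {x | ∀ n : ℤ, ∃ y ∈ E, (n : WithTop ℤ) ≤ w.v (x - y)}
  zero_mem' := fun n => ⟨0, E.zero_mem, by rw [sub_zero, w.v_zero]; exact le_top⟩
  one_mem' := fun n => ⟨1, E.one_mem, by rw [sub_self, w.v_zero]; exact le_top⟩
  add_mem' := by
    intro a b ha hb n
    obtain ⟨y, hy, hy'⟩ := ha n
    obtain ⟨z, hz, hz'⟩ := hb n
    refine ⟨y + z, E.add_mem hy hz, ?_⟩
    rw [show a + b - (y + z) = (a - y) + (b - z) by ring]
    exact v_add_le w hy' hz'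
  neg_mem' := by
    intro a ha n
    obtain ⟨y, hy, hy'⟩ := ha n
    refine ⟨-y, E.neg_mem hy, ?_⟩
    rw [show -a - -y = -(a - y) by ring, w.v_neg]
    exact hy'
  mul_mem' := by
    intro a b ha hb n
    obtain ⟨m, hm⟩ := exists_prec w a n
    obtain ⟨z, hz, hz'⟩ := hb m
    obtain ⟨m', hm'⟩ := exists_prec w z n
    obtain ⟨y, hy, hy'⟩ := ha m'
    refine ⟨y * z, E.mul_mem hy hz, ?_⟩
    rw [show a * b - y * z = a * (b - z) + z * (a - y) by ring]
    exact v_add_le w (hm _ hz') (hm' _ hy')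

lemma mem_clos {E : Subfield K} {x : K} :
    x ∈ clos w E ↔ ∀ n : ℤ, ∃ y ∈ E, (n : WithTop ℤ) ≤ w.v (x - y) := Iff.rfl

lemma le_clos (E : Subfield K) {x : K} (hx : x ∈ E) : x ∈ clos w E :=
  fun n => ⟨x, hx, by rw [sub_self, w.v_zero]; exact le_top⟩

lemma exists_adj (p : ℕ) [hp : Fact p.Prime] (E : Subfield K)
    (hE : ∀ x : K, x ^ p ∈ E) (x : K) :
    ∃ M : Subfield K, E ≤ M ∧ x ∈ M ∧
      ∀ z ∈ M, ∃ c : ℕ → K, (∀ i, c i ∈ E) ∧ z = ∑ i ∈ Finset.range p, c i * x ^ i := by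
  let A := Algebra.adjoin E {x}
  have hEA : ∀ y ∈ E, y ∈ A.toSubring := fun y hy => A.algebraMap_mem ⟨y, hy⟩
  refine ⟨sfOf p A.toSubring (fun y => hEA _ (hE y)), hEA,
    Algebra.subset_adjoin (Set.mem_singleton x), ?_⟩
  intro z hz
  have hz' : z ∈ Algebra.adjoin E {x} := hz
  rw [Algebra.adjoin_singleton_eq_range_aeval] at hz'
  obtain ⟨f, rfl⟩ := hz'
  let q : Polynomial E := Polynomial.X ^ p - Polynomial.C ⟨x ^ p, hE x⟩
  have hq : q.Monic := Polynomial.monic_X_pow_sub_C _ hp.out.ne_zero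
  have hq0 : Polynomial.aeval x q = 0 := by
    simp [q, Algebra.algebraMap_eq_smul_one, Subfield.smul_def]
  have hf : Polynomial.aeval x f = Polynomial.aeval x (f %ₘ q) := by
    conv_lhs => rw [← Polynomial.modByMonic_add_div f q]
    simp [hq0]
  have hd : (f %ₘ q).natDegree < p := by
    have hqd : q.natDegree = p := Polynomial.natDegree_X_pow_sub_C
    have := Polynomial.natDegree_modByMonic_lt f hq (by
      intro h1; rw [h1] at hqd; simp at hqd; exact hp.out.ne_zero hqd.symm)
    omega
  refine ⟨fun i => ((f %ₘ q).coeff i : K), fun i => ((f %ₘ q).coeff i).2, ?_⟩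
  change Polynomial.aeval x f = _
  rw [hf, Polynomial.aeval_eq_sum_range' hd]
  simp [Subfield.smul_def]

lemma best_approx (x : K) (S : Set K) (hne : S.Nonempty) (N : ℤ)
    (hb : ∀ y ∈ S, w.v (x - y) < N) : ∃ y₀ ∈ S, ∀ y ∈ S, w.v (x - y) ≤ w.v (x - y₀) := by
  have hinteg : ∀ y ∈ S, ∃ n : ℤ, w.v (x - y) = n := fun y hy => by
    obtain ⟨n, hn⟩ := WithTop.ne_top_iff_exists.1 (ne_top_of_lt (hb y hy))
    exact ⟨n, hn.symm⟩
  obtain ⟨m, ⟨y₀, hy₀, hm⟩, hmax⟩ := Int.exists_greatest_of_bdd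
    (P := fun n : ℤ => ∃ y ∈ S, w.v (x - y) = n)
    ⟨N, by
      rintro z ⟨y, hy, hz⟩
      have := hb y hy
      rw [hz] at this
      have : z < N := by exact_mod_cast this
      exact this.le⟩
    (by
      obtain ⟨y, hy⟩ := hne
      obtain ⟨n, hn⟩ := hinteg y hy
      exact ⟨n, y, hy, hn⟩)
  refine ⟨y₀, hy₀, fun y hy => ?_⟩
  obtain ⟨n, hn⟩ := hinteg y hy
  rw [hm, hn]
  exact_mod_cast hmax n ⟨y, hy, hn⟩

/-- `E` contains `p`-th powers and does not approximate `s`. -/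
def Good (p : ℕ) (s : K) (E : Subfield K) : Prop :=
  (∀ x : K, x ^ p ∈ E) ∧ ∀ y ∈ E, w.v (s - y) ≤ w.v s

lemma exists_max (p : ℕ) [hp : Fact p.Prime] [CharP K p] (s : K)
    (hs : ∀ y : K, w.v (s - y ^ p) ≤ w.v s) :
    ∃ E : Subfield K, Maximal (fun E => Good w p s E) E := by
  have := zorn_le_nonempty₀ {E : Subfield K | Good w p s E} (by
    intro c hc hch E₀ hE₀
    have hdir : DirectedOn (· ≤ ·) c := hch.directedOn
    refine ⟨sSup c, ⟨fun x => ?_, fun y hy => ?_⟩, fun z hz => le_sSup hz⟩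
    · exact (le_sSup hE₀ : E₀ ≤ sSup c) ((hc hE₀).1 x)
    · obtain ⟨E₁, hE₁, hy₁⟩ := (Subfield.mem_sSup_of_directedOn ⟨E₀, hE₀⟩ hdir).1 hy
      exact (hc hE₁).2 y hy₁) (frobenius K p).fieldRange
    ⟨fun x => ⟨x, rfl⟩, by rintro _ ⟨y, rfl⟩; exact hs y⟩
  obtain ⟨m, _, hm⟩ := this
  exact ⟨m, hm⟩

lemma max_closed (p : ℕ) [hp : Fact p.Prime] [CharP K p] (s : K) (hs0 : s ≠ 0)
    {E : Subfield K} (hE : Maximal (fun E => Good w p s E) E) {x : K} (hx : x ∈ clos w E) :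
    x ∈ E := by
  let E' := sfOf p (clos w E) (fun x => le_clos w E (hE.prop.1 x))
  have h1 : E ≤ E' := fun x hx => le_clos w E hx
  have h2 : Good w p s E' := by
    refine ⟨fun x => le_clos w E (hE.prop.1 x), fun x hx => ?_⟩
    by_contra! hlt
    obtain ⟨t, ht⟩ := exists_int w hs0
    obtain ⟨y, hy, hxy⟩ := hx (t + 1)
    have h3 : ((t + 1 : ℤ) : WithTop ℤ) ≤ w.v (s - x) := by
      rw [ht] at hlt
      cases hv : w.v (s - x) with
      | top => exact le_top
      | coe q =>
        rw [hv] at hlt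
        have : t < q := by exact_mod_cast hlt
        exact_mod_cast (by omega : t + 1 ≤ q)
    have h4 := v_add_le w h3 hxy
    rw [show s - x + (x - y) = s - y by ring] at h4
    have h5 := h4.trans (hE.prop.2 y hy)
    rw [ht] at h5
    have : t + 1 ≤ t := by exact_mod_cast h5
    omega
  exact hE.le_of_ge h2 h1 hx

lemma eq_zero_of_forall {x : K} (h : ∀ n : ℕ, ((n : ℤ) : WithTop ℤ) ≤ w.v x) : x = 0 := by
  by_contra hx
  obtain ⟨t, ht⟩ := exists_int w hx
  have := h (t.toNat + 1)
  rw [ht] at this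
  have h2 : ((t.toNat + 1 : ℕ) : ℤ) ≤ t := by exact_mod_cast this
  have := Int.self_le_toNat t
  push_cast at h2
  omega

lemma adj_closed (p : ℕ) [hp : Fact p.Prime] [CharP K p] (s : K) (hs0 : s ≠ 0)
    {E : Subfield K} (hE : Maximal (fun E => Good w p s E) E)
    (x : K) (hx : ∀ n : ℕ, ∃ c : ℕ → K, (∀ i, c i ∈ E) ∧
      ((n : ℤ) : WithTop ℤ) ≤ w.v (x - ∑ i ∈ Finset.range p, c i * s ^ i)) :
    ∃ c : ℕ → K, (∀ i, c i ∈ E) ∧ x = ∑ i ∈ Finset.range p, c i * s ^ i := by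
  choose c hcE hc using hx
  have h1 : ∀ i < p, ∀ n : ℕ, ((n : ℤ) : WithTop ℤ) ≤ w.v (c (n + 1) i * s ^ i - c n i * s ^ i) := by
    intro i hi n
    have := orth w p E hE.prop.1 s hs0 hE.prop.2 (fun i => c (n + 1) i - c n i)
      (fun i => E.sub_mem (hcE _ _) (hcE _ _)) ((n : ℤ) : WithTop ℤ) (by
        have h2 : ((n : ℤ) : WithTop ℤ) ≤ w.v (x - ∑ i ∈ Finset.range p, c (n + 1) i * s ^ i) :=
          le_trans (by norm_cast; omega) (hc (n + 1))
        have h3 := v_sub_le w (hc n) h2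
        convert h3 using 2
        simp only [sub_mul, Finset.sum_sub_distrib]
        ring) i hi
    rwa [sub_mul] at this
  have h2 : ∀ i, ∃ z : K, i < p → ∀ n : ℕ, ((n : ℤ) : WithTop ℤ) ≤ w.v (z - c n i * s ^ i) := by
    intro i
    by_cases hi : i < p
    · obtain ⟨z, hz⟩ := w.complete (fun n => c n i * s ^ i) (h1 i hi)
      exact ⟨z, fun _ => hz⟩
    · exact ⟨0, fun h => absurd h hi⟩
  choose z hz using h2
  have h3 : ∀ i < p, z i * (s ^ i)⁻¹ ∈ E := by
    intro i hi
    apply max_closed w p s hs0 hE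
    intro n
    obtain ⟨m, hm⟩ := exists_prec w (s ^ i)⁻¹ n
    refine ⟨c m.toNat i, hcE _ _, ?_⟩
    have h4 := hm (z i - c m.toNat i * s ^ i) (le_trans
      (WithTop.coe_le_coe.2 (Int.self_le_toNat m)) (hz i hi m.toNat))
    convert h4 using 2
    field_simp
  refine ⟨fun i => if i < p then z i * (s ^ i)⁻¹ else 0, fun i => ?_, ?_⟩
  · dsimp only
    split_ifs with hi
    · exact h3 i hi
    · exact E.zero_mem
  · have e : ∑ i ∈ Finset.range p, (if i < p then z i * (s ^ i)⁻¹ else 0) * s ^ i =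
        ∑ i ∈ Finset.range p, z i := by
      refine Finset.sum_congr rfl fun i hi => ?_
      rw [if_pos (Finset.mem_range.1 hi)]
      field_simp
    rw [e, ← sub_eq_zero]
    apply eq_zero_of_forall w
    intro n
    have h5 : ((n : ℤ) : WithTop ℤ) ≤ w.v (∑ i ∈ Finset.range p, (z i - c n i * s ^ i)) :=
      v_sum w fun i hi => hz i (Finset.mem_range.1 hi) n
    have h6 := v_sub_le w (hc n) h5
    convert h6 using 2
    rw [Finset.sum_sub_distrib]
    ring

/-- Existence of a hyperplane subfield orthogonal to `s`. -/
lemma exists_hyper (p : ℕ) [hp : Fact p.Prime] [CharP K p] (s : K) (hs0 : s ≠ 0)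
    (hs : ∀ y : K, w.v (s - y ^ p) ≤ w.v s) :
    ∃ E : Subfield K, Good w p s E ∧
      ∀ x, ∃ c : ℕ → K, (∀ i, c i ∈ E) ∧ x = ∑ i ∈ Finset.range p, c i * s ^ i := by
  obtain ⟨E, hE⟩ := exists_max w p s hs
  refine ⟨E, hE.prop, fun x => ?_⟩
  by_contra hx
  obtain ⟨M, hEM, hsM, hM⟩ := exists_adj p E hE.prop.1 s
  have hxM : x ∉ M := fun h => hx (hM x h)
  have hbd : ∃ n : ℕ, ∀ y ∈ M, w.v (x - y) < ((n : ℤ) : WithTop ℤ) := by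
    by_contra! hcon
    refine hx (adj_closed w p s hs0 hE x fun n => ?_)
    obtain ⟨y, hy, hn⟩ := hcon n
    obtain ⟨c, hcE, rfl⟩ := hM y hy
    exact ⟨c, hcE, hn⟩
  obtain ⟨n, hn⟩ := hbd
  obtain ⟨y₀, hy₀, hbest⟩ := best_approx w x M ⟨0, M.zero_mem⟩ n hn
  have hx'M : x - y₀ ∉ M := fun h => hxM (by simpa using M.add_mem h hy₀)
  have hx'0 : x - y₀ ≠ 0 := fun h => hx'M (h ▸ M.zero_mem)
  obtain ⟨M', hEM', hxM', hM'⟩ := exists_adj p E hE.prop.1 (x - y₀)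
  have hg : Good w p s M' := by
    refine ⟨fun z => hEM' (hE.prop.1 z), fun z hz => ?_⟩
    obtain ⟨c, hcE, rfl⟩ := hM' z hz
    have := orth w p M (fun z => hEM (hE.prop.1 z)) (x - y₀) hx'0 (by
        intro y hy
        rw [show x - y₀ - y = x - (y₀ + y) by ring]
        exact hbest _ (M.add_mem hy₀ hy))
      (fun i => (if i = 0 then s else 0) - c i)
      (fun i => M.sub_mem (by split_ifs; exacts [hsM, M.zero_mem]) (hEM (hcE i)))
      (w.v (s - ∑ i ∈ Finset.range p, c i * (x - y₀) ^ i)) (by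
        apply le_of_eq
        congr 1
        simp only [sub_mul, Finset.sum_sub_distrib]
        simp [hp.out.pos]) 0 hp.out.pos
    refine this.trans ?_
    simpa using hE.prop.2 (c 0) (hcE 0)
  exact hx'M (hEM (hE.le_of_ge hg hEM' hxM'))

end MaxField

end HesAux

namespace HesAux

section DerCartier
variable {K : Type*} [Field K] (w : CompleteDiscreteValuation K)

lemma v_natCast_mul (n : ℕ) (x : K) : w.v x ≤ w.v ((n : K) * x) := by
  rw [w.map_mul]
  exact le_add_of_nonneg_left (natCast_mem w.integers n)

/-- Existence of a bounded derivation together with a Cartier operator. -/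
lemma exists_der_cartier (p : ℕ) [hp : Fact p.Prime] [CharP K p] (s : K) (hs0 : s ≠ 0)
    (hs : ∀ y : K, w.v (s - y ^ p) ≤ w.v s) :
    ∃ (D : Derivation ℤ K K) (C : K →+ K), D s = s ∧ (∀ x, C (D x) = 0) ∧
      (∀ y z, C (y ^ p * z) = y ^ p * C z) ∧ (∀ x, C (x ^ (p - 1) * D x) = D x ^ p) ∧
      (∀ x, w.v x ≤ w.v (D x)) ∧ (∀ x, w.v x ≤ w.v (C x)) := by
  obtain ⟨E, hE, hrep⟩ := exists_hyper w p s hs0 hs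
  choose f hfE hf using hrep
  have horth := orth w p E hE.1 s hs0 hE.2
  have huniq : ∀ c : ℕ → K, (∀ i, c i ∈ E) → ∀ x, x = ∑ i ∈ Finset.range p, c i * s ^ i →
      ∀ i < p, f x i = c i := by
    intro c hc x hx i hi
    have h1 := horth (fun i => f x i - c i) (fun i => E.sub_mem (hfE _ _) (hc _)) ⊤ (by
      have : ∑ i ∈ Finset.range p, (f x i - c i) * s ^ i = 0 := by
        simp only [sub_mul, Finset.sum_sub_distrib]
        rw [← hf x, ← hx, sub_self]
      rw [this, w.v_zero]) i hi
    have h2 := (w.eq_top_iff _).1 (top_le_iff.1 h1)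
    have h3 := (mul_eq_zero.1 h2).resolve_right (pow_ne_zero _ hs0)
    exact sub_eq_zero.1 h3
  have hadd : ∀ x y, ∀ i < p, f (x + y) i = f x i + f y i := by
    intro x y
    apply huniq (fun i => f x i + f y i) (fun i => E.add_mem (hfE _ _) (hfE _ _))
    simp only [add_mul, Finset.sum_add_distrib]
    rw [← hf x, ← hf y]
  have hsmul : ∀ e ∈ E, ∀ x, ∀ i < p, f (e * x) i = e * f x i := by
    intro e he x
    apply huniq (fun i => e * f x i) (fun i => E.mul_mem he (hfE _ _))
    simp only [mul_assoc]
    rw [← Finset.mul_sum, ← hf x]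
  have hmono : ∀ e ∈ E, ∀ N : ℕ, ∀ i < p, f (e * s ^ N) i =
      if i = N % p then e * (s ^ p) ^ (N / p) else 0 := by
    intro e he N
    apply huniq (fun i => if i = N % p then e * (s ^ p) ^ (N / p) else 0)
    · intro i
      split_ifs
      · exact E.mul_mem he (E.pow_mem (hE.1 s) _)
      · exact E.zero_mem
    · have hlt : N % p < p := Nat.mod_lt _ hp.out.pos
      simp only [ite_mul, zero_mul, Finset.sum_ite_eq', Finset.mem_range, hlt, if_true]
      rw [mul_assoc, ← pow_mul, ← pow_add, Nat.div_add_mod]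
  let D₀ : K →+ K :=
    { toFun := fun x => ∑ i ∈ Finset.range p, (i : K) * (f x i * s ^ i)
      map_zero' := by
        refine Finset.sum_eq_zero fun i hi => ?_
        have := huniq (fun _ => 0) (fun _ => E.zero_mem) 0 (by simp) i (Finset.mem_range.1 hi)
        simp [this]
      map_add' := by
        intro x y
        rw [← Finset.sum_add_distrib]
        refine Finset.sum_congr rfl fun i hi => ?_
        rw [hadd x y i (Finset.mem_range.1 hi)]
        ring }
  let C : K →+ K :=
    { toFun := fun x => f x 0
      map_zero' := huniq (fun _ => 0) (fun _ => E.zero_mem) 0 (by simp) 0 hp.out.pos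
      map_add' := fun x y => hadd x y 0 hp.out.pos }
  have hD₀ : ∀ x, D₀ x = ∑ i ∈ Finset.range p, (i : K) * (f x i * s ^ i) := fun _ => rfl
  have hC : ∀ x, C x = f x 0 := fun _ => rfl
  have hDm : ∀ e ∈ E, ∀ N : ℕ, D₀ (e * s ^ N) = N * (e * s ^ N) := by
    intro e he N
    rw [hD₀]
    have hlt : N % p < p := Nat.mod_lt _ hp.out.pos
    have h1 : ∀ i ∈ Finset.range p, (i : K) * (f (e * s ^ N) i * s ^ i) =
        if i = N % p then (i : K) * (e * (s ^ p) ^ (N / p) * s ^ i) else 0 := by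
      intro i hi
      rw [hmono e he N i (Finset.mem_range.1 hi)]
      split_ifs <;> simp
    rw [Finset.sum_congr rfl h1]
    simp only [Finset.sum_ite_eq', Finset.mem_range, hlt, if_true]
    rw [mul_assoc e, ← pow_mul, ← pow_add, Nat.div_add_mod, ← CharP.cast_eq_mod]
  have hleib : ∀ a b, D₀ (a * b) = a • D₀ b + b • D₀ a := by
    intro a b
    have e1 : a * b = ∑ i ∈ Finset.range p, ∑ j ∈ Finset.range p,
        (f a i * f b j) * s ^ (i + j) := by
      conv_lhs => rw [hf a, hf b, Finset.sum_mul_sum]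
      refine Finset.sum_congr rfl fun i _ => Finset.sum_congr rfl fun j _ => ?_
      ring
    have e2 : a * D₀ b = ∑ i ∈ Finset.range p, ∑ j ∈ Finset.range p,
        j * ((f a i * f b j) * s ^ (i + j)) := by
      conv_lhs => rw [hD₀ b, hf a, Finset.sum_mul_sum]
      refine Finset.sum_congr rfl fun i _ => Finset.sum_congr rfl fun j _ => ?_
      ring
    have e3 : D₀ a * b = ∑ i ∈ Finset.range p, ∑ j ∈ Finset.range p,
        i * ((f a i * f b j) * s ^ (i + j)) := by
      conv_lhs => rw [hD₀ a, hf b, Finset.sum_mul_sum]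
      refine Finset.sum_congr rfl fun i _ => Finset.sum_congr rfl fun j _ => ?_
      ring
    rw [smul_eq_mul, smul_eq_mul, mul_comm b, e1, e2, e3, ← Finset.sum_add_distrib, map_sum]
    refine Finset.sum_congr rfl fun i _ => ?_
    rw [← Finset.sum_add_distrib, map_sum]
    refine Finset.sum_congr rfl fun j _ => ?_
    rw [hDm _ (E.mul_mem (hfE _ _) (hfE _ _))]
    push_cast
    ring
  let D : Derivation ℤ K K := Derivation.mk' D₀.toIntLinearMap hleib
  have hD : ∀ x, D x = D₀ x := fun _ => rfl
  have hCD : ∀ x, C (D x) = 0 := by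
    intro x
    rw [hC, hD]
    have := huniq (fun i => (i : K) * f x i) (fun i => E.mul_mem (natCast_mem E i) (hfE _ _))
      (D₀ x) (by rw [hD₀]; exact Finset.sum_congr rfl fun i _ => (mul_assoc _ _ _).symm) 0 hp.out.pos
    simpa using this
  have hCe : ∀ e ∈ E, ∀ z, C (e * z) = e * C z := fun e he z => hsmul e he z 0 hp.out.pos
  have hC1 : ∀ e ∈ E, C e = e := by
    intro e he
    have := hmono e he 0 0 hp.out.pos
    rw [hC]
    simpa using this
  have hv : ∀ x, ∀ i < p, w.v x ≤ w.v (f x i * s ^ i) := fun x =>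
    horth (f x) (hfE x) (w.v x) (by rw [← hf x])
  refine ⟨D, C, ?_, hCD, fun y z => hCe _ (hE.1 y) z, ?_, ?_, ?_⟩
  · have := hDm 1 E.one_mem 1
    rw [hD]
    simpa using this
  · -- both sides are additive
    have hφ : ∀ x y, C ((x + y) ^ (p - 1) * D (x + y)) =
        C (x ^ (p - 1) * D x) + C (y ^ (p - 1) * D y) := by
      intro x y
      have h1 := G_add D 1 (WittVector.teichmuller p x) (WittVector.teichmuller p y)
      have h2 := congrArg C h1
      simp only [G, Finset.sum_range_succ, Finset.sum_range_zero, zero_add, _root_.map_add, hCD,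
        add_zero, WittVector.add_coeff_zero, WittVector.teichmuller_coeff_zero, pow_one,
        Nat.sub_zero, Nat.sub_self, pow_zero, one_mul] at h2
      rw [_root_.map_add D]
      exact h2
    let φ : K →+ K := AddMonoidHom.mk' (fun x => C (x ^ (p - 1) * D x)) hφ
    let ψ : K →+ K := (frobenius K p).toAddMonoidHom.comp D₀
    suffices h : ∀ x, φ x = ψ x from h
    intro x
    rw [hf x, map_sum, map_sum]
    refine Finset.sum_congr rfl fun i _ => ?_
    have hDx : D (f x i * s ^ i) = i * (f x i * s ^ i) := hDm _ (hfE x i) i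
    have h1 : φ (f x i * s ^ i) = C ((f x i * s ^ i) ^ (p - 1) * D (f x i * s ^ i)) := rfl
    have h2 : ψ (f x i * s ^ i) = D (f x i * s ^ i) ^ p := rfl
    rw [h1, h2, hDx]
    set z := f x i * s ^ i
    have h3 : z ^ (p - 1) * ((i : K) * z) = (i : K) * z ^ p := by
      obtain ⟨q, hq⟩ : ∃ q, p = q + 1 := ⟨p - 1, by have := hp.out.pos; omega⟩
      rw [hq, Nat.add_sub_cancel]
      ring
    rw [h3, hC1 _ (E.mul_mem (natCast_mem E i) (hE.1 z)), mul_pow (i : K) z p]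
    congr 1
    exact (map_natCast (frobenius K p) i).symm
  · intro x
    rw [hD, hD₀]
    exact v_sum w fun i hi => (hv x i (Finset.mem_range.1 hi)).trans (v_natCast_mul w _ _)
  · intro x
    rw [hC]
    simpa using hv x 0 hp.out.pos

lemma cartier_G (p : ℕ) [hp : Fact p.Prime] (D : Derivation ℤ K K) [CharP K p] (C : K →+ K)
    (h0 : ∀ x, C (D x) = 0) (h1 : ∀ y z, C (y ^ p * z) = y ^ p * C z)
    (h2 : ∀ x, C (x ^ (p - 1) * D x) = D x ^ p) (n : ℕ) (x : WittVector p K) :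
    C (G D (n + 1) x) = G D n x ^ p := by
  have e1 : G D n x ^ p = ∑ i ∈ Finset.range (n + 1),
      (x.coeff i ^ (p ^ (n - i) - 1) * D (x.coeff i)) ^ p := by
    rw [G]
    exact map_sum (frobenius K p) _ _
  rw [e1, G, map_sum, Finset.sum_range_succ, Nat.sub_self, pow_zero, Nat.sub_self, pow_zero,
    one_mul, h0, add_zero]
  refine Finset.sum_congr rfl fun i hi => ?_
  have hi' : i ≤ n := by simpa [Nat.lt_succ_iff] using hi
  have e2 : p ^ (n + 1 - i) - 1 = (p ^ (n - i) - 1) * p + (p - 1) := by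
    have h3 : 1 ≤ p ^ (n - i) := Nat.one_le_pow _ _ hp.out.pos
    have h4 := hp.out.pos
    rw [show n + 1 - i = (n - i) + 1 by omega, pow_succ, Nat.sub_mul, one_mul]
    have : p ≤ p ^ (n - i) * p := Nat.le_mul_of_pos_left _ h3
    omega
  rw [e2, pow_add, pow_mul, mul_assoc, h1, h2, mul_pow]

end DerCartier

end HesAux

namespace HesAux

lemma exists_lower {ι : Type*} [Finite ι] (g : ι → WithTop ℤ) :
    ∃ B : ℤ, ∀ i, (B : WithTop ℤ) ≤ g i := by
  cases nonempty_fintype ι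
  have h : ∀ i, ∃ n : ℤ, (n : WithTop ℤ) ≤ g i := fun i => by
    cases hg : g i with
    | top => exact ⟨0, le_top⟩
    | coe q => exact ⟨q, le_rfl⟩
  choose h hh using h
  obtain ⟨B, hB⟩ := Finset.exists_le (Finset.univ.image fun i => -h i)
  refine ⟨-B, fun i => le_trans ?_ (hh i)⟩
  have := hB _ (Finset.mem_image_of_mem (fun i => -h i) (Finset.mem_univ i))
  exact WithTop.coe_le_coe.2 (by linarith)

lemma witt_map_frobenius {p : ℕ} [hp : Fact p.Prime] {R S : Type*} [CommRing R] [CommRing S]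
    [CharP R p] [CharP S p] (f : R →+* S) (x : WittVector p R) :
    WittVector.map f (WittVector.frobenius x) = WittVector.frobenius (WittVector.map f x) := by
  ext n
  simp [WittVector.coeff_frobenius_charP, WittVector.map_coeff]

section Bounded
variable {K L : Type*} [Field K] [Field L] [Algebra K L]
  (wK : CompleteDiscreteValuation K) (wL : CompleteDiscreteValuation L)
  [IsGalois K L] [FiniteDimensional K L]

lemma der_bounded
    (e : ℕ) (hcomp : ∀ x : K, wL.v (algebraMap K L x) = e • wK.v x)
    (hGal : ∀ (σ : L ≃ₐ[K] L) (x : L), wL.v (σ x) = wL.v x)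
    (D : Derivation ℤ K K) (hDv : ∀ x, wK.v x ≤ wK.v (D x))
    (D' : Derivation ℤ L L) (hD' : ∀ x, D' (algebraMap K L x) = algebraMap K L (D x)) :
    ∃ B : ℤ, ∀ x : L, 0 ≤ wL.v x → (B : WithTop ℤ) ≤ wL.v (D' x) := by
  let b := Module.finBasis K L
  let d := b.traceDual
  obtain ⟨B, hB⟩ := exists_lower (fun i => wL.v (b i) + min (wL.v (d i)) (wL.v (D' (d i))))
  refine ⟨B, fun x hx => ?_⟩
  have e1 : x = ∑ i, algebraMap K L (Algebra.trace K L (x * b i)) * d i := by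
    conv_lhs => rw [← d.sum_repr x]
    refine Finset.sum_congr rfl fun i _ => ?_
    rw [Algebra.smul_def, Module.Basis.traceDual_repr_apply]
    rfl
  rw [e1, map_sum]
  refine v_sum wL fun i _ => (hB i).trans ?_
  rw [Derivation.leibniz, hD', smul_eq_mul, smul_eq_mul]
  have h1 : wL.v (b i) ≤ wL.v (algebraMap K L (Algebra.trace K L (x * b i))) := by
    rw [trace_eq_sum_automorphisms]
    refine v_sum wL fun σ _ => ?_
    rw [hGal, wL.map_mul]
    exact le_add_of_nonneg_left hx
  have h2 : wL.v (b i) ≤ wL.v (algebraMap K L (D (Algebra.trace K L (x * b i)))) := by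
    refine h1.trans ?_
    rw [hcomp, hcomp]
    exact nsmul_le_nsmul_right (hDv _) e
  refine v_add_le wL ?_ ?_
  · rw [wL.map_mul]
    exact add_le_add h1 (min_le_right _ _)
  · rw [mul_comm, wL.map_mul]
    exact add_le_add h2 (min_le_left _ _)

lemma lemmaQ
    (e : ℕ) (hcomp : ∀ x : K, wL.v (algebraMap K L x) = e • wK.v x)
    (hGal : ∀ (σ : L ≃ₐ[K] L) (x : L), wL.v (σ x) = wL.v x)
    (p : ℕ) [hp : Fact p.Prime] [CharP K p] [CharP L p] (he : 0 < e)
    (a : WittVector p K) (o : WittVector p wL.integers) (x : WittVector p L)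
    (h : WittVector.map (algebraMap K L) a + WittVector.map wL.integers.subtype o =
      WittVector.frobenius x) :
    ∃ α ω : K, 0 ≤ wK.v ω ∧ a.coeff 0 = α ^ p + ω := by
  by_contra! hcon
  have hneg : ∀ α, wK.v (a.coeff 0 - α ^ p) < ((0 : ℤ) : WithTop ℤ) := by
    intro α
    by_contra! h0
    exact hcon α (a.coeff 0 - α ^ p) h0 (by ring)
  obtain ⟨_, ⟨α, rfl⟩, hbest⟩ := best_approx wK (a.coeff 0) (Set.range (fun y : K => y ^ p))
    ⟨_, 0, rfl⟩ 0 (by rintro _ ⟨y, rfl⟩; exact hneg y)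
  dsimp only at hbest
  set s := a.coeff 0 - α ^ p with hsdef
  have hsneg := hneg α
  rw [← hsdef] at hsneg
  have hs0 : s ≠ 0 := by
    rintro h0
    rw [h0, wK.v_zero] at hsneg
    exact not_top_lt hsneg
  have hs : ∀ y : K, wK.v (s - y ^ p) ≤ wK.v s := by
    intro y
    have : s - y ^ p = a.coeff 0 - (α + y) ^ p := by
      rw [add_pow_char, hsdef]; ring
    rw [this]
    exact hbest _ ⟨_, rfl⟩
  obtain ⟨D, C, hDs, hCD, hC1, hC2, hDv, hCv⟩ := exists_der_cartier wK p s hs0 hs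
  obtain ⟨D', hD'⟩ := exists_derivation_ext (L := L) D
  obtain ⟨B, hB⟩ := der_bounded wK wL e hcomp hGal D hDv D' hD'
  let a' : WittVector p K := a - WittVector.frobenius (WittVector.teichmuller p α)
  have ha'0 : a'.coeff 0 = s := by
    have : WittVector.constantCoeff a' = WittVector.constantCoeff a -
      WittVector.constantCoeff (WittVector.frobenius (WittVector.teichmuller p α)) := map_sub _ _ _
    rw [WittVector.constantCoeff_apply, WittVector.constantCoeff_apply,
      WittVector.constantCoeff_apply, WittVector.coeff_frobenius_charP,
      WittVector.teichmuller_coeff_zero] at this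
    exact this
  have h' : WittVector.map (algebraMap K L) a' + WittVector.map wL.integers.subtype o =
      WittVector.frobenius (x - WittVector.map (algebraMap K L) (WittVector.teichmuller p α)) := by
    simp only [a', map_sub, ← h, witt_map_frobenius]
    ring
  have hG : ∀ n, algebraMap K L (G D n a') = - G D' n (WittVector.map wL.integers.subtype o) := by
    intro n
    have h1 := congrArg (G D' n) h'
    rw [G_frobenius, G_add, G_map D D' _ hD'] at h1
    exact eq_neg_of_add_eq_zero_left h1
  have hGo : ∀ n, (B : WithTop ℤ) ≤ wL.v (algebraMap K L (G D n a')) := by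
    intro n
    rw [hG, wL.v_neg, G]
    refine v_sum wL fun i _ => ?_
    rw [WittVector.map_coeff, wL.map_mul, v_pow]
    have h2 : (0 : WithTop ℤ) ≤ wL.v (wL.integers.subtype (o.coeff i)) := (o.coeff i).2
    exact (hB _ h2).trans (le_add_of_nonneg_left (nsmul_nonneg h2 _))
  have hbd : ∀ n, ((-(B.natAbs : ℤ) : ℤ) : WithTop ℤ) ≤ wK.v (G D n a') := by
    intro n
    have h3 := hGo n
    rw [hcomp] at h3
    cases hv : wK.v (G D n a') with
    | top => exact le_top
    | coe q =>
      rw [hv, ← WithTop.coe_nsmul] at h3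
      have h4 : B ≤ e • q := WithTop.coe_le_coe.1 h3
      rw [nsmul_eq_mul] at h4
      refine WithTop.coe_le_coe.2 ?_
      have h5 : (1 : ℤ) ≤ e := by exact_mod_cast he
      have h6 : -(B.natAbs : ℤ) ≤ B := by omega
      by_contra! h7
      have h8 : (e : ℤ) * q ≤ 1 * q := by
        apply mul_le_mul_of_nonpos_right h5
        omega
      omega
  have hstep : ∀ n, wK.v (G D (n + 1) a') ≤ p • wK.v (G D n a') := by
    intro n
    rw [← v_pow, ← cartier_G p D C hCD hC1 hC2]
    exact hCv _
  have hdesc : ∀ M : ℕ, (∀ n, ((-(M : ℤ) : ℤ) : WithTop ℤ) ≤ wK.v (G D n a')) →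
      ∀ n, ((0 : ℤ) : WithTop ℤ) ≤ wK.v (G D n a') := by
    intro M
    induction M with
    | zero => intro h n; simpa using h n
    | succ M ih =>
      intro h
      apply ih
      intro n
      have h1 := (h (n + 1)).trans (hstep n)
      cases hv : wK.v (G D n a') with
      | top => exact le_top
      | coe q =>
        rw [hv, ← WithTop.coe_nsmul] at h1
        have h4 := WithTop.coe_le_coe.1 h1
        rw [nsmul_eq_mul] at h4
        refine WithTop.coe_le_coe.2 ?_
        have h5 : (2 : ℤ) ≤ p := by exact_mod_cast hp.out.two_le
        by_contra! h7
        have h8 : (p : ℤ) * q ≤ 2 * q := by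
          apply mul_le_mul_of_nonpos_right h5
          omega
        push_cast at h4
        omega
  have hfin := hdesc _ hbd 0
  have hG0 : G D 0 a' = s := by
    simp [G, ha'0, hDs]
  rw [hG0] at hfin
  exact absurd hsneg (not_lt.2 hfin)

end Bounded

end HesAux

namespace HesAux

section Peel
variable {p : ℕ} [hp : Fact p.Prime] {R : Type*} [CommRing R]

lemma mk_eq (β : ℕ → R) : WittVector.mk p β = WittVector.teichmuller p (β 0) +
    WittVector.verschiebung (WittVector.mk p fun i => β (i + 1)) := by
  ext n
  rw [WittVector.coeff_add_of_disjoint]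
  · cases n with
    | zero => simp [WittVector.teichmuller_coeff_zero]
    | succ n =>
      rw [WittVector.teichmuller_coeff_pos _ _ _ (Nat.succ_pos n),
        WittVector.verschiebung_coeff_succ, zero_add]
      simp
  · intro n
    cases n with
    | zero => right; simp
    | succ n => left; exact WittVector.teichmuller_coeff_pos _ _ _ (Nat.succ_pos n)

lemma coeff_zero_sub (x y : WittVector p R) : (x - y).coeff 0 = x.coeff 0 - y.coeff 0 :=
  map_sub (WittVector.constantCoeff (p := p) (R := R)) x y

lemma coeff_zero_add (x y : WittVector p R) : (x + y).coeff 0 = x.coeff 0 + y.coeff 0 :=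
  _root_.map_add (WittVector.constantCoeff (p := p) (R := R)) x y

lemma exists_V (x : WittVector p R) (h : x.coeff 0 = 0) :
    ∃ y, x = WittVector.verschiebung y := by
  refine ⟨WittVector.mk p fun i => x.coeff (i + 1), ?_⟩
  have h1 : x = WittVector.mk p x.coeff := by ext n; simp
  have h2 := mk_eq (p := p) x.coeff
  rw [h, WittVector.teichmuller_zero, zero_add, ← h1] at h2
  exact h2

lemma eq_of_V_chain (d : ℕ → WittVector p R)
    (h : ∀ n, d n = WittVector.verschiebung (d (n + 1))) : d 0 = 0 := by
  have key : ∀ k n, (d n).coeff k = 0 := by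
    intro k
    induction k with
    | zero => intro n; rw [h n]; simp
    | succ k ih => intro n; rw [h n, WittVector.verschiebung_coeff_succ]; exact ih _
  ext k
  rw [key k 0, WittVector.zero_coeff]

lemma witt_peel (T : WittVector p R → Prop) (A B : R → Prop)
    (h : ∀ a, T a → ∃ f g : R, ∃ a1, A f ∧ B g ∧ T a1 ∧
      a = WittVector.teichmuller p f + WittVector.teichmuller p g + WittVector.verschiebung a1)
    (a : WittVector p R) (ha : T a) :
    ∃ f g : ℕ → R, (∀ i, A (f i)) ∧ (∀ i, B (g i)) ∧ a = WittVector.mk p f + WittVector.mk p g := by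
  choose! F G₀ N hA hB hT hdec using h
  let S : ℕ → {a // T a} := fun n => Nat.rec ⟨a, ha⟩ (fun _ x => ⟨N x.1, hT _ x.2⟩) n
  have hS : ∀ n, (S (n + 1)).1 = N (S n).1 := fun n => rfl
  refine ⟨fun n => F (S n).1, fun n => G₀ (S n).1, fun i => hA _ (S i).2, fun i => hB _ (S i).2, ?_⟩
  let d : ℕ → WittVector p R := fun n => (S n).1 - WittVector.mk p (fun i => F (S (n + i)).1)
    - WittVector.mk p (fun i => G₀ (S (n + i)).1)
  have hd : ∀ n, d n = WittVector.verschiebung (d (n + 1)) := by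
    intro n
    simp only [d]
    rw [mk_eq (fun i => F (S (n + i)).1), mk_eq (fun i => G₀ (S (n + i)).1), map_sub, map_sub, hS n]
    conv_lhs => rw [hdec (S n).1 (S n).2]
    simp only [add_zero, add_assoc, add_comm 1]
    abel
  have h0 := eq_of_V_chain d hd
  simp only [d, zero_add] at h0
  rw [sub_sub, sub_eq_zero] at h0
  exact h0

end Peel

section Sat
variable {K L : Type*} [Field K] [Field L] [Algebra K L]
  (wK : CompleteDiscreteValuation K) (wL : CompleteDiscreteValuation L)

lemma v_nonneg_of_pow (w : CompleteDiscreteValuation K) {x : K} {n : ℕ} (h : 0 ≤ w.v (x ^ n))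
    (hn : n ≠ 0) : 0 ≤ w.v x := by
  rw [v_pow] at h
  cases hv : w.v x with
  | top => exact le_top
  | coe q =>
    rw [hv, ← WithTop.coe_nsmul] at h
    have h1 : (0 : ℤ) ≤ n • q := WithTop.coe_le_coe.1 h
    rw [nsmul_eq_mul] at h1
    have h2 : (0 : ℤ) < n := by exact_mod_cast Nat.pos_of_ne_zero hn
    exact WithTop.coe_le_coe.2 (nonneg_of_mul_nonneg_right h1 h2)

variable {p : ℕ} [hp : Fact p.Prime]

lemma exists_lift_O (y : WittVector p L) (h : ∀ i, 0 ≤ wL.v (y.coeff i)) :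
    ∃ o : WittVector p wL.integers, WittVector.map wL.integers.subtype o = y :=
  ⟨WittVector.mk p fun i => ⟨y.coeff i, h i⟩, by ext n; simp [WittVector.map_coeff]⟩

/-- `x` lies in `W(K) + W(O_L)`. -/
def HH (K : Type*) [Field K] [Algebra K L] (x : WittVector p L) : Prop :=
  ∃ (a : WittVector p K) (o : WittVector p wL.integers),
    x = WittVector.map (algebraMap K L) a + WittVector.map wL.integers.subtype o

lemma V_peel (x : WittVector p L) (h : HH wL K (WittVector.verschiebung x)) : HH wL K x := by
  obtain ⟨a, o, h⟩ := h
  have h0 := congrArg (fun z => z.coeff 0) h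
  simp only [WittVector.verschiebung_coeff_zero, coeff_zero_add, WittVector.map_coeff] at h0
  obtain ⟨a1, ha1⟩ := exists_V (a - WittVector.teichmuller p (a.coeff 0)) (by
    rw [coeff_zero_sub, WittVector.teichmuller_coeff_zero, sub_self])
  obtain ⟨o1, ho1⟩ := exists_V (o + WittVector.teichmuller p (-o.coeff 0)) (by
    rw [coeff_zero_add, WittVector.teichmuller_coeff_zero, add_neg_cancel])
  refine ⟨a1, o1, ?_⟩
  apply WittVector.verschiebung_injective p L
  rw [_root_.map_add, ← WittVector.map_verschiebung, ← WittVector.map_verschiebung, ← ha1, ← ho1,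
    map_sub, _root_.map_add, WittVector.map_teichmuller, WittVector.map_teichmuller, h]
  have h1 : algebraMap K L (a.coeff 0) = wL.integers.subtype (-o.coeff 0) := by
    rw [_root_.map_neg]
    exact eq_neg_of_add_eq_zero_left h0.symm
  rw [h1]
  ring

lemma frobenius_teich {R : Type*} [CommRing R] [CharP R p] (α : R) :
    WittVector.frobenius (WittVector.teichmuller p α) = WittVector.teichmuller p (α ^ p) := by
  rw [WittVector.frobenius_eq_map_frobenius, WittVector.map_teichmuller]
  rfl

variable [IsGalois K L] [FiniteDimensional K L] [CharP K p] [CharP L p]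

lemma F_peel (e : ℕ) (he : 0 < e) (hcomp : ∀ x : K, wL.v (algebraMap K L x) = e • wK.v x)
    (hGal : ∀ (σ : L ≃ₐ[K] L) (x : L), wL.v (σ x) = wL.v x)
    (x : WittVector p L) (h : HH wL K (WittVector.frobenius x)) : HH wL K x := by
  have hinteg : ∀ ω : K, 0 ≤ wK.v ω → algebraMap K L ω ∈ wL.integers := by
    intro ω hω
    rw [mem_integers_iff, hcomp]
    exact nsmul_nonneg hω e
  obtain ⟨a, o, h⟩ := h
  obtain ⟨f, g, hf, hg, hfg⟩ := witt_peel
    (fun a : WittVector p K => ∃ (o : WittVector p wL.integers) (x : WittVector p L),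
      WittVector.map (algebraMap K L) a + WittVector.map wL.integers.subtype o =
        WittVector.frobenius x)
    (fun f => ∃ α, f = α ^ p) (fun ω => 0 ≤ wK.v ω) (by
      rintro a ⟨o, x, h⟩
      obtain ⟨α, ω, hω, haω⟩ := lemmaQ wK wL e hcomp hGal p he a o x h
      obtain ⟨a1, ha1⟩ := exists_V
        (a - WittVector.teichmuller p (α ^ p) - WittVector.teichmuller p ω) (by
          rw [coeff_zero_sub, coeff_zero_sub, WittVector.teichmuller_coeff_zero,
            WittVector.teichmuller_coeff_zero, haω]
          ring)
      refine ⟨α ^ p, ω, a1, ⟨α, rfl⟩, hω, ?_, by rw [← ha1]; ring⟩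
      let o' := o + WittVector.teichmuller p (⟨_, hinteg ω hω⟩ : wL.integers)
      let x' := x - WittVector.teichmuller p (algebraMap K L α)
      have h' : WittVector.map (algebraMap K L) (WittVector.verschiebung a1) +
          WittVector.map wL.integers.subtype o' = WittVector.frobenius x' := by
        simp only [o', x', ← ha1, map_sub, _root_.map_add, ← h, frobenius_teich,
          WittVector.map_teichmuller, map_pow, Subring.subtype_apply]
        ring
      have h0 := congrArg (fun z => z.coeff 0) h'
      simp only [coeff_zero_add, WittVector.map_coeff, WittVector.verschiebung_coeff_zero,
        map_zero, zero_add, WittVector.coeff_frobenius_charP] at h0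
      have hx0 : 0 ≤ wL.v (x'.coeff 0) := by
        apply v_nonneg_of_pow wL (n := p) _ hp.out.ne_zero
        rw [← h0]
        exact (o'.coeff 0).2
      let ξ : wL.integers := ⟨x'.coeff 0, hx0⟩
      obtain ⟨o1, ho1⟩ := exists_V (o' - WittVector.teichmuller p (ξ ^ p)) (by
        rw [coeff_zero_sub, WittVector.teichmuller_coeff_zero, sub_eq_zero]
        exact Subtype.ext h0)
      obtain ⟨x1, hx1⟩ := exists_V (x' - WittVector.teichmuller p (x'.coeff 0)) (by
        rw [coeff_zero_sub, WittVector.teichmuller_coeff_zero, sub_self])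
      refine ⟨o1, x1, ?_⟩
      apply WittVector.verschiebung_injective p L
      rw [WittVector.verschiebung_frobenius_comm x1, ← hx1, _root_.map_add,
        ← WittVector.map_verschiebung, ← WittVector.map_verschiebung, ← ho1, map_sub, map_sub,
        ← h', frobenius_teich, WittVector.map_teichmuller]
      simp only [ξ, map_pow, Subring.subtype_apply]
      ring) a ⟨o, x, h.symm⟩
  choose α hα using hf
  have hF : WittVector.mk p f = WittVector.frobenius (WittVector.mk p α) := by
    ext n
    simp [WittVector.coeff_frobenius_charP, hα]
  obtain ⟨g', hg'⟩ := exists_lift_O wL (WittVector.map (algebraMap K L) (WittVector.mk p g)) (by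
    intro i
    rw [WittVector.map_coeff]
    exact hinteg _ (hg i))
  let y := x - WittVector.map (algebraMap K L) (WittVector.mk p α)
  have hy : WittVector.frobenius y = WittVector.map wL.integers.subtype (g' + o) := by
    simp only [y]
    rw [map_sub, h, hfg, hF, _root_.map_add, _root_.map_add, hg', witt_map_frobenius]
    ring
  obtain ⟨o2, ho2⟩ := exists_lift_O wL y (by
    intro i
    apply v_nonneg_of_pow wL (n := p) _ hp.out.ne_zero
    rw [← WittVector.coeff_frobenius_charP, hy, WittVector.map_coeff]
    exact ((g' + o).coeff i).2)
  refine ⟨WittVector.mk p α, o2, ?_⟩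
  rw [ho2]
  simp only [y]
  ring

lemma p_sat (e : ℕ) (he : 0 < e) (hcomp : ∀ x : K, wL.v (algebraMap K L x) = e • wK.v x)
    (hGal : ∀ (σ : L ≃ₐ[K] L) (x : L), wL.v (σ x) = wL.v x)
    (k : ℕ) (x : WittVector p L) (h : HH wL K (x * (p : WittVector p L) ^ k)) : HH wL K x := by
  induction k with
  | zero => simpa using h
  | succ k ih =>
    apply ih
    apply F_peel wK wL e he hcomp hGal
    apply V_peel
    rw [WittVector.verschiebung_frobenius, mul_assoc, ← pow_succ]
    exact h

lemma key_lemma (e : ℕ) (he : 0 < e) (hcomp : ∀ x : K, wL.v (algebraMap K L x) = e • wK.v x)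
    (hGal : ∀ (σ : L ≃ₐ[K] L) (x : L), wL.v (σ x) = wL.v x)
    (b : WittVector p L)
    (hb : ∀ σ : L ≃ₐ[K] L, ∃ c : WittVector p wL.integers,
      WittVector.map (σ : L →+* L) b - b = WittVector.map wL.integers.subtype c) :
    ∃ (κ : K) (ω : L), 0 ≤ wL.v ω ∧ b.coeff 0 = algebraMap K L κ + ω := by
  choose c hc using hb
  let t : WittVector p L := ∑ σ : L ≃ₐ[K] L, WittVector.map (σ : L →+* L) b
  have htfix : ∀ τ : L ≃ₐ[K] L, WittVector.map (τ : L →+* L) t = t := by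
    intro τ
    simp only [t, map_sum]
    refine Fintype.sum_equiv (Equiv.mulLeft τ) _ _ fun σ => ?_
    ext n
    simp [WittVector.map_coeff]
  have htK : ∃ a : WittVector p K, WittVector.map (algebraMap K L) a = t := by
    have h1 : ∀ n, ∃ y : K, algebraMap K L y = t.coeff n := by
      intro n
      refine (IsGalois.mem_range_algebraMap_iff_fixed (t.coeff n)).2 fun τ => ?_
      have := congrArg (fun z => z.coeff n) (htfix τ)
      simpa [WittVector.map_coeff] using this
    choose y hy using h1
    exact ⟨WittVector.mk p y, by ext n; simp [WittVector.map_coeff, hy]⟩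
  obtain ⟨a, ha⟩ := htK
  let N := Fintype.card (L ≃ₐ[K] L)
  have hN0 : N ≠ 0 := Fintype.card_ne_zero
  have hH : HH wL K (b * (N : WittVector p L)) := by
    refine ⟨a, -∑ σ, c σ, ?_⟩
    rw [_root_.map_neg, map_sum, ha]
    simp only [t, ← hc, Finset.sum_sub_distrib, Finset.sum_const, Finset.card_univ]
    rw [nsmul_eq_mul]
    ring
  obtain ⟨k, m, hm, hNm⟩ := Nat.exists_eq_pow_mul_and_not_dvd hN0 p hp.out.ne_one
  rw [hNm] at hH
  have hH' : HH wL K (b * (m : WittVector p L)) := by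
    apply p_sat wK wL e he hcomp hGal k
    convert hH using 1
    push_cast
    ring
  obtain ⟨a', o', h'⟩ := hH'
  have h0 := congrArg (fun z => WittVector.constantCoeff z) h'
  simp only [_root_.map_add, _root_.map_mul, map_natCast, WittVector.constantCoeff_apply,
    WittVector.map_coeff] at h0
  have hcop : Nat.Coprime m p := ((Nat.Prime.coprime_iff_not_dvd hp.out).2 hm).symm
  obtain ⟨m', hm'⟩ : ∃ m' : ℕ, ((m * m' : ℕ) : L) = 1 := by
    obtain ⟨m', h1⟩ := Nat.exists_mul_mod_eq_one_of_coprime hcop hp.out.one_lt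
    refine ⟨m', ?_⟩
    rw [CharP.cast_eq_mod L p, h1.2, Nat.cast_one]
  refine ⟨m' * a'.coeff 0, m' * (o'.coeff 0 : L), ?_, ?_⟩
  · exact le_trans (o'.coeff 0).2 (v_natCast_mul wL _ _)
  · calc b.coeff 0 = b.coeff 0 * ((m * m' : ℕ) : L) := by rw [hm', mul_one]
      _ = m' * (b.coeff 0 * m) := by push_cast; ring
      _ = _ := by
        rw [h0, _root_.map_mul, map_natCast, Subring.subtype_apply]; ring

lemma main_W (e : ℕ) (he : 0 < e) (hcomp : ∀ x : K, wL.v (algebraMap K L x) = e • wK.v x)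
    (hGal : ∀ (σ : L ≃ₐ[K] L) (x : L), wL.v (σ x) = wL.v x)
    (b : WittVector p L)
    (hb : ∀ σ : L ≃ₐ[K] L, ∃ c : WittVector p wL.integers,
      WittVector.map (σ : L →+* L) b - b = WittVector.map wL.integers.subtype c) :
    HH wL K b := by
  obtain ⟨f, g, hf, hg, rfl⟩ := witt_peel
    (fun b : WittVector p L => ∀ σ : L ≃ₐ[K] L, ∃ c : WittVector p wL.integers,
      WittVector.map (σ : L →+* L) b - b = WittVector.map wL.integers.subtype c)
    (fun f => ∃ κ : K, f = algebraMap K L κ) (fun ω => 0 ≤ wL.v ω) (by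
      intro b hb
      obtain ⟨κ, ω, hω, h0⟩ := key_lemma wK wL e he hcomp hGal b hb
      obtain ⟨b1, hb1⟩ := exists_V
        (b - WittVector.teichmuller p (algebraMap K L κ) - WittVector.teichmuller p ω) (by
          rw [coeff_zero_sub, coeff_zero_sub, WittVector.teichmuller_coeff_zero,
            WittVector.teichmuller_coeff_zero, h0]
          ring)
      refine ⟨_, ω, b1, ⟨κ, rfl⟩, hω, ?_, by rw [← hb1]; ring⟩
      intro σ
      obtain ⟨c, hc⟩ := hb σ
      have hσω : σ ω ∈ wL.integers := by rw [mem_integers_iff, hGal]; exact hω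
      let c' := c - WittVector.teichmuller p (⟨σ ω, hσω⟩ : wL.integers) +
        WittVector.teichmuller p (⟨ω, hω⟩ : wL.integers)
      have hc' : WittVector.map (σ : L →+* L) (WittVector.verschiebung b1) -
          WittVector.verschiebung b1 = WittVector.map wL.integers.subtype c' := by
        simp only [c', ← hb1, map_sub, _root_.map_add, ← hc, WittVector.map_teichmuller,
          Subring.subtype_apply, RingHom.coe_coe, AlgEquiv.commutes]
        ring
      obtain ⟨c1, hc1⟩ := exists_V c' (by
        have h1 := congrArg (fun z => z.coeff 0) hc'
        simp only [coeff_zero_sub, WittVector.map_coeff, WittVector.verschiebung_coeff_zero,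
          map_zero, sub_zero] at h1
        exact Subtype.ext h1.symm)
      refine ⟨c1, ?_⟩
      apply WittVector.verschiebung_injective p L
      rw [map_sub, ← WittVector.map_verschiebung, ← WittVector.map_verschiebung, hc', hc1]) b hb
  choose κ hκ using hf
  obtain ⟨g', hg'⟩ := exists_lift_O wL (WittVector.mk p g) (fun i => by simpa using hg i)
  refine ⟨WittVector.mk p κ, g', ?_⟩
  rw [hg']
  congr 1
  ext n
  simp [WittVector.map_coeff, hκ]

end Sat

end HesAux

namespace HesAux

section HOne
variable {K L : Type*} [Field K] [Field L] [Algebra K L] [IsGalois K L] [FiniteDimensional K L]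

/-- Additive Hilbert 90. -/
lemma additive_hilbert (c : (L ≃ₐ[K] L) → L) (hc : ∀ σ τ, c (σ * τ) = c σ + σ (c τ)) :
    ∃ b : L, ∀ σ, c σ = σ b - b := by
  obtain ⟨u, hu⟩ := Algebra.trace_surjective K L 1
  have hu' : ∑ σ : L ≃ₐ[K] L, σ u = 1 := by
    rw [← trace_eq_sum_automorphisms, hu, _root_.map_one]
  refine ⟨-∑ τ, c τ * τ u, fun σ => ?_⟩
  have h1 : ∑ τ, c τ * τ u = ∑ τ, c (σ * τ) * (σ * τ) u :=
    (Fintype.sum_equiv (Equiv.mulLeft σ) _ _ fun τ => rfl).symm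
  have h2 : ∑ τ, c τ * τ u = c σ + σ (∑ τ, c τ * τ u) := by
    conv_lhs => rw [h1]
    simp only [hc, add_mul, Finset.sum_add_distrib, ← Finset.mul_sum, map_sum, _root_.map_mul,
      AlgEquiv.mul_apply]
    congr 1
    rw [show ∑ i : L ≃ₐ[K] L, σ (i u) = σ (∑ i : L ≃ₐ[K] L, i u) from (map_sum σ _ _).symm, hu',
      _root_.map_one, mul_one]
  rw [_root_.map_neg]
  linear_combination -h2

variable {p : ℕ} [hp : Fact p.Prime]

lemma witt_hilbert (c : (L ≃ₐ[K] L) → WittVector p L)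
    (hc : ∀ σ τ, c (σ * τ) = c σ + WittVector.map (σ : L →+* L) (c τ)) :
    ∃ b : WittVector p L, ∀ σ : L ≃ₐ[K] L, c σ = WittVector.map (σ : L →+* L) b - b := by
  let T := {c : (L ≃ₐ[K] L) → WittVector p L //
    ∀ σ τ, c (σ * τ) = c σ + WittVector.map (σ : L →+* L) (c τ)}
  have step : ∀ c : T, ∃ (β : L) (c1 : T), ∀ σ : L ≃ₐ[K] L,
      c.1 σ = WittVector.teichmuller p (σ β) - WittVector.teichmuller p β +
        WittVector.verschiebung (c1.1 σ) := by
    rintro ⟨c, hc⟩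
    obtain ⟨β, hβ⟩ := additive_hilbert (K := K) (fun σ => (c σ).coeff 0) (by
      intro σ τ
      rw [hc, coeff_zero_add, WittVector.map_coeff]
      rfl)
    have h1 : ∀ σ : L ≃ₐ[K] L, ∃ y, c σ - WittVector.teichmuller p (σ β) +
        WittVector.teichmuller p β = WittVector.verschiebung y := by
      intro σ
      apply exists_V
      rw [coeff_zero_add, coeff_zero_sub, WittVector.teichmuller_coeff_zero,
        WittVector.teichmuller_coeff_zero, hβ σ]
      ring
    choose c1 hc1 using h1
    refine ⟨β, ⟨c1, fun σ τ => ?_⟩, fun σ => ?_⟩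
    · apply WittVector.verschiebung_injective p L
      rw [_root_.map_add, ← WittVector.map_verschiebung, ← hc1, ← hc1, ← hc1, hc, _root_.map_add,
        map_sub, WittVector.map_teichmuller, WittVector.map_teichmuller, AlgEquiv.mul_apply]
      simp only [RingHom.coe_coe]
      ring
    · rw [← hc1]
      ring
  choose F N hFN using step
  let S : ℕ → T := fun n => Nat.rec ⟨c, hc⟩ (fun _ x => N x) n
  have hS : ∀ n, S (n + 1) = N (S n) := fun n => rfl
  refine ⟨WittVector.mk p fun n => F (S n), fun σ => ?_⟩
  let d : ℕ → WittVector p L := fun n => (S n).1 σ -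
    (WittVector.map (σ : L →+* L) (WittVector.mk p fun i => F (S (n + i))) -
      WittVector.mk p fun i => F (S (n + i)))
  have hd : ∀ n, d n = WittVector.verschiebung (d (n + 1)) := by
    intro n
    simp only [d]
    rw [mk_eq (fun i => F (S (n + i))), map_sub, map_sub, hS n, hFN (S n) σ, _root_.map_add,
      WittVector.map_teichmuller, WittVector.map_verschiebung]
    simp only [add_zero, add_assoc, add_comm 1, RingHom.coe_coe]
    abel
  have h0 := eq_of_V_chain d hd
  simp only [d, zero_add] at h0
  exact sub_eq_zero.1 h0

end HOne

section Lift
variable {p : ℕ} [hp : Fact p.Prime] {R S : Type*} [CommRing R] [CommRing S]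

lemma trunc_map {n m : ℕ} (h : n ≤ m) (f : R →+* S) (x : TruncatedWittVector p m R) :
    TruncatedWittVector.truncate h (TruncatedWittVector.map f x) =
      TruncatedWittVector.map f (TruncatedWittVector.truncate h x) := by
  ext i
  simp [TruncatedWittVector.coeff_truncate]

lemma witt_trunc_map (n : ℕ) (f : R →+* S) (x : WittVector p R) :
    WittVector.truncate n (WittVector.map f x) =
      TruncatedWittVector.map f (WittVector.truncate n x) := by
  ext i
  simp [WittVector.coeff_truncate, WittVector.map_coeff]

lemma witt_ext_trunc {x y : WittVector p R}
    (h : ∀ n, WittVector.truncate n x = WittVector.truncate n y) : x = y := by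
  ext n
  have := congrArg (fun z => TruncatedWittVector.coeff (⟨n, Nat.lt_succ_self n⟩ : Fin (n + 1)) z)
    (h (n + 1))
  simpa [WittVector.coeff_truncate] using this

lemma exists_witt_lift (c : (n : ℕ) → TruncatedWittVector p n R)
    (hc : ∀ n, TruncatedWittVector.truncate (Nat.le_succ n) (c (n + 1)) = c n) :
    ∃ x : WittVector p R, ∀ n, WittVector.truncate n x = c n := by
  have key : ∀ n i (h : i < n), (c n).coeff ⟨i, h⟩ = (c (i + 1)).coeff ⟨i, Nat.lt_succ_self i⟩ := by
    intro n
    induction n with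
    | zero => intro i h; omega
    | succ n ih =>
      intro i h
      by_cases hi : i = n
      · subst hi; rfl
      · have hlt : i < n := by omega
        rw [← ih i hlt, ← hc n, TruncatedWittVector.coeff_truncate]
        rfl
  refine ⟨WittVector.mk p fun i => (c (i + 1)).coeff ⟨i, Nat.lt_succ_self i⟩, fun n => ?_⟩
  ext ⟨i, hi⟩
  rw [WittVector.coeff_truncate, key n i hi, WittVector.coeff_mk]

end Lift

end HesAux

/-- Let `L/K` be a finite Galois extension of complete discrete valued
fields of equal characteristic `p > 0` whose induced residue field extension is separable.
Then `lim_n H¹(G, Wₙ(O_L)) = 0`: for every compatible family of `1`-cocycles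
`cₙ : G → Wₙ(O_L)` (compatible in the sense that the truncation of `c_{n+1}` is
cohomologous to `cₙ`), every `cₙ` is a coboundary. -/
theorem hesselholt_equicharacteristic_inverse_limit_vanishing
    (p : ℕ) [Fact p.Prime]
    {K L : Type*} [Field K] [Field L] [Algebra K L] [CharP K p]
    (wK : CompleteDiscreteValuation K) (wL : CompleteDiscreteValuation L)
    [IsGalois K L] [FiniteDimensional K L]
    (e : ℕ) (he : 0 < e)
    (hcomp : ∀ x : K, wL.v (algebraMap K L x) = e • wK.v x)
    (hsep : ResidueSeparable wK wL e he hcomp)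
    (hGal : ∀ (σ : L ≃ₐ[K] L) (x : L), wL.v (σ x) = wL.v x) :
    ∀ c : (n : ℕ) → (L ≃ₐ[K] L) → TruncatedWittVector p n wL.integers,
      (∀ (n : ℕ) (σ τ : L ≃ₐ[K] L),
          c n (σ * τ) = c n σ + TruncatedWittVector.map (wL.galRes hGal σ) (c n τ)) →
      (∀ n : ℕ, ∃ b : TruncatedWittVector p n wL.integers, ∀ σ : L ≃ₐ[K] L,
          TruncatedWittVector.truncate (Nat.le_succ n) (c (n + 1) σ) - c n σ =
            TruncatedWittVector.map (wL.galRes hGal σ) b - b) →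
      ∀ n : ℕ, ∃ b : TruncatedWittVector p n wL.integers, ∀ σ : L ≃ₐ[K] L,
        c n σ = TruncatedWittVector.map (wL.galRes hGal σ) b - b := by
  intro c hcoc hcoh
  have hcharL : CharP L p := charP_of_injective_algebraMap (algebraMap K L).injective p
  choose b hb using hcoh
  have hsurj : ∀ (n : ℕ) (y : TruncatedWittVector p n wL.integers),
      ∃ z : TruncatedWittVector p (n + 1) wL.integers,
        TruncatedWittVector.truncate (Nat.le_succ n) z = y :=
    fun n => TruncatedWittVector.truncate_surjective (Nat.le_succ n)
  choose lift hlift using hsurj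
  let ε : (n : ℕ) → TruncatedWittVector p n wL.integers :=
    fun n => Nat.rec 0 (fun m x => lift m (x - b m)) n
  have hε : ∀ n, TruncatedWittVector.truncate (Nat.le_succ n) (ε (n + 1)) = ε n - b n :=
    fun n => hlift n _
  let c' : (n : ℕ) → (L ≃ₐ[K] L) → TruncatedWittVector p n wL.integers :=
    fun n σ => c n σ + (TruncatedWittVector.map (wL.galRes hGal σ) (ε n) - ε n)
  have hc'trunc : ∀ n σ, TruncatedWittVector.truncate (Nat.le_succ n) (c' (n + 1) σ) = c' n σ := by
    intro n σ
    simp only [c']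
    rw [_root_.map_add, map_sub, HesAux.trunc_map, hε, map_sub]
    linear_combination hb n σ
  have hmapmul : ∀ n (σ τ : L ≃ₐ[K] L) (x : TruncatedWittVector p n wL.integers),
      TruncatedWittVector.map (wL.galRes hGal (σ * τ)) x =
        TruncatedWittVector.map (wL.galRes hGal σ)
          (TruncatedWittVector.map (wL.galRes hGal τ) x) := by
    intro n σ τ x
    ext i
    simp only [TruncatedWittVector.map_coeff]
    rfl
  have hc'coc : ∀ n σ τ, c' n (σ * τ) =
      c' n σ + TruncatedWittVector.map (wL.galRes hGal σ) (c' n τ) := by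
    intro n σ τ
    simp only [c']
    rw [_root_.map_add, map_sub, hmapmul, hcoc]
    ring
  have hC : ∀ σ, ∃ x : WittVector p wL.integers, ∀ n, WittVector.truncate n x = c' n σ :=
    fun σ => HesAux.exists_witt_lift (fun n => c' n σ) (fun n => hc'trunc n σ)
  choose C hC using hC
  have hCcoc : ∀ σ τ, C (σ * τ) = C σ + WittVector.map (wL.galRes hGal σ) (C τ) := by
    intro σ τ
    apply HesAux.witt_ext_trunc
    intro n
    rw [_root_.map_add, HesAux.witt_trunc_map, hC, hC, hC, hc'coc]
  have hequiv : ∀ (σ : L ≃ₐ[K] L) (x : WittVector p wL.integers),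
      WittVector.map wL.integers.subtype (WittVector.map (wL.galRes hGal σ) x) =
        WittVector.map (σ : L →+* L) (WittVector.map wL.integers.subtype x) := by
    intro σ x
    ext i
    simp only [WittVector.map_coeff]
    rfl
  obtain ⟨β, hβ⟩ := HesAux.witt_hilbert (K := K)
    (fun σ => WittVector.map wL.integers.subtype (C σ)) (by
      intro σ τ
      rw [hCcoc, _root_.map_add, hequiv])
  obtain ⟨a, o, hao⟩ := HesAux.main_W wK wL e he hcomp hGal β (fun σ => ⟨C σ, (hβ σ).symm⟩)
  have hCo : ∀ σ, C σ = WittVector.map (wL.galRes hGal σ) o - o := by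
    intro σ
    apply WittVector.map_injective wL.integers.subtype Subtype.val_injective
    have hKfix : WittVector.map (σ : L →+* L) (WittVector.map (algebraMap K L) a) =
        WittVector.map (algebraMap K L) a := by
      ext i
      simp [WittVector.map_coeff]
    have h1 := hβ σ
    rw [hao, _root_.map_add, hKfix] at h1
    rw [map_sub, hequiv, h1]
    ring
  intro n
  refine ⟨WittVector.truncate n o - ε n, fun σ => ?_⟩
  have h1 := congrArg (WittVector.truncate n) (hCo σ)
  rw [hC, map_sub, HesAux.witt_trunc_map] at h1
  simp only [c'] at h1
  rw [map_sub]
  linear_combination h1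
end
end

section
/- Let L/K be a totally ramified Galois extension of degree p of complete discrete valued fields of characteristic p, with σ a generator of Gal(L/K). Define F(x) = G(x, σ(x), …, σ^{p−1}(x)), where G ∈ ℤ[X_1, …, X_p] is the integral polynomial with p·G = (ΣX_i)^p − ΣX_i^p. Then for every nonzero x ∈ O_L, F(x) lies in K and v_K(F(x)) = v_L(x). -/
/-!
Common background: complete discretely valued fields, their valuation rings,
residue fields, Galois action on the valuation ring, truncated Witt vector
functoriality, and ramification breaks.
-/

noncomputable section

open scoped Classical

open CompleteDiscreteValuation

/-- The additive valuation underlying a `CompleteDiscreteValuation`. -/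
def auxVal {L : Type*} [Field L] (w : CompleteDiscreteValuation L) :
    AddValuation L (WithTop ℤ) :=
  AddValuation.of w.v w.v_zero w.map_one w.min_le_add w.map_mul

lemma auxVal_apply {L : Type*} [Field L] (w : CompleteDiscreteValuation L) (x : L) :
    auxVal w x = w.v x := rfl

lemma aux_v_pow {L : Type*} [Field L] (w : CompleteDiscreteValuation L) (x : L) (n : ℕ) :
    w.v (x ^ n) = n • w.v x := (auxVal w).map_pow x n

lemma aux_nsmul_coe (n : ℕ) (a : ℤ) : n • ((a : ℤ) : WithTop ℤ) = ((n * a : ℤ) : WithTop ℤ) := by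
  rw [← WithTop.coe_nsmul]; simp

lemma aux_exists_coe {L : Type*} [Field L] (w : CompleteDiscreteValuation L) {x : L}
    (hx : x ≠ 0) : ∃ n : ℤ, w.v x = n := by
  have : w.v x ≠ ⊤ := fun h => hx ((w.eq_top_iff x).1 h)
  obtain ⟨n, hn⟩ := WithTop.ne_top_iff_exists.1 this
  exact ⟨n, hn.symm⟩

lemma aux_v_inv {L : Type*} [Field L] (w : CompleteDiscreteValuation L) {x : L}
    (hx : x ≠ 0) {n : ℤ} (h : w.v x = n) : w.v x⁻¹ = ((-n : ℤ) : WithTop ℤ) := by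
  obtain ⟨m, hm⟩ := aux_exists_coe w (inv_ne_zero hx)
  have h1 := w.map_mul x x⁻¹
  rw [mul_inv_cancel₀ hx, w.map_one, h, hm] at h1
  have : (0 : ℤ) = n + m := by exact_mod_cast h1
  rw [hm]; congr 1; omega

section Poly

variable {p : ℕ} (G : MvPolynomial (Fin p) ℤ)

lemma aux_aeval (hG : (p : MvPolynomial (Fin p) ℤ) * G =
      (∑ i : Fin p, MvPolynomial.X i) ^ p - ∑ i : Fin p, MvPolynomial.X i ^ p)
    {R : Type*} [CommRing R] [Algebra ℤ R] (f : Fin p → R) :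
    (p : R) * MvPolynomial.aeval f G = (∑ i, f i) ^ p - ∑ i, f i ^ p := by
  have := congrArg (MvPolynomial.aeval f) hG
  simpa using this

lemma aux_scale (hp : p.Prime) (hG : (p : MvPolynomial (Fin p) ℤ) * G =
      (∑ i : Fin p, MvPolynomial.X i) ^ p - ∑ i : Fin p, MvPolynomial.X i ^ p)
    {R : Type*} [CommRing R] (f : Fin p → R) (x : R) :
    MvPolynomial.aeval (fun i => x * f i) G = x ^ p * MvPolynomial.aeval f G := by
  have key : MvPolynomial.aeval (fun i : Fin p =>
        (MvPolynomial.X none * MvPolynomial.X (some i) : MvPolynomial (Option (Fin p)) ℤ)) G =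
      MvPolynomial.X none ^ p * MvPolynomial.aeval (fun i : Fin p =>
        (MvPolynomial.X (some i) : MvPolynomial (Option (Fin p)) ℤ)) G := by
    have hp0 : (p : MvPolynomial (Option (Fin p)) ℤ) ≠ 0 := by
      exact_mod_cast hp.ne_zero
    apply mul_left_cancel₀ hp0
    rw [mul_left_comm, aux_aeval G hG, aux_aeval G hG, ← Finset.mul_sum, mul_pow, mul_sub,
      Finset.mul_sum]
    simp only [mul_pow]
  have := congrArg (MvPolynomial.aeval (fun o : Option (Fin p) => o.elim x f)) key
  rw [_root_.map_mul, map_pow, MvPolynomial.aeval_X, ← AlgHom.comp_apply, ← AlgHom.comp_apply,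
    MvPolynomial.comp_aeval, MvPolynomial.comp_aeval] at this
  simpa using this

lemma aux_symm (hp : p.Prime) (hG : (p : MvPolynomial (Fin p) ℤ) * G =
      (∑ i : Fin p, MvPolynomial.X i) ^ p - ∑ i : Fin p, MvPolynomial.X i ^ p)
    {R : Type*} [CommRing R] (f : Fin p → R) (e : Fin p ≃ Fin p) :
    MvPolynomial.aeval (fun i => f (e i)) G = MvPolynomial.aeval f G := by
  have key : MvPolynomial.aeval (fun i : Fin p =>
        (MvPolynomial.X (e i) : MvPolynomial (Fin p) ℤ)) G = G := by
    have hp0 : (p : MvPolynomial (Fin p) ℤ) ≠ 0 := by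
      exact_mod_cast hp.ne_zero
    apply mul_left_cancel₀ hp0
    rw [aux_aeval G hG, hG, Equiv.sum_comp e (fun i => (MvPolynomial.X i : MvPolynomial (Fin p) ℤ)),
      Equiv.sum_comp e (fun i => (MvPolynomial.X i : MvPolynomial (Fin p) ℤ) ^ p)]
  have := congrArg (MvPolynomial.aeval f) key
  rw [← AlgHom.comp_apply, MvPolynomial.comp_aeval] at this
  simpa using this

lemma aux_one (hp : p.Prime) (hG : (p : MvPolynomial (Fin p) ℤ) * G =
      (∑ i : Fin p, MvPolynomial.X i) ^ p - ∑ i : Fin p, MvPolynomial.X i ^ p)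
    {R : Type*} [CommRing R] [CharP R p] :
    MvPolynomial.aeval (fun _ : Fin p => (1 : R)) G = -1 := by
  have h1 : MvPolynomial.aeval (fun _ : Fin p => (1 : ℤ)) G = (p : ℤ) ^ (p - 1) - 1 := by
    have hp0 : (p : ℤ) ≠ 0 := by exact_mod_cast hp.ne_zero
    apply mul_left_cancel₀ hp0
    rw [aux_aeval G hG, mul_sub, mul_pow_sub_one hp.ne_zero]
    simp
  have h2 := congrArg (Algebra.ofId ℤ R) h1
  rw [← AlgHom.comp_apply, MvPolynomial.comp_aeval] at h2
  have hp1 : p - 1 ≠ 0 := by have := hp.two_le; omega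
  simpa [CharP.cast_eq_zero, hp1] using h2

end Poly

section Ext

variable {p : ℕ} {K L : Type*} [Field K] [Field L] [Algebra K L]
    (wK : CompleteDiscreteValuation K) (wL : CompleteDiscreteValuation L)

lemma aux_term (htot : ∀ x : K, wL.v (algebraMap K L x) = p • wK.v x)
    {π : L} (hπ : wL.v π = 1) {a : K} (ha : a ≠ 0) (i : ℕ) :
    ∃ n : ℤ, wK.v a = n ∧ wL.v (algebraMap K L a * π ^ i) = ((p * n + i : ℤ) : WithTop ℤ) := by
  obtain ⟨n, hn⟩ := aux_exists_coe wK ha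
  refine ⟨n, hn, ?_⟩
  rw [wL.map_mul, htot, hn, aux_v_pow, hπ, aux_nsmul_coe]
  simp

lemma aux_sum_le (htot : ∀ x : K, wL.v (algebraMap K L x) = p • wK.v x)
    {π : L} (hπ : wL.v π = 1) (a : Fin p → K) (j : Fin p) :
    wL.v (∑ i, algebraMap K L (a i) * π ^ (i : ℕ)) ≤ wL.v (algebraMap K L (a j) * π ^ (j : ℕ)) := by
  obtain ⟨k, -, hk⟩ := Finset.exists_min_image Finset.univ
    (fun i : Fin p => wL.v (algebraMap K L (a i) * π ^ (i : ℕ))) ⟨j, Finset.mem_univ j⟩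
  refine le_trans ?_ (hk j (Finset.mem_univ j))
  by_cases hak : a k = 0
  · simp [hak, v_zero]
  obtain ⟨n, -, hn⟩ := aux_term wK wL htot hπ hak (k : ℕ)
  apply le_of_eq
  rw [← Finset.add_sum_erase _ _ (Finset.mem_univ k)]
  refine (auxVal wL).map_add_eq_of_lt_left ?_
  refine (auxVal wL).map_lt_sum ?_ ?_
  · rw [auxVal_apply, hn]; exact WithTop.coe_ne_top
  · intro i hi
    refine lt_of_le_of_ne (hk i (Finset.mem_univ i)) ?_
    rw [auxVal_apply, auxVal_apply, hn]
    by_cases hai : a i = 0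
    · simp only [hai, map_zero, zero_mul, v_zero]; exact WithTop.coe_ne_top
    obtain ⟨m, -, hm⟩ := aux_term wK wL htot hπ hai (i : ℕ)
    rw [hm]
    intro h
    have h' : (p * n + (k : ℕ) : ℤ) = p * m + (i : ℕ) := by exact_mod_cast h
    have hik : (i : ℕ) ≠ k := fun h => (Finset.ne_of_mem_erase hi) (Fin.ext h)
    have h2 : ((k : ℕ) : ℤ) % p = ((i : ℕ) : ℤ) % p := by
      have := congrArg (· % (p : ℤ)) h'
      simpa using this
    rw [Int.emod_eq_of_lt (by positivity) (by exact_mod_cast k.2),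
      Int.emod_eq_of_lt (by positivity) (by exact_mod_cast i.2)] at h2
    omega

lemma aux_expand [FiniteDimensional K L] (hdeg : Module.finrank K L = p)
    (htot : ∀ x : K, wL.v (algebraMap K L x) = p • wK.v x)
    {π : L} (hπ : wL.v π = 1) (x : L) :
    ∃ a : Fin p → K, x = ∑ i, algebraMap K L (a i) * π ^ (i : ℕ) := by
  have hπ0 : π ≠ 0 := by
    rintro rfl; rw [v_zero] at hπ; exact absurd hπ (by decide)
  have hli : LinearIndependent K (fun i : Fin p => π ^ (i : ℕ)) := by
    rw [Fintype.linearIndependent_iff]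
    intro g hg j
    have := aux_sum_le wK wL htot hπ g j
    simp only [Algebra.smul_def] at hg
    rw [hg, v_zero, top_le_iff, wL.eq_top_iff] at this
    simpa [hπ0] using this
  have hspan := hli.span_eq_top_of_card_eq_finrank' (by simp [hdeg])
  have hx : x ∈ Submodule.span K (Set.range (fun i : Fin p => π ^ (i : ℕ))) := by
    rw [hspan]; trivial
  obtain ⟨a, ha⟩ := (Submodule.mem_span_range_iff_exists_fun K).1 hx
  exact ⟨a, by simp only [← ha, Algebra.smul_def]⟩

lemma aux_coeff (htot : ∀ x : K, wL.v (algebraMap K L x) = p • wK.v x)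
    {π : L} (hπ : wL.v π = 1) (a : Fin p → K)
    (h : 0 ≤ wL.v (∑ i, algebraMap K L (a i) * π ^ (i : ℕ))) (j : Fin p) :
    0 ≤ wL.v (algebraMap K L (a j)) := by
  by_cases haj : a j = 0
  · simp [haj, v_zero]
  have h1 := h.trans (aux_sum_le wK wL htot hπ a j)
  obtain ⟨n, hn, hm⟩ := aux_term wK wL htot hπ haj (j : ℕ)
  rw [hm] at h1
  rw [htot, hn, aux_nsmul_coe]
  have h2 : (0 : ℤ) ≤ p * n + (j : ℕ) := by exact_mod_cast h1
  have h3 : (j : ℕ) < p := j.2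
  have h4 : 0 ≤ n := by
    by_contra hneg
    have : (p : ℤ) * n ≤ p * (-1) := by
      apply mul_le_mul_of_nonneg_left <;> omega
    omega
  exact_mod_cast mul_nonneg (Int.natCast_nonneg p) h4

lemma aux_int [FiniteDimensional K L] (hdeg : Module.finrank K L = p)
    (htot : ∀ x : K, wL.v (algebraMap K L x) = p • wK.v x)
    (τ : L ≃ₐ[K] L) {x : L} (hx : 0 ≤ wL.v x) : 0 ≤ wL.v (τ x) := by
  obtain ⟨π, hπ⟩ := wL.surjective 1
  replace hπ : wL.v π = 1 := hπ
  have hz : τ π ∈ wL.integers := by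
    by_contra hneg
    rw [mem_integers_iff] at hneg
    have hz0 : τ π ≠ 0 := by
      intro h; rw [h, v_zero] at hneg; simp at hneg
    obtain ⟨n, hn⟩ := aux_exists_coe wL hz0
    have hinv : (τ π)⁻¹ ∈ wL.integers := by
      rw [mem_integers_iff, aux_v_inv wL hz0 hn]
      rw [hn] at hneg
      have : ¬ (0 ≤ n) := fun h => hneg (by exact_mod_cast h)
      have : 0 ≤ -n := by omega
      exact_mod_cast this
    obtain ⟨a, ha⟩ := aux_expand wK wL hdeg htot hπ (π ^ p)
    have hc := aux_coeff wK wL htot hπ a (by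
      rw [← ha, aux_v_pow, hπ]; exact nsmul_nonneg (by decide) p)
    have hτ := congrArg τ ha
    simp only [map_pow, map_sum, _root_.map_mul, AlgEquiv.commutes] at hτ
    apply hneg
    rw [← mem_integers_iff]
    have hp : 0 < p := hdeg ▸ Module.finrank_pos
    have : τ π = ∑ i : Fin p, algebraMap K L (a i) * ((τ π)⁻¹) ^ (p - 1 - (i : ℕ)) := by
      have h1 : τ π ^ (p - 1) ≠ 0 := pow_ne_zero _ hz0
      apply mul_left_cancel₀ h1
      rw [pow_sub_one_mul hp.ne', hτ, Finset.mul_sum]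
      refine Finset.sum_congr rfl fun i _ => ?_
      have hi : (i : ℕ) ≤ p - 1 := by have := i.2; omega
      rw [mul_left_comm]
      congr 1
      rw [inv_pow, ← div_eq_mul_inv, eq_div_iff (pow_ne_zero _ hz0), ← pow_add]
      congr 1; omega
    rw [this]
    exact wL.integers.sum_mem fun i _ => wL.integers.mul_mem (hc i) (wL.integers.pow_mem hinv _)
  obtain ⟨a, ha⟩ := aux_expand wK wL hdeg htot hπ x
  have hc := aux_coeff wK wL htot hπ a (ha ▸ hx)
  rw [← mem_integers_iff, ha]
  simp only [map_pow, map_sum, _root_.map_mul, AlgEquiv.commutes]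
  exact wL.integers.sum_mem fun i _ => wL.integers.mul_mem (hc i) (wL.integers.pow_mem hz _)

lemma aux_unit [FiniteDimensional K L] (hdeg : Module.finrank K L = p)
    (htot : ∀ x : K, wL.v (algebraMap K L x) = p • wK.v x)
    (τ : L ≃ₐ[K] L) {x : L} (hx : wL.v x = 0) : wL.v (τ x) = 0 := by
  have hx0 : x ≠ 0 := by
    rintro rfl; rw [v_zero] at hx; exact absurd hx (by decide)
  have h1 := aux_int wK wL hdeg htot τ hx.ge
  have h2 := aux_int wK wL hdeg htot τ (x := x⁻¹)
    (by rw [aux_v_inv wL hx0 (n := 0) hx]; simp)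
  have hτ0 : τ x ≠ 0 := by simpa using hx0
  obtain ⟨n, hn⟩ := aux_exists_coe wL hτ0
  rw [map_inv₀, aux_v_inv wL hτ0 hn] at h2
  rw [hn] at h1 ⊢
  have h3 : 0 ≤ n := by exact_mod_cast h1
  have h4 : 0 ≤ -n := by exact_mod_cast h2
  have : n = 0 := by omega
  rw [this]; rfl

lemma aux_gal [FiniteDimensional K L] (hdeg : Module.finrank K L = p)
    (htot : ∀ x : K, wL.v (algebraMap K L x) = p • wK.v x)
    (τ : L ≃ₐ[K] L) (x : L) : wL.v (τ x) = wL.v x := by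
  by_cases hx0 : x = 0
  · simp [hx0]
  have hp : 0 < p := hdeg ▸ Module.finrank_pos
  have hτ0 : τ x ≠ 0 := by simpa using hx0
  obtain ⟨n, hn⟩ := aux_exists_coe wL hx0
  obtain ⟨m, hm⟩ := aux_exists_coe wL hτ0
  obtain ⟨a, ha⟩ := wK.surjective (-n)
  have h1 : wL.v (algebraMap K L a * x ^ p) = 0 := by
    rw [wL.map_mul, htot, ha, aux_v_pow, hn, aux_nsmul_coe, aux_nsmul_coe, ← WithTop.coe_add]
    rw [show ((p : ℤ) * -n + p * n) = 0 by ring]; rfl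
  have h2 := aux_unit wK wL hdeg htot τ h1
  rw [_root_.map_mul, AlgEquiv.commutes, map_pow, wL.map_mul, htot, ha, aux_v_pow, hm, aux_nsmul_coe,
    aux_nsmul_coe, ← WithTop.coe_add] at h2
  have h3 : ((p : ℤ) * -n + p * m) = 0 := by exact_mod_cast h2
  have h4 : (p : ℤ) * (m - n) = 0 := by linarith
  have hp' : (p : ℤ) ≠ 0 := by exact_mod_cast hp.ne'
  have h5 : m - n = 0 := (mul_eq_zero.1 h4).resolve_left hp'
  rw [hn, hm]; congr 1; omega

lemma aux_residue [FiniteDimensional K L] (hdeg : Module.finrank K L = p)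
    (htot : ∀ x : K, wL.v (algebraMap K L x) = p • wK.v x)
    {x : L} (hx : 0 ≤ wL.v x) : ∃ b : K, 0 < wL.v (x - algebraMap K L b) := by
  have hp : 0 < p := hdeg ▸ Module.finrank_pos
  haveI : NeZero p := ⟨hp.ne'⟩
  obtain ⟨π, hπ⟩ := wL.surjective 1
  replace hπ : wL.v π = 1 := hπ
  obtain ⟨a, ha⟩ := aux_expand wK wL hdeg htot hπ x
  have hc := aux_coeff wK wL htot hπ a (ha ▸ hx)
  refine ⟨a 0, ?_⟩
  rw [ha, ← Finset.add_sum_erase _ _ (Finset.mem_univ (0 : Fin p))]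
  simp only [Fin.val_zero, pow_zero, mul_one, add_sub_cancel_left]
  refine (auxVal wL).map_lt_sum (by decide) fun i hi => ?_
  rw [auxVal_apply, wL.map_mul, aux_v_pow, hπ]
  refine lt_of_lt_of_le ?_ (le_add_of_nonneg_left (hc i))
  have : (i : ℕ) ≠ 0 := fun h => (Finset.ne_of_mem_erase hi) (Fin.ext h)
  have h1 : (0 : ℤ) < (i : ℕ) := by omega
  rw [nsmul_one]
  exact_mod_cast h1

lemma aux_ratio [FiniteDimensional K L] [CharP L p] (hp : p.Prime)
    (hdeg : Module.finrank K L = p)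
    (htot : ∀ x : K, wL.v (algebraMap K L x) = p • wK.v x)
    (τ : L ≃ₐ[K] L) {x : L} (hx0 : x ≠ 0) : 0 < wL.v (τ x / x - 1) := by
  haveI := Fact.mk hp
  obtain ⟨n, hn⟩ := aux_exists_coe wL hx0
  obtain ⟨a, ha⟩ := wK.surjective (-n)
  have ha0 : algebraMap K L a ≠ 0 := by
    intro h
    rw [map_eq_zero] at h
    rw [h, v_zero] at ha
    exact WithTop.coe_ne_top ha.symm
  set y := algebraMap K L a * x ^ p with hy
  have h1 : wL.v y = 0 := by
    rw [hy, wL.map_mul, htot, ha, aux_v_pow, hn, aux_nsmul_coe, aux_nsmul_coe, ← WithTop.coe_add]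
    rw [show ((p : ℤ) * -n + p * n) = 0 by ring]; rfl
  have hy0 : y ≠ 0 := mul_ne_zero ha0 (pow_ne_zero _ hx0)
  obtain ⟨b, hb⟩ := aux_residue wK wL hdeg htot h1.ge
  have hb' := aux_gal wK wL hdeg htot τ (y - algebraMap K L b)
  rw [map_sub, AlgEquiv.commutes] at hb'
  have h2 : 0 < wL.v (τ y - y) := by
    have h3 : τ y - y = (τ y - algebraMap K L b) + -(y - algebraMap K L b) := by ring
    rw [h3]
    refine (auxVal wL).map_lt_add ?_ ?_
    · rw [auxVal_apply, hb']; exact hb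
    · rw [auxVal_apply, v_neg]; exact hb
  have h4 : (τ x / x - 1) ^ p = (τ y - y) * y⁻¹ := by
    rw [sub_pow_char, one_pow, hy, _root_.map_mul, AlgEquiv.commutes, map_pow, div_pow]
    field_simp
  have h5 : 0 < wL.v ((τ x / x - 1) ^ p) := by
    rw [h4, wL.map_mul, aux_v_inv wL hy0 (n := 0) h1]
    simpa using h2
  rw [aux_v_pow] at h5
  by_contra hneg
  exact absurd h5 (not_lt.2 (nsmul_nonpos (not_lt.1 hneg) p))

end Ext

/-- Let `L/K` be a totally ramified Galois extension of degree `p` of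
complete discrete valued fields of characteristic `p` and let `σ` generate `Gal(L/K)`.
Let `G ∈ ℤ[X₁, …, X_p]` be the integral polynomial with
`p G = (Σ Xᵢ)^p - Σ Xᵢ^p`, and set `F(x) = G(x, σ(x), …, σ^{p-1}(x))`.  Then for every
nonzero `x ∈ O_L`, `F(x)` lies in `K` and `v_K(F(x)) = v_L(x)`. -/
theorem valuation_of_F
    (p : ℕ) (hp : p.Prime)
    {K L : Type*} [Field K] [Field L] [Algebra K L] [CharP K p]
    (wK : CompleteDiscreteValuation K) (wL : CompleteDiscreteValuation L)
    [IsGalois K L] [FiniteDimensional K L] (hdeg : Module.finrank K L = p)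
    (htot : ∀ x : K, wL.v (algebraMap K L x) = p • wK.v x)
    (σ : L ≃ₐ[K] L) (hσ : ∀ τ : L ≃ₐ[K] L, τ ∈ Subgroup.zpowers σ)
    (G : MvPolynomial (Fin p) ℤ)
    (hG : (p : MvPolynomial (Fin p) ℤ) * G =
      (∑ i : Fin p, MvPolynomial.X i) ^ p - ∑ i : Fin p, MvPolynomial.X i ^ p) :
    ∀ x : L, x ∈ wL.integers → x ≠ 0 →
      ∃ y : K,
        algebraMap K L y = MvPolynomial.aeval (fun i : Fin p => (σ ^ (i : ℕ)) x) G ∧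
        wK.v y = wL.v x := by
  intro x _ hx0
  haveI := Fact.mk hp
  haveI : NeZero p := ⟨hp.ne_zero⟩
  haveI : CharP L p := charP_of_injective_algebraMap (algebraMap K L).injective p
  have hσp : σ ^ p = 1 := by
    have h := pow_card_eq_one' (G := L ≃ₐ[K] L) (x := σ)
    rwa [IsGalois.card_aut_eq_finrank, hdeg] at h
  set f : Fin p → L := fun i => (σ ^ (i : ℕ)) x with hf
  have hfix : σ (MvPolynomial.aeval f G) = MvPolynomial.aeval f G := by
    have h1 : σ (MvPolynomial.aeval f G) = MvPolynomial.aeval (fun i => σ (f i)) G := by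
      have := MvPolynomial.comp_aeval_apply (R := ℤ) f
        ((σ : L →ₐ[K] L).restrictScalars ℤ) G
      simpa using this
    rw [h1, ← aux_symm G hp hG f (Equiv.addRight (1 : Fin p))]
    congr 2
    ext i
    simp only [hf, Equiv.coe_addRight]
    have h2 : ((i + 1 : Fin p) : ℕ) = ((i : ℕ) + 1) % p := by
      rw [Fin.val_add, Fin.val_one', Nat.add_mod_mod]
    rw [h2, ← pow_eq_pow_mod _ hσp, pow_succ']
    rfl
  have hfixall : ∀ τ : L ≃ₐ[K] L, τ (MvPolynomial.aeval f G) = MvPolynomial.aeval f G := by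
    intro τ
    have hle : Subgroup.zpowers σ ≤ MulAction.stabilizer (L ≃ₐ[K] L) (MvPolynomial.aeval f G) := by
      rw [Subgroup.zpowers_le]
      exact hfix
    exact hle (hσ τ)
  obtain ⟨y, hy⟩ := (IsGalois.mem_range_algebraMap_iff_fixed (F := K) (MvPolynomial.aeval f G)).2 hfixall
  refine ⟨y, hy, ?_⟩
  have hr := fun i : Fin p => aux_ratio wK wL hp hdeg htot (σ ^ (i : ℕ)) hx0
  let u : Fin p → wL.integers := fun i => ⟨f i / x - 1, (hr i).le⟩ 
  have hF : MvPolynomial.aeval f G =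
      x ^ p * ((MvPolynomial.aeval (fun i => u i + 1) G : wL.integers) : L) := by
    have h1 : ((MvPolynomial.aeval (fun i => u i + 1) G : wL.integers) : L) =
        MvPolynomial.aeval (fun i => f i / x) G := by
      have := MvPolynomial.comp_aeval_apply (R := ℤ) (fun i => u i + 1)
        (wL.integers.subtype.toIntAlgHom) G
      refine Eq.trans this ?_
      congr 2
      ext i
      simp [u]
    rw [h1, ← aux_scale G hp hG]
    congr 2
    ext i
    field_simp
  have hunit : wL.v ((MvPolynomial.aeval (fun i => u i + 1) G : wL.integers) : L) = 0 := by
    haveI : CharP wL.integers p :=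
      (RingHom.charP wL.integers.subtype Subtype.val_injective p)
    have h1 : Ideal.Quotient.mk wL.maxIdeal (MvPolynomial.aeval (fun i => u i + 1) G) =
        Ideal.Quotient.mk wL.maxIdeal (-1) := by
      rw [← aux_one G hp hG (R := wL.integers)]
      have h2 := MvPolynomial.comp_aeval_apply (R := ℤ) (fun i => u i + 1)
        ((Ideal.Quotient.mk wL.maxIdeal).toIntAlgHom) G
      have h3 := MvPolynomial.comp_aeval_apply (R := ℤ) (fun _ : Fin p => (1 : wL.integers))
        ((Ideal.Quotient.mk wL.maxIdeal).toIntAlgHom) G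
      refine h2.trans (Eq.trans ?_ h3.symm)
      congr 2
      ext i
      have : Ideal.Quotient.mk wL.maxIdeal (u i) = 0 :=
        Ideal.Quotient.eq_zero_iff_mem.2 (hr i)
      simp [this]
    rw [Ideal.Quotient.eq] at h1
    have h2 : wL.v (-1) <
        wL.v (((MvPolynomial.aeval (fun i => u i + 1) G : wL.integers) : L) - (-1)) := by
      rw [v_neg_one]; exact h1
    exact ((auxVal wL).map_eq_of_lt_sub h2).trans wL.v_neg_one
  have hv := htot y
  rw [hy, hF, wL.map_mul, hunit, add_zero, aux_v_pow] at hv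
  obtain ⟨n, hn⟩ := aux_exists_coe wL hx0
  have hp' : (p : ℤ) ≠ 0 := by exact_mod_cast hp.ne_zero
  have hy0 : y ≠ 0 := by
    rintro rfl
    rw [← htot, map_zero, v_zero, hn, aux_nsmul_coe] at hv
    exact WithTop.coe_ne_top hv
  obtain ⟨m, hm⟩ := aux_exists_coe wK hy0
  rw [hn, hm, aux_nsmul_coe, aux_nsmul_coe] at hv
  have hv' : (p : ℤ) * n = p * m := by exact_mod_cast hv
  rw [hn, hm, mul_left_cancel₀ hp' hv']
end
end

section
/- Let L/K be a totally ramified Galois extension of degree p of complete discrete valued fields of characteristic p, with ramification break s ≥ 1. Then for every integer n ≥ 2 such that (s(p−1)/p)·(1 + 1/p + ⋯ + 1/p^{n−3}) > s − 1, every Witt vector (x_0, …, x_{n−1}) ∈ W_n(O_L) of trace zero satisfies v_L(x_0) ≥ s. -/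
/-!
Common background: complete discretely valued fields, their valuation rings,
residue fields, Galois action on the valuation ring, truncated Witt vector
functoriality, and ramification breaks.
-/

noncomputable section

open scoped Classical

namespace WTZ
open MvPolynomial

lemma teich_mul_coeff {p : ℕ} [Fact p.Prime] {R : Type*} [CommRing R] [CharP R p] (k : ℕ) :
    ∀ (T : R) (x : WittVector p R),
    (WittVector.teichmuller p T * x).coeff k = T ^ (p ^ k) * x.coeff k := by
  induction k with
  | zero => intro T x; simp [WittVector.mul_coeff_zero]
  | succ k ih =>
    intro T x
    set y : WittVector p R := WittVector.mk p (fun i => x.coeff (i+1)) with hy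
    have hdis : ∀ (a : R) (b : WittVector p R) (n : ℕ),
        (WittVector.teichmuller p a).coeff n = 0 ∨ (WittVector.verschiebung b).coeff n = 0 := by
      intro a b n
      rcases n with _ | n
      · right; simp
      · left; simp
    have hx : x = WittVector.teichmuller p (x.coeff 0) + WittVector.verschiebung y := by
      ext n
      rw [WittVector.coeff_add_of_disjoint n _ _ (hdis _ _)]
      rcases n with _ | n
      · simp
      · simp [hy]
    have hF : WittVector.frobenius (WittVector.teichmuller p T) = WittVector.teichmuller p (T ^ p) := by
      ext n
      rw [WittVector.coeff_frobenius_charP]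
      rcases n with _ | n
      · rw [WittVector.teichmuller_coeff_zero, WittVector.teichmuller_coeff_zero]
      · rw [WittVector.teichmuller_coeff_pos (p := p) _ (n+1) (Nat.succ_pos n),
          WittVector.teichmuller_coeff_pos (p := p) _ (n+1) (Nat.succ_pos n),
          zero_pow (Fact.out : p.Prime).ne_zero]
    have hm : WittVector.teichmuller p T * x = WittVector.teichmuller p (T * x.coeff 0) +
        WittVector.verschiebung (WittVector.teichmuller p (T ^ p) * y) := by
      conv_lhs => rw [hx]
      rw [mul_add, ← map_mul, ← hF, mul_comm (WittVector.frobenius _) y,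
        WittVector.verschiebung_mul_frobenius, mul_comm (WittVector.verschiebung y)]
    rw [hm, WittVector.coeff_add_of_disjoint _ _ _ (hdis _ _)]
    simp only [WittVector.teichmuller_coeff_pos (p := p) _ (k+1) (Nat.succ_pos k), zero_add,
      WittVector.verschiebung_coeff_succ, ih]
    rw [hy, ← pow_mul, pow_succ', WittVector.coeff_mk]

variable (p : ℕ) [Fact p.Prime]

/-- universal polynomial giving the coefficients of the trace -/
def sumPoly (G : Type*) [Fintype G] (k : ℕ) : MvPolynomial (G × ℕ) (ZMod p) :=
  (∑ g : G, WittVector.mk p (fun j => (X (g, j) : MvPolynomial (G × ℕ) (ZMod p)))).coeff k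

lemma map_sumPoly {G : Type*} [Fintype G] {R : Type*} [CommRing R]
    (f : MvPolynomial (G × ℕ) (ZMod p) →+* R) (k : ℕ) :
    f (sumPoly p G k) = (∑ g : G, WittVector.mk p (fun j => f (X (g, j)))).coeff k := by
  rw [sumPoly, ← WittVector.map_coeff, map_sum]
  congr 1

/-- weight of a monomial -/
def wt {G : Type*} (m : G × ℕ →₀ ℕ) : ℕ := m.sum fun i e => p ^ i.2 * e

lemma wt_of_mem {G : Type*} [Fintype G] (k : ℕ) (m : G × ℕ →₀ ℕ)
    (hm : m ∈ (sumPoly p G k).support) : wt p m = p ^ k := by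
  let f : MvPolynomial (G × ℕ) (ZMod p) →+* Polynomial (MvPolynomial (G × ℕ) (ZMod p)) :=
    MvPolynomial.eval₂Hom ((Polynomial.C : MvPolynomial (G × ℕ) (ZMod p) →+* _).comp MvPolynomial.C)
      (fun i => Polynomial.X ^ (p ^ i.2) * Polynomial.C (X i))
  have h1 : f (sumPoly p G k) = Polynomial.X ^ (p ^ k) * Polynomial.C (sumPoly p G k) := by
    have e1 := map_sumPoly p f k
    have e2 := map_sumPoly p (Polynomial.C : MvPolynomial (G × ℕ) (ZMod p) →+* _) (G := G) k
    rw [e1, e2, ← teich_mul_coeff, Finset.mul_sum]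
    congr 1
    refine Finset.sum_congr rfl fun g _ => ?_
    ext j
    rw [teich_mul_coeff]
    simp [f]
  have h2 : ∀ (m : G × ℕ →₀ ℕ) (c : ZMod p), f (monomial m c) =
      Polynomial.C (monomial m c) * Polynomial.X ^ (wt p m) := by
    intro m c
    simp only [f]
    rw [MvPolynomial.eval₂Hom_monomial, MvPolynomial.monomial_eq]
    simp only [mul_pow, Finset.prod_mul_distrib, RingHom.comp_apply, map_mul, wt, Finsupp.prod,
      Finsupp.sum, map_prod, map_pow, ← pow_mul, Finset.prod_pow_eq_pow_sum]
    ring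
  have h3 : ∀ P : MvPolynomial (G × ℕ) (ZMod p), ∀ m : G × ℕ →₀ ℕ, ((f P).coeff (wt p m)).coeff m = P.coeff m := by
    intro P m
    conv_lhs => rw [P.as_sum, map_sum]
    simp only [h2, Polynomial.finsetSum_coeff, Polynomial.coeff_C_mul, Polynomial.coeff_X_pow,
      MvPolynomial.coeff_sum, mul_ite, mul_one, mul_zero]
    rw [Finset.sum_eq_single m]
    · simp
    · intro b _ hb
      split_ifs <;> simp [MvPolynomial.coeff_monomial, hb]
    · intro hm; simp [MvPolynomial.notMem_support_iff.1 hm]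
  by_contra hne
  have := h3 (sumPoly p G k) m
  rw [h1, Polynomial.coeff_X_pow_mul', ] at this
  rw [MvPolynomial.mem_support_iff, ← this] at hm
  apply hm
  split_ifs with h
  · rw [Polynomial.coeff_C, if_neg (by omega)]; simp
  · simp

lemma exists_rep {G M : Type*} [Group G] [MulAction G M] (hG : (Nat.card G).Prime) :
    ∃ r : M → Prop, ∀ m, (∃ g : G, g • m ≠ m) → ∃! g : G, r (g • m) := by
  have : Fact (Nat.card G).Prime := ⟨hG⟩
  refine ⟨fun x => (Quotient.out (Quotient.mk (MulAction.orbitRel G M) x)) = x, ?_⟩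
  rintro m ⟨g0, hg0⟩
  have hstab : MulAction.stabilizer G m = ⊥ := by
    rcases (MulAction.stabilizer G m).eq_bot_or_eq_top_of_prime_card with h | h
    · exact h
    · exact absurd (by have : g0 ∈ MulAction.stabilizer G m := by rw [h]; trivial
                       exact this) hg0
  have hq : ∀ g : G, Quotient.mk (MulAction.orbitRel G M) (g • m) = Quotient.mk (MulAction.orbitRel G M) m :=
    fun g => Quotient.sound ⟨g, rfl⟩
  obtain ⟨g, hg⟩ : ∃ g : G, g • m = Quotient.out (Quotient.mk (MulAction.orbitRel G M) m) :=
    Quotient.mk_out (s := MulAction.orbitRel G M) m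
  refine ⟨g, ?_, ?_⟩
  · simp only [hg]; exact congrArg Quotient.out (Quotient.out_eq _)
  · intro g' hg'
    simp only [hq, ← hg] at hg'
    have : g'⁻¹ * g ∈ MulAction.stabilizer G m := by
      rw [MulAction.mem_stabilizer_iff, mul_smul, hg', inv_smul_smul]
    rw [hstab, Subgroup.mem_bot] at this
    exact (inv_mul_eq_one.1 this)

/-- translation of the index set -/
def act {G : Type*} [Group G] (g : G) : G × ℕ ≃ G × ℕ := (Equiv.mulLeft g).prodCongr (Equiv.refl ℕ)

lemma act_apply {G : Type*} [Group G] (g : G) (i : G × ℕ) : act g i = (g * i.1, i.2) := rfl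

/-- action on monomials -/
@[reducible] def monAct (G : Type*) [Group G] : MulAction G (G × ℕ →₀ ℕ) where
  smul g m := Finsupp.mapDomain (act g) m
  one_smul m := by
    show Finsupp.mapDomain (act 1) m = m
    conv_rhs => rw [← Finsupp.mapDomain_id (v := m)]
    congr 1
    ext i <;> simp [act_apply]
  mul_smul g h m := by
    show Finsupp.mapDomain (act _) m = Finsupp.mapDomain (act _) (Finsupp.mapDomain (act _) m)
    rw [← Finsupp.mapDomain_comp]
    congr 1
    ext i <;> simp [act_apply, mul_assoc]

lemma rename_sumPoly {G : Type*} [Group G] [Fintype G] (g : G) (k : ℕ) :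
    rename (act g) (sumPoly p G k) = sumPoly p G k := by
  have := map_sumPoly p (rename (R := ZMod p) (act g)).toRingHom k
  simp only [AlgHom.toRingHom_eq_coe, RingHom.coe_coe, rename_X, act_apply] at this
  rw [this, sumPoly]
  congr 1
  exact Equiv.sum_comp (Equiv.mulLeft g) (fun h => WittVector.mk p fun j => (X (h, j) : MvPolynomial (G × ℕ) (ZMod p)))

/-- the decomposition of an invariant polynomial -/
lemma decomp {G : Type*} [Group G] [Fintype G] (hG : (Nat.card G).Prime)
    (P : MvPolynomial (G × ℕ) (ZMod p)) (hP : ∀ g : G, rename (act g) P = P) :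
    ∃ Z F : MvPolynomial (G × ℕ) (ZMod p), P = F + ∑ g : G, rename (act g) Z ∧
      Z.support ⊆ P.support ∧
      ∀ m ∈ F.support, ∀ g : G, Finsupp.mapDomain (act g) m = m := by
  letI := monAct G
  obtain ⟨r, hr⟩ := exists_rep (G := G) (M := G × ℕ →₀ ℕ) hG
  have hsm : ∀ (g : G) (m : G × ℕ →₀ ℕ), g • m = Finsupp.mapDomain (act g) m := fun _ _ => rfl
  let Z : MvPolynomial (G × ℕ) (ZMod p) :=
    ∑ m ∈ P.support.filter (fun m => r m ∧ ∃ g : G, g • m ≠ m), monomial m (P.coeff m)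
  have hZ : ∀ m, Z.coeff m = if r m ∧ ∃ g : G, g • m ≠ m then P.coeff m else 0 := by
    intro m
    simp only [Z, coeff_sum, coeff_monomial, Finset.sum_ite_eq', Finset.mem_filter, mem_support_iff]
    by_cases h : P.coeff m = 0 <;> simp [h]
  have hcr : ∀ (g : G) (Q : MvPolynomial (G × ℕ) (ZMod p)) (m : G × ℕ →₀ ℕ),
      coeff m (rename (act g) Q) = coeff (g⁻¹ • m) Q := by
    intro g Q m
    conv_lhs => rw [← smul_inv_smul g m]
    rw [hsm, coeff_rename_mapDomain _ (act g).injective]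
  have hPc : ∀ (g : G) m, coeff (g • m) P = coeff m P := by
    intro g m
    conv_rhs => rw [← hP g⁻¹, hcr, inv_inv]
  refine ⟨Z, P - ∑ g : G, rename (act g) Z, by ring, ?_, ?_⟩
  · intro m hm
    rw [mem_support_iff, hZ] at hm
    rw [mem_support_iff]
    split_ifs at hm with h
    · exact hm
    · exact absurd rfl hm
  · intro m hm
    by_contra! hne
    obtain ⟨g0, hg0⟩ := hne
    have hnf : ∃ g : G, g • m ≠ m := ⟨g0, hg0⟩
    rw [mem_support_iff] at hm
    apply hm
    rw [coeff_sub, coeff_sum]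
    obtain ⟨g1, hg1, huniq⟩ := hr m hnf
    simp only [hcr]
    rw [Finset.sum_eq_single g1⁻¹]
    · rw [inv_inv, hZ, if_pos, hPc, sub_self]
      refine ⟨hg1, g1 * g0 * g1⁻¹, ?_⟩
      intro h
      rw [mul_smul, mul_smul, inv_smul_smul] at h
      exact hg0 (smul_left_cancel _ h)
    · intro g _ hg
      rw [hZ, if_neg]
      rintro ⟨h, -⟩
      exact hg (by rw [← huniq _ h, inv_inv])
    · intro h; exact absurd (Finset.mem_univ _) h

lemma sumPoly_succ {G : Type*} [Group G] [Fintype G] (hG : Nat.card G = p) (k : ℕ) :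
    ∃ Z : MvPolynomial (G × ℕ) (ZMod p),
      sumPoly p G (k+1) = ∏ g : G, X (g, k) + ∑ g : G, rename (act g) Z ∧
      ∀ m ∈ Z.support, wt p m = p ^ (k+1) := by
  have hp : p.Prime := Fact.out
  obtain ⟨Z, F, hPF, hsup, hfix⟩ := decomp p (hG ▸ hp) (sumPoly p G (k+1))
    (fun g => rename_sumPoly p g _)
  refine ⟨Z, ?_, fun m hm => wt_of_mem p _ _ (hsup hm)⟩
  suffices F = ∏ g : G, X (g, k) by rw [← this]; exact hPF
  -- diagonal
  have hΔ : rename (Prod.snd : G × ℕ → ℕ) F = rename (Prod.snd : G × ℕ → ℕ) (∏ g : G, X (g, k)) := by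
    have h1 : rename (Prod.snd : G × ℕ → ℕ) (sumPoly p G (k+1)) =
        (X k : MvPolynomial ℕ (ZMod p)) ^ p := by
      have := map_sumPoly p (rename (R := ZMod p) (Prod.snd : G × ℕ → ℕ)).toRingHom (k+1)
      simp only [AlgHom.toRingHom_eq_coe, RingHom.coe_coe, rename_X] at this
      rw [this]
      simp only [Finset.sum_const, Finset.card_univ, ← Nat.card_eq_fintype_card, hG, nsmul_eq_mul]
      rw [mul_comm, WittVector.mul_charP_coeff_succ, WittVector.coeff_mk]
    have h2 : rename (Prod.snd : G × ℕ → ℕ) (∑ g : G, rename (act g) Z) = 0 := by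
      have : ∀ g : G, (Prod.snd : G × ℕ → ℕ) ∘ (act g) = Prod.snd := fun g => rfl
      simp only [map_sum, rename_rename, this]
      simp only [Finset.sum_const, Finset.card_univ, ← Nat.card_eq_fintype_card, hG, nsmul_eq_mul]
      simp
    rw [hPF, map_add, h2, add_zero] at h1
    rw [h1, map_prod]
    simp [← Nat.card_eq_fintype_card, hG]
  let S : Set (G × ℕ →₀ ℕ) := {m | ∀ (g h : G) (j : ℕ), m (g, j) = m (h, j)}
  have hS : Set.InjOn (Finsupp.mapDomain (Prod.snd : G × ℕ → ℕ)) S := by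
    have key : ∀ m ∈ S, ∀ j, (Finsupp.mapDomain (Prod.snd : G × ℕ → ℕ) m) j = p * m (1, j) := by
      intro m hm j
      have h0 : ∀ m : G × ℕ →₀ ℕ,
          (Finsupp.mapDomain (Prod.snd : G × ℕ → ℕ) m) j = ∑ g : G, m (g, j) := by
        intro m
        induction m using Finsupp.induction_linear with
        | zero => simp
        | add a b ha hb => simp [Finsupp.mapDomain_add, ha, hb, Finset.sum_add_distrib]
        | single i e =>
          obtain ⟨g, i⟩ := i
          simp [Finsupp.single_apply, Prod.ext_iff, ite_and]
      rw [h0, Finset.sum_congr rfl (fun g _ => hm g 1 j)]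
      simp [← Nat.card_eq_fintype_card, hG]
    intro m hm m' hm' h
    ext ⟨g, j⟩
    have := key m hm j
    rw [h, key m' hm' j] at this
    rw [hm g 1, hm' g 1]
    exact (Nat.eq_of_mul_eq_mul_left hp.pos this).symm
  have hFS : ∀ m ∈ F.support, m ∈ S := by
    intro m hm g h j
    have := hfix m hm (h * g⁻¹)
    have e : (h, j) = act (h * g⁻¹) (g, j) := by simp [act_apply]
    conv_rhs => rw [← this, e, Finsupp.mapDomain_apply (act _).injective]
  have hN : (∏ g : G, X (g, k) : MvPolynomial (G × ℕ) (ZMod p)) =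
      monomial (∑ g : G, Finsupp.single (g, k) 1) 1 := by
    rw [monomial_sum_one]; rfl
  have hNS : ∀ m ∈ (∏ g : G, X (g, k) : MvPolynomial (G × ℕ) (ZMod p)).support, m ∈ S := by
    intro m hm
    rw [hN] at hm
    have := Finset.mem_singleton.1 (support_monomial_subset hm)
    intro g h j
    subst this
    simp [Finsupp.single_apply, Finset.sum_ite_eq, Prod.ext_iff, ite_and]
  have hD : ∀ m ∈ (F - ∏ g : G, X (g, k)).support, m ∈ S := by
    intro m hm
    rcases Finset.mem_union.1 (support_sub _ _ _ hm) with h | h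
    · exact hFS m h
    · exact hNS m h
  have hΔD : rename (Prod.snd : G × ℕ → ℕ) (F - ∏ g : G, X (g, k)) = 0 := by
    rw [map_sub, hΔ, sub_self]
  rw [← sub_eq_zero]
  generalize F - ∏ g : G, X (g, k) = D at hD hΔD
  ext m
  by_contra hm
  have hms : m ∈ D.support := mem_support_iff.2 hm
  apply hm
  rw [coeff_zero, ← coeff_zero (R := ZMod p) (Finsupp.mapDomain (Prod.snd : G × ℕ → ℕ) m), ← hΔD]
  conv_rhs => rw [D.as_sum]
  rw [map_sum, coeff_sum, Finset.sum_eq_single m]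
  · simp [rename_monomial]
  · intro b hb hbm
    rw [rename_monomial, coeff_monomial, if_neg]
    intro h
    exact hbm (hS (hD b hb) (hD m hms) h)
  · intro h; exact absurd hms h
end WTZ

namespace WTZ

section val
variable {L : Type*} [Field L] (w : CompleteDiscreteValuation L)

lemma v_sum_ge {ι : Type*} (S : Finset ι) (f : ι → L) (b : WithTop ℤ)
    (h : ∀ i ∈ S, b ≤ w.v (f i)) : b ≤ w.v (∑ i ∈ S, f i) := by
  induction S using Finset.induction_on with
  | empty => simp [w.v_zero]
  | insert a S ha ih =>
    rw [Finset.sum_insert ha]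
    exact le_trans (le_min (h a (by simp)) (ih fun i hi => h i (by simp [hi]))) (w.min_le_add _ _)

lemma v_pow (x : L) (n : ℕ) : w.v (x ^ n) = n • w.v x := by
  induction n with
  | zero => simp [w.map_one]
  | succ n ih => rw [pow_succ, w.map_mul, ih, succ_nsmul]

lemma v_prod {ι : Type*} (S : Finset ι) (f : ι → L) :
    w.v (∏ i ∈ S, f i) = ∑ i ∈ S, w.v (f i) := by
  induction S using Finset.induction_on with
  | empty => simp [w.map_one]
  | insert a S ha ih => rw [Finset.prod_insert ha, Finset.sum_insert ha, w.map_mul, ih]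

lemma v_sub_ge (x y : L) : min (w.v x) (w.v y) ≤ w.v (x - y) := by
  rw [sub_eq_add_neg, ← w.v_neg y]; exact w.min_le_add _ _

lemma v_add_eq_of_lt {x y : L} (h : w.v x < w.v y) : w.v (x + y) = w.v x := by
  apply le_antisymm
  · by_contra! hlt
    have := v_sub_ge w (x + y) y
    rw [add_sub_cancel_right] at this
    exact absurd (lt_of_lt_of_le (lt_min hlt h) this) (lt_irrefl _)
  · exact le_trans (le_min le_rfl h.le) (w.min_le_add _ _)

lemma v_add_eq {x y : L} (h : w.v x = w.v y → w.v x = ⊤) : w.v (x + y) = min (w.v x) (w.v y) := by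
  rcases lt_trichotomy (w.v x) (w.v y) with hlt | heq | hlt
  · rw [v_add_eq_of_lt w hlt, min_eq_left hlt.le]
  · have h1 := h heq
    have h2 := heq ▸ h1
    rw [(w.eq_top_iff _).1 h1, (w.eq_top_iff _).1 h2]; simp
  · rw [add_comm, v_add_eq_of_lt w hlt, min_eq_right hlt.le]

lemma v_sum_eq {ι : Type*} (S : Finset ι) (f : ι → L)
    (h : ∀ i ∈ S, ∀ j ∈ S, i ≠ j → w.v (f i) = w.v (f j) → w.v (f i) = ⊤) :
    w.v (∑ i ∈ S, f i) = S.inf (fun i => w.v (f i)) := by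
  induction S using Finset.induction_on with
  | empty => simp [w.v_zero]
  | insert a S ha ih =>
    have ih' := ih fun i hi j hj => h i (by simp [hi]) j (by simp [hj])
    rw [Finset.sum_insert ha, Finset.inf_insert, ← ih']
    apply v_add_eq
    intro heq
    rcases S.eq_empty_or_nonempty with rfl | hne
    · simpa [w.v_zero] using heq
    · obtain ⟨i, hi, hi'⟩ := Finset.exists_mem_eq_inf S hne (fun i => w.v (f i))
      rw [ih', hi'] at heq
      exact h a (by simp) i (by simp [hi]) (fun e => ha (e ▸ hi)) heq

lemma v_natCast_nonneg (n : ℕ) : 0 ≤ w.v (n : L) := natCast_mem w.integers n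

lemma v_natCast_eq {p : ℕ} [hp : Fact p.Prime] [CharP L p] {i : ℕ} (h0 : 0 < i) (hi : i < p) :
    w.v (i : L) = 0 := by
  have h1 : ((i : ZMod p)) ≠ 0 := by
    rw [Ne, ZMod.natCast_eq_zero_iff]
    exact Nat.not_dvd_of_pos_of_lt h0 hi
  have h2 := mul_inv_cancel₀ h1
  have h3 := congrArg (ZMod.castHom (dvd_refl p) L) h2
  rw [map_mul, map_one, map_natCast] at h3
  have h4 : (ZMod.castHom (dvd_refl p) L) ((i : ZMod p)⁻¹) = (((i : ZMod p)⁻¹).val : L) := by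
    conv_lhs => rw [← ZMod.natCast_zmod_val ((i : ZMod p)⁻¹)]
    rw [map_natCast]
  rw [h4] at h3
  have h5 := congrArg w.v h3
  rw [w.map_mul, w.map_one] at h5
  apply le_antisymm _ (v_natCast_nonneg w i)
  rw [← h5]
  exact le_add_of_nonneg_right (v_natCast_nonneg w _)

lemma one_add_pow_expand (e : L) (he : 0 ≤ w.v e) (i : ℕ) :
    ∃ r : L, 0 ≤ w.v r ∧ (1 + e) ^ i = 1 + i * e + e * e * r := by
  induction i with
  | zero => exact ⟨0, by simp [w.v_zero], by simp⟩
  | succ i ih =>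
    obtain ⟨r, hr, h⟩ := ih
    refine ⟨i + r + e * r, ?_, by rw [pow_succ, h]; push_cast; ring⟩
    exact w.integers.add_mem (w.integers.add_mem (v_natCast_nonneg w i) hr)
      (w.integers.mul_mem he hr)

end val

section ext
variable {p : ℕ} [hp : Fact p.Prime] {K L : Type*} [Field K] [Field L] [Algebra K L]
    (wK : CompleteDiscreteValuation K) (wL : CompleteDiscreteValuation L)

lemma nsmul_coe (p : ℕ) (a : ℤ) : p • ((a : ℤ) : WithTop ℤ) = (((p : ℤ) * a : ℤ) : WithTop ℤ) := by
  rw [← WithTop.coe_nsmul]; simp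

lemma nsmul_top' {p : ℕ} (hp : p ≠ 0) : p • (⊤ : WithTop ℤ) = ⊤ := by
  obtain ⟨q, rfl⟩ := Nat.exists_eq_succ_of_ne_zero hp
  rw [succ_nsmul, WithTop.add_top]

lemma top_cases (x : WithTop ℤ) : x = ⊤ ∨ ∃ a : ℤ, x = (a : WithTop ℤ) := by
  induction x using WithTop.recTopCoe with
  | top => left; rfl
  | coe a => right; exact ⟨a, rfl⟩

lemma v_cases {K : Type*} [Field K] (wK : CompleteDiscreteValuation K) (c : K) :
    c = 0 ∨ ∃ a : ℤ, wK.v c = (a : WithTop ℤ) := by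
  rcases top_cases (wK.v c) with h | h
  · left; exact (wK.eq_top_iff c).1 h
  · right; exact h

lemma v_sum_mod (S : Finset (Fin p)) (f : Fin p → L) (c : Fin p → K) (e : ℤ)
    (h : ∀ i ∈ S, wL.v (f i) = p • wK.v (c i) + (((i : ℕ) + e : ℤ) : WithTop ℤ)) :
    wL.v (∑ i ∈ S, f i) = S.inf (fun i => wL.v (f i)) := by
  apply v_sum_eq
  intro i hi j hj hij heq
  rw [h i hi] at heq ⊢
  rw [h j hj] at heq
  have hpp : p ≠ 0 := hp.out.ne_zero
  rcases v_cases wK (c i) with h1 | ⟨a, h1⟩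
  · rw [h1, wK.v_zero, nsmul_top' hpp, WithTop.top_add]
  · exfalso
    rcases v_cases wK (c j) with h2 | ⟨b, h2⟩
    · rw [h1, h2, wK.v_zero, nsmul_coe] at heq
      have : p • (⊤ : WithTop ℤ) = ⊤ := nsmul_top' hpp
      rw [this, WithTop.top_add, ← WithTop.coe_add] at heq
      exact WithTop.coe_ne_top heq
    · rw [h1, h2, nsmul_coe, nsmul_coe, ← WithTop.coe_add, ← WithTop.coe_add, WithTop.coe_eq_coe] at heq
      have hi' := i.2
      have hj' := j.2
      apply hij
      ext
      have e1 : ((i : ℕ) : ℤ) = (i : ℕ) + p * a - p * a := by ring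
      have hm : ((i : ℕ) : ℤ) % p = ((j : ℕ) : ℤ) % p := by
        have : ((i : ℕ) : ℤ) = (j : ℕ) + p * (b - a) := by linarith
        rw [this, Int.add_mul_emod_self_left]
      rw [Int.emod_eq_of_lt (by omega) (by omega), Int.emod_eq_of_lt (by omega) (by omega)] at hm
      exact_mod_cast hm

/-- expansion in powers of a uniformizer -/
lemma exists_expansion [FiniteDimensional K L] (hdeg : Module.finrank K L = p)
    (htot : ∀ x : K, wL.v (algebraMap K L x) = p • wK.v x) (π : L) (hπ : wL.v π = ((1 : ℤ) : WithTop ℤ)) :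
    (∀ (c : K) (i : ℕ), wL.v (algebraMap K L c * π ^ i) = p • wK.v c + ((i : ℤ) : WithTop ℤ)) ∧
    ∀ y : L, ∃ c : Fin p → K, y = ∑ i : Fin p, algebraMap K L (c i) * π ^ (i : ℕ) ∧
      ∀ i, wL.v y ≤ wL.v (algebraMap K L (c i) * π ^ (i : ℕ)) := by
  have hterm : ∀ (c : K) (i : ℕ),
      wL.v (algebraMap K L c * π ^ i) = p • wK.v c + ((i : ℤ) : WithTop ℤ) := by
    intro c i
    rw [wL.map_mul, htot, v_pow, hπ, nsmul_coe, mul_one]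
  have hinf : ∀ c : Fin p → K, wL.v (∑ i : Fin p, algebraMap K L (c i) * π ^ (i : ℕ)) =
      Finset.univ.inf (fun i : Fin p => wL.v (algebraMap K L (c i) * π ^ (i : ℕ))) := by
    intro c
    apply v_sum_mod wK wL _ _ c 0
    intro i _
    rw [hterm, add_zero]
  have hle : ∀ (c : Fin p → K) (i : Fin p), wL.v (∑ i : Fin p, algebraMap K L (c i) * π ^ (i : ℕ)) ≤
      wL.v (algebraMap K L (c i) * π ^ (i : ℕ)) := by
    intro c i
    rw [hinf]
    exact Finset.inf_le (f := fun i : Fin p => wL.v (algebraMap K L (c i) * π ^ (i : ℕ))) (Finset.mem_univ i)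
  have hπ0 : π ≠ 0 := by
    rintro rfl
    rw [wL.v_zero] at hπ
    exact WithTop.coe_ne_top hπ.symm
  have hli : LinearIndependent K (fun i : Fin p => π ^ (i : ℕ)) := by
    rw [Fintype.linearIndependent_iff]
    intro c hc i
    simp only [Algebra.smul_def] at hc
    have := hle c i
    rw [hc, wL.v_zero, top_le_iff, wL.eq_top_iff] at this
    simpa [hπ0] using this
  haveI : Nonempty (Fin p) := ⟨⟨0, hp.out.pos⟩⟩
  let b := basisOfLinearIndependentOfCardEqFinrank hli (by simp [hdeg])
  refine ⟨hterm, fun y => ⟨fun i => b.repr y i, ?_, ?_⟩⟩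
  · conv_lhs => rw [← b.sum_repr y]
    simp [b, Algebra.smul_def]
  · intro i
    have := hle (fun i => b.repr y i) i
    convert this using 2
    conv_lhs => rw [← b.sum_repr y]
    simp [b, Algebra.smul_def]

/-- the main ramification facts -/
lemma ram_facts [FiniteDimensional K L] [CharP L p] (hdeg : Module.finrank K L = p)
    (htot : ∀ x : K, wL.v (algebraMap K L x) = p • wK.v x)
    (hGal : ∀ (σ : L ≃ₐ[K] L) (x : L), wL.v (σ x) = wL.v x)
    (σ : L ≃ₐ[K] L) (hσ : σ ^ p = 1) (t : ℕ)
    (h1 : ∀ x : L, 0 ≤ wL.v x → (((t : ℤ) + 1 : ℤ) : WithTop ℤ) ≤ wL.v (σ x - x))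
    (h2 : ∃ x : L, 0 ≤ wL.v x ∧ wL.v (σ x - x) ≤ (((t : ℤ) + 1 : ℤ) : WithTop ℤ)) :
    (∀ y : L, wL.v y + ((t : ℤ) : WithTop ℤ) ≤ wL.v (σ y - y)) ∧
    (∀ y : L, wL.v (σ y - y) ≠ ((t : ℤ) : WithTop ℤ)) := by
  obtain ⟨π, hπ⟩ := wL.surjective 1
  obtain ⟨hterm, hexp⟩ := exists_expansion wK wL hdeg htot π hπ
  have hπ0 : π ≠ 0 := by
    rintro rfl
    rw [wL.v_zero] at hπ
    exact WithTop.coe_ne_top hπ.symm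
  set e : L := σ π / π - 1 with he
  have hσπ : σ π = π * (1 + e) := by rw [he]; field_simp; ring
  have hD : σ π - π = π * e := by rw [hσπ]; ring
  have hu : wL.v (1 + e) = 0 := by
    have := hGal σ π
    rw [hσπ, wL.map_mul, hπ] at this
    rcases top_cases (wL.v (1 + e)) with h | ⟨a, h⟩
    · rw [h, WithTop.add_top] at this
      exact absurd this.symm WithTop.coe_ne_top
    · rw [h] at this
      have h' : (1 : ℤ) + a = 1 := by exact_mod_cast this
      have : a = 0 := by omega
      rw [h, this]; rfl
  have hcancel : ∀ (x : L) (k : ℤ), ((k + 1 : ℤ) : WithTop ℤ) ≤ wL.v (π * x) →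
      (k : WithTop ℤ) ≤ wL.v x := by
    intro x k h
    rw [wL.map_mul, hπ] at h
    rcases top_cases (wL.v x) with h' | ⟨a, h'⟩
    · rw [h']; exact le_top
    · rw [h'] at h ⊢
      have : k + 1 ≤ 1 + a := by exact_mod_cast h
      have : k ≤ a := by omega
      exact WithTop.coe_le_coe.2 this
  have hlow : ((t : ℤ) : WithTop ℤ) ≤ wL.v e := by
    apply hcancel
    rw [← hD]
    exact h1 π (by rw [hπ]; exact_mod_cast zero_le_one)
  have he1 : ((1 : ℤ) : WithTop ℤ) ≤ wL.v e := by
    have hind : ∀ i : ℕ, ((2 : ℤ) : WithTop ℤ) ≤ wL.v ((σ ^ i) π - (1 + e) ^ i * π) := by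
      intro i
      induction i with
      | zero => simp [wL.v_zero]
      | succ i ih =>
        have heq : (σ ^ (i + 1)) π - (1 + e) ^ (i + 1) * π =
            σ ((σ ^ i) π - (1 + e) ^ i * π) + (σ ((1 + e) ^ i) - (1 + e) ^ i) * (π * (1 + e)) := by
          rw [pow_succ' σ, AlgEquiv.mul_apply, map_sub, map_mul, hσπ]; ring
        rw [heq]
        refine le_trans (le_min ?_ ?_) (wL.min_le_add _ _)
        · rw [hGal]; exact ih
        · rw [wL.map_mul, wL.map_mul, hu, hπ, add_zero]
          have h3 := h1 ((1 + e) ^ i) (by rw [v_pow, hu]; simp)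
          have h4 : ((1 : ℤ) : WithTop ℤ) ≤ wL.v (σ ((1 + e) ^ i) - (1 + e) ^ i) :=
            le_trans (WithTop.coe_le_coe.2 (by omega)) h3
          have := add_le_add h4 (le_refl ((1 : ℤ) : WithTop ℤ))
          rwa [← WithTop.coe_add] at this
    have h3 := hind p
    rw [hσ, AlgEquiv.one_apply] at h3
    have h4 : π - (1 + e) ^ p * π = π * (- e ^ p) := by
      rw [add_pow_char]; ring
    rw [h4] at h3
    have h5 := hcancel _ 1 h3
    rw [wL.v_neg, v_pow] at h5
    rcases v_cases wL e with h0 | ⟨a, ha⟩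
    · rw [h0, wL.v_zero]; exact le_top
    · rw [ha, nsmul_coe] at h5
      have h6 : (1 : ℤ) ≤ p * a := by exact_mod_cast h5
      rw [ha]
      have : (1 : ℤ) ≤ a := by
        by_contra! h
        have : (p : ℤ) * a ≤ 0 := mul_nonpos_of_nonneg_of_nonpos (by positivity) (by omega)
        omega
      exact WithTop.coe_le_coe.2 this
  have he0 : 0 ≤ wL.v e := le_trans (by exact_mod_cast zero_le_one) he1
  have hDterm : ∀ (c : K) (i : ℕ), σ (algebraMap K L c * π ^ i) - algebraMap K L c * π ^ i =
      algebraMap K L c * π ^ i * ((1 + e) ^ i - 1) := by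
    intro c i
    rw [map_mul, map_pow, hσπ, AlgEquiv.commutes]; ring
  have hpow_ge : ∀ i : ℕ, wL.v e ≤ wL.v ((1 + e) ^ i - 1) := by
    intro i
    obtain ⟨r, hr, hr'⟩ := one_add_pow_expand wL e he0 i
    rw [hr', show (1 : L) + i * e + e * e * r - 1 = e * (i + e * r) by ring, wL.map_mul]
    exact le_add_of_nonneg_right (wL.integers.add_mem (v_natCast_nonneg wL i)
      (wL.integers.mul_mem he0 hr))
  have hDsum : ∀ c : Fin p → K, σ (∑ i : Fin p, algebraMap K L (c i) * π ^ (i : ℕ)) -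
      (∑ i : Fin p, algebraMap K L (c i) * π ^ (i : ℕ)) =
      ∑ i ∈ Finset.univ.erase (⟨0, hp.out.pos⟩ : Fin p),
        algebraMap K L (c i) * π ^ (i : ℕ) * ((1 + e) ^ (i : ℕ) - 1) := by
    intro c
    rw [Finset.sum_erase _ (by simp), map_sum, ← Finset.sum_sub_distrib]
    exact Finset.sum_congr rfl fun i _ => hDterm _ _
  have hipos : ∀ i : Fin p, i ∈ Finset.univ.erase (⟨0, hp.out.pos⟩ : Fin p) → 0 < (i : ℕ) := by
    intro i hi
    rw [Finset.mem_erase] at hi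
    rcases Nat.eq_zero_or_pos (i : ℕ) with h | h
    · exact absurd (Fin.ext h) hi.1
    · exact h
  have hndvd : ∀ i : Fin p, 0 < (i : ℕ) → ∀ a : ℤ, (p : ℤ) * a + (i : ℕ) ≠ 0 := by
    intro i hi a h
    have : (p : ℤ) ∣ ((i : ℕ) : ℤ) := ⟨-a, by linarith⟩
    exact Nat.not_dvd_of_pos_of_lt hi i.2 (by exact_mod_cast this)
  have hev : wL.v e = ((t : ℤ) : WithTop ℤ) := by
    apply le_antisymm _ hlow
    obtain ⟨x, hx0, hx⟩ := h2
    obtain ⟨c, hc, hcle⟩ := hexp x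
    have h3 : ((1 : ℤ) : WithTop ℤ) + wL.v e ≤ wL.v (σ x - x) := by
      rw [hc, hDsum]
      apply v_sum_ge
      intro i hi
      rw [wL.map_mul]
      refine add_le_add ?_ (hpow_ge i)
      have h4 := le_trans hx0 (hcle i)
      rw [hterm] at h4 ⊢
      rcases v_cases wK (c i) with h0 | ⟨a, ha⟩
      · rw [h0, wK.v_zero, nsmul_top' hp.out.ne_zero, WithTop.top_add]
        exact le_top
      · rw [ha, nsmul_coe, ← WithTop.coe_add] at h4 ⊢
        have h5 : (0 : ℤ) ≤ p * a + (i : ℕ) := by exact_mod_cast h4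
        have := hndvd i (hipos i hi) a
        exact WithTop.coe_le_coe.2 (by omega)
    have h4 := le_trans h3 hx
    rcases top_cases (wL.v e) with h' | ⟨a, h'⟩
    · rw [h', WithTop.add_top, top_le_iff] at h4
      exact absurd h4 WithTop.coe_ne_top
    · rw [h'] at h4 ⊢
      have : 1 + a ≤ (t : ℤ) + 1 := by exact_mod_cast h4
      exact WithTop.coe_le_coe.2 (by omega)
  have ht1 : (1 : ℤ) ≤ t := by rw [hev] at he1; exact_mod_cast he1
  have hpow_eq : ∀ i : ℕ, 0 < i → i < p → wL.v ((1 + e) ^ i - 1) = ((t : ℤ) : WithTop ℤ) := by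
    intro i hi0 hip
    obtain ⟨r, hr, hr'⟩ := one_add_pow_expand wL e he0 i
    rw [hr', show (1 : L) + i * e + e * e * r - 1 = i * e + e * (e * r) by ring]
    have h3 : wL.v (i * e : L) = ((t : ℤ) : WithTop ℤ) := by
      rw [wL.map_mul, v_natCast_eq wL hi0 hip, zero_add, hev]
    rw [v_add_eq_of_lt, h3]
    rw [h3, wL.map_mul, wL.map_mul, hev]
    calc ((t : ℤ) : WithTop ℤ) < (((t : ℤ) + t : ℤ) : WithTop ℤ) := WithTop.coe_lt_coe.2 (by omega)
      _ = ((t : ℤ) : WithTop ℤ) + (((t : ℤ) : WithTop ℤ) + 0) := by rw [add_zero, WithTop.coe_add]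
      _ ≤ _ := by gcongr
  constructor
  · intro y
    obtain ⟨c, hc, hcle⟩ := hexp y
    have : σ y - y = ∑ i ∈ Finset.univ.erase (⟨0, hp.out.pos⟩ : Fin p),
        algebraMap K L (c i) * π ^ (i : ℕ) * ((1 + e) ^ (i : ℕ) - 1) := by
      rw [← hDsum, ← hc]
    rw [this]
    apply v_sum_ge
    intro i hi
    rw [wL.map_mul]
    exact add_le_add (hcle i) (hlow.trans (hpow_ge i))
  · intro y hy
    obtain ⟨c, hc, hcle⟩ := hexp y
    have hdy : σ y - y = ∑ i ∈ Finset.univ.erase (⟨0, hp.out.pos⟩ : Fin p),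
        algebraMap K L (c i) * π ^ (i : ℕ) * ((1 + e) ^ (i : ℕ) - 1) := by
      rw [← hDsum, ← hc]
    have hv : ∀ i ∈ Finset.univ.erase (⟨0, hp.out.pos⟩ : Fin p),
        wL.v (algebraMap K L (c i) * π ^ (i : ℕ) * ((1 + e) ^ (i : ℕ) - 1)) =
        p • wK.v (c i) + (((i : ℕ) + (t : ℤ) : ℤ) : WithTop ℤ) := by
      intro i hi
      rw [wL.map_mul, hterm, hpow_eq i (hipos i hi) i.2, add_assoc, WithTop.coe_add]
    rw [hdy, v_sum_mod wK wL _ _ c t hv] at hy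
    rcases (Finset.univ.erase (⟨0, hp.out.pos⟩ : Fin p)).eq_empty_or_nonempty with hS | hS
    · rw [hS, Finset.inf_empty] at hy
      exact WithTop.coe_ne_top hy.symm
    · obtain ⟨i, hi, hi'⟩ := Finset.exists_mem_eq_inf _ hS
        (fun i : Fin p => wL.v (algebraMap K L (c i) * π ^ (i : ℕ) * ((1 + e) ^ (i : ℕ) - 1)))
      rw [hi', hv i hi] at hy
      rcases v_cases wK (c i) with h0 | ⟨a, ha⟩
      · rw [h0, wK.v_zero] at hy
        have : p • (⊤ : WithTop ℤ) = ⊤ := nsmul_top' hp.out.ne_zero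
        rw [this, WithTop.top_add] at hy
        exact WithTop.coe_ne_top hy.symm
      · rw [ha, nsmul_coe, ← WithTop.coe_add, WithTop.coe_eq_coe] at hy
        exact hndvd i (hipos i hi) a (by linarith)

end ext
end WTZ

namespace WTZ

section tr
variable {p : ℕ} [hp : Fact p.Prime] {K L : Type*} [Field K] [Field L] [Algebra K L]
    (wL : CompleteDiscreteValuation L)

lemma sum_aut_eq [FiniteDimensional K L] [CharP K p] [IsGalois K L]
    (hcard : Nat.card (L ≃ₐ[K] L) = p)
    (σ : L ≃ₐ[K] L) (hσ : σ ≠ 1) (y : L) :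
    ∑ τ : L ≃ₐ[K] L, τ y = ((σ.toLinearMap - 1 : Module.End K L) ^ (p - 1)) y := by
  have hord : orderOf σ = p := by
    have h1 : orderOf σ ∣ p := hcard ▸ orderOf_dvd_natCard σ
    rcases (Nat.dvd_prime hp.out).1 h1 with h | h
    · exact absurd (orderOf_eq_one_iff.1 h) hσ
    · exact h
  have hpoly : ∑ i ∈ Finset.range p, (Polynomial.X : Polynomial K) ^ i = (Polynomial.X - 1) ^ (p - 1) := by
    rw [← Polynomial.cyclotomic_prime]
    have := Polynomial.cyclotomic_mul_prime_eq_pow_of_not_dvd K (p := p) (n := 1) hp.out.not_dvd_one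
    rw [one_mul, Polynomial.cyclotomic_one] at this
    exact this
  have h2 := congrArg (Polynomial.aeval (σ.toLinearMap : Module.End K L)) hpoly
  simp only [map_sum, map_pow, Polynomial.aeval_X, map_sub, map_one] at h2
  rw [← h2, LinearMap.sum_apply]
  have h3 : ∀ i : ℕ, ((σ.toLinearMap : Module.End K L) ^ i) y = (σ ^ i) y := by
    intro i
    induction i with
    | zero => simp
    | succ i ih => rw [pow_succ', pow_succ', Module.End.mul_apply, ih]; rfl
  simp only [h3]
  have hinj : Set.InjOn (fun i : ℕ => σ ^ i) (Finset.range p) := by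
    intro i hi j hj h
    rw [Finset.coe_range, Set.mem_Iio] at hi hj
    exact pow_injOn_Iio_orderOf (by rw [hord]; exact hi) (by rw [hord]; exact hj) h
  have himg : (Finset.range p).image (fun i : ℕ => σ ^ i) = Finset.univ := by
    apply Finset.eq_univ_of_card
    rw [Finset.card_image_of_injOn hinj, Finset.card_range, ← Nat.card_eq_fintype_card, hcard]
  rw [← himg, Finset.sum_image hinj]

lemma tr_ge [FiniteDimensional K L] [CharP K p] [IsGalois K L]
    (hcard : Nat.card (L ≃ₐ[K] L) = p)
    (σ : L ≃ₐ[K] L) (hσ : σ ≠ 1) (t : ℕ)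
    (hA : ∀ y : L, wL.v y + ((t : ℤ) : WithTop ℤ) ≤ wL.v (σ y - y)) (y : L) :
    wL.v y + ((((p : ℤ) - 1) * t : ℤ) : WithTop ℤ) ≤ wL.v (∑ τ : L ≃ₐ[K] L, τ y) := by
  rw [sum_aut_eq hcard σ hσ]
  have h : ∀ k : ℕ, wL.v y + (((k : ℤ) * t : ℤ) : WithTop ℤ) ≤
      wL.v (((σ.toLinearMap - 1 : Module.End K L) ^ k) y) := by
    intro k
    induction k with
    | zero => simp
    | succ k ih =>
      rw [pow_succ', Module.End.mul_apply]
      have := hA (((σ.toLinearMap - 1 : Module.End K L) ^ k) y)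
      refine le_trans ?_ this
      refine le_trans (le_of_eq ?_) (add_le_add ih le_rfl)
      rw [add_assoc, ← WithTop.coe_add]
      congr 2
      push_cast; ring
  have := h (p - 1)
  rwa [Nat.cast_sub hp.out.one_le, Nat.cast_one] at this

lemma hilbert90 [FiniteDimensional K L] [IsGalois K L]
    (hcard : Nat.card (L ≃ₐ[K] L) = p) (hdeg : Module.finrank K L = p)
    (σ : L ≃ₐ[K] L) (hσ : σ ≠ 1) (y : L) (hy : ∑ τ : L ≃ₐ[K] L, τ y = 0) :
    ∃ z : L, y = σ z - z := by
  have : Fact (Nat.card (L ≃ₐ[K] L)).Prime := ⟨hcard ▸ hp.out⟩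
  let D : L →ₗ[K] L := σ.toLinearMap - LinearMap.id
  have hDa : ∀ z, D z = σ z - z := fun z => rfl
  have hkerD : LinearMap.ker D ≤ LinearMap.range (Algebra.linearMap K L) := by
    intro z hz
    rw [LinearMap.mem_ker, hDa, sub_eq_zero] at hz
    have hall : ∀ τ : L ≃ₐ[K] L, τ z = z := by
      intro τ
      have hmem : τ ∈ Subgroup.zpowers σ := mem_zpowers_of_prime_card rfl hσ
      have : Subgroup.zpowers σ ≤ MulAction.stabilizer (L ≃ₐ[K] L) z := by
        rw [Subgroup.zpowers_le]; exact hz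
      exact this hmem
    have := (IsGalois.mem_bot_iff_fixed z).2 hall
    obtain ⟨c, hc⟩ := IntermediateField.mem_bot.1 this
    exact ⟨c, hc⟩
  have h1 : Module.finrank K (LinearMap.ker D) ≤ 1 := by
    refine le_trans (Submodule.finrank_mono hkerD) ?_
    refine le_trans (LinearMap.finrank_range_le _) (by simp)
  have h2 := LinearMap.finrank_range_add_finrank_ker D
  have h3 := LinearMap.finrank_range_add_finrank_ker (Algebra.trace K L)
  have htr : ∀ x, x ∈ LinearMap.ker (Algebra.trace K L) ↔ ∑ τ : L ≃ₐ[K] L, τ x = 0 := by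
    intro x
    rw [LinearMap.mem_ker, ← trace_eq_sum_automorphisms (K := K) x]
    exact (map_eq_zero (algebraMap K L)).symm
  have h4 : LinearMap.range D ≤ LinearMap.ker (Algebra.trace K L) := by
    rintro _ ⟨z, rfl⟩
    rw [htr, hDa]
    simp only [map_sub, Finset.sum_sub_distrib]
    rw [sub_eq_zero]
    exact Equiv.sum_comp (Equiv.mulRight σ) (fun τ : L ≃ₐ[K] L => τ z)
  have h5 : 1 ≤ Module.finrank K (LinearMap.range (Algebra.trace K L)) := by
    rw [Nat.one_le_iff_ne_zero]
    intro h
    have := Submodule.finrank_eq_zero.1 h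
    exact Algebra.trace_ne_zero K L (LinearMap.range_eq_bot.1 this)
  have h6 := Submodule.eq_of_le_of_finrank_le h4 (by omega)
  have h7 := (htr y).2 hy
  rw [← h6] at h7
  obtain ⟨z, hz⟩ := h7
  exact ⟨z, by rw [← hz, hDa]⟩

/-- the norm/trace relation in `L` between consecutive Witt coefficients -/
lemma witt_rel [FiniteDimensional K L] [CharP L p]
    (hGal : ∀ (σ : L ≃ₐ[K] L) (x : L), wL.v (σ x) = wL.v x)
    (hcard : Nat.card (L ≃ₐ[K] L) = p) (x : WittVector p L) (k : ℕ)
    (hx : (∑ τ : L ≃ₐ[K] L, WittVector.map (τ : L →+* L) x).coeff (k + 1) = 0) :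
    ∃ z : L, ∏ τ : L ≃ₐ[K] L, τ (x.coeff k) = - ∑ τ : L ≃ₐ[K] L, τ z ∧
      ∀ b c : ℤ, 0 ≤ c → b ≤ p * c → (∀ j ≤ k, (c : WithTop ℤ) ≤ wL.v (x.coeff j)) →
        (b : WithTop ℤ) ≤ wL.v (x.coeff (k + 1)) → (b : WithTop ℤ) ≤ wL.v z := by
  obtain ⟨Z, hZ, hwt⟩ := sumPoly_succ p hcard k
  let φ : MvPolynomial ((L ≃ₐ[K] L) × ℕ) (ZMod p) →+* L :=
    MvPolynomial.eval₂Hom (ZMod.castHom (dvd_refl p) L) (fun i => i.1 (x.coeff i.2))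
  have h1 := map_sumPoly p φ (k + 1)
  have h1' : φ (sumPoly p (L ≃ₐ[K] L) (k + 1)) = 0 := by
    rw [h1, ← hx]
    congr 1
    refine Finset.sum_congr rfl fun τ _ => ?_
    ext j
    simp [φ]
  have hren : ∀ (g : L ≃ₐ[K] L) (P : MvPolynomial ((L ≃ₐ[K] L) × ℕ) (ZMod p)),
      φ (MvPolynomial.rename (act g) P) = g (φ P) := by
    intro g P
    have : φ.comp (MvPolynomial.rename (R := ZMod p) (act g)).toRingHom = (g : L →+* L).comp φ := by
      apply MvPolynomial.ringHom_ext'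
      · exact Subsingleton.elim _ _
      · intro i
        simp [φ, act_apply]
    exact congrArg (fun f => f P) this
  refine ⟨φ Z, ?_, ?_⟩
  · rw [hZ, map_add, map_prod, map_sum] at h1'
    simp only [hren] at h1'
    rw [← eq_neg_iff_add_eq_zero] at h1'
    rw [← h1']
    simp [φ]
  · intro b c hc hbc hj hk
    rw [Z.as_sum, map_sum]
    apply v_sum_ge
    intro m hm
    have hw := hwt m hm
    simp only [φ]
    rw [MvPolynomial.eval₂Hom_monomial, wL.map_mul]
    have hcoef : 0 ≤ wL.v ((ZMod.castHom (dvd_refl p) L) (Z.coeff m)) := by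
      rw [← ZMod.natCast_zmod_val (Z.coeff m), map_natCast]
      exact v_natCast_nonneg wL _
    refine le_add_of_nonneg_of_le hcoef ?_
    rw [Finsupp.prod, v_prod]
    simp only [v_pow, hGal]
    rw [wt, Finsupp.sum] at hw
    have hp0 := hp.out.pos
    -- every index is at most k + 1
    have hle : ∀ i ∈ m.support, p ^ i.2 * m i ≤ p ^ (k + 1) := by
      intro i hi
      rw [← hw]
      exact Finset.single_le_sum (f := fun i => p ^ i.2 * m i) (fun _ _ => Nat.zero_le _) hi
    have hi1 : ∀ i ∈ m.support, i.2 ≤ k + 1 := by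
      intro i hi
      have h2 := hle i hi
      have h3 : 1 ≤ m i := Nat.one_le_iff_ne_zero.2 (Finsupp.mem_support_iff.1 hi)
      exact (Nat.pow_le_pow_iff_right hp.out.one_lt).1 (le_trans (Nat.le_mul_of_pos_right _ h3) h2)
    by_cases hex : ∃ i ∈ m.support, i.2 = k + 1
    · obtain ⟨i, hi, hik⟩ := hex
      have h3 : 1 ≤ m i := Nat.one_le_iff_ne_zero.2 (Finsupp.mem_support_iff.1 hi)
      have hm1 : m i = 1 := by
        have h2 := hle i hi
        rw [hik] at h2
        have := Nat.le_of_mul_le_mul_left (h2.trans_eq (mul_one _).symm) (pow_pos hp0 _)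
        omega
      have hsup : m.support = {i} := by
        rw [Finset.eq_singleton_iff_unique_mem]
        refine ⟨hi, fun j hj' => ?_⟩
        by_contra hji
        have h4 : 1 ≤ m j := Nat.one_le_iff_ne_zero.2 (Finsupp.mem_support_iff.1 hj')
        have h5 := Finset.add_le_sum (f := fun i => p ^ i.2 * m i) (fun _ _ => Nat.zero_le _) hi hj'
          (Ne.symm hji)
        rw [hw] at h5
        simp only [hik, hm1, mul_one] at h5
        have : 0 < p ^ j.2 * m j := Nat.mul_pos (pow_pos hp0 _) h4
        omega
      rw [hsup, Finset.sum_singleton, hm1, one_nsmul, hik]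
      exact hk
    · push Not at hex
      have hik : ∀ i ∈ m.support, i.2 ≤ k := by
        intro i hi
        have := hi1 i hi
        have := hex i hi
        omega
      have hdeg : p ≤ ∑ i ∈ m.support, m i := by
        have h2 : p ^ (k + 1) ≤ p ^ k * ∑ i ∈ m.support, m i := by
          rw [← hw, Finset.mul_sum]
          refine Finset.sum_le_sum fun i hi => ?_
          exact Nat.mul_le_mul_right _ (Nat.pow_le_pow_right hp0 (hik i hi))
        rw [pow_succ] at h2
        exact Nat.le_of_mul_le_mul_left h2 (pow_pos hp0 _)
      have h3 : ∑ i ∈ m.support, m i • (c : WithTop ℤ) ≤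
          ∑ i ∈ m.support, m i • wL.v (x.coeff i.2) :=
        Finset.sum_le_sum fun i hi => nsmul_le_nsmul_right (hj _ (hik i hi)) _
      refine le_trans ?_ h3
      rw [← Finset.sum_smul, nsmul_coe]
      refine WithTop.coe_le_coe.2 (hbc.trans ?_)
      exact mul_le_mul_of_nonneg_right (by exact_mod_cast hdeg) hc

lemma nsmul_le_imp {A : ℤ} {x : WithTop ℤ} (h : (A : WithTop ℤ) ≤ p • x) :
    ∃ b : ℤ, (b : WithTop ℤ) ≤ x ∧ A ≤ p * b ∧ p * b < A + p := by
  have hp0 : (0 : ℤ) < p := by exact_mod_cast hp.out.pos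
  have e1 := Int.emod_add_mul_ediv (A + p - 1) p
  have e2 := Int.emod_nonneg (A + p - 1) hp0.ne'
  have e3 := Int.emod_lt_of_pos (A + p - 1) hp0
  refine ⟨(A + p - 1) / p, ?_, by omega, by omega⟩
  rcases top_cases x with rfl | ⟨a, rfl⟩
  · exact le_top
  · rw [nsmul_coe, WithTop.coe_le_coe] at h
    refine WithTop.coe_le_coe.2 ?_
    by_contra! hlt
    have : (p : ℤ) * (a + 1) ≤ p * ((A + p - 1) / p) := mul_le_mul_of_nonneg_left (by omega) hp0.le
    rw [mul_add] at this
    omega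

/-- the iteration -/
lemma iterate (x : ℕ → WithTop ℤ) (n t : ℕ) (hn : 1 ≤ n) (hpos : ∀ i, 0 ≤ x i)
    (hrec : ∀ k, k + 1 < n → ∀ b c : ℤ, 0 ≤ c → b ≤ p * c → (∀ j ≤ k, (c : WithTop ℤ) ≤ x j) →
      (b : WithTop ℤ) ≤ x (k + 1) → ((b + ((p : ℤ) - 1) * t : ℤ) : WithTop ℤ) ≤ p • x k)
    (ht : t < p ^ (n - 1)) : ((t : ℤ) : WithTop ℤ) ≤ x 0 := by
  have hp2 : (2 : ℤ) ≤ p := by exact_mod_cast hp.out.two_le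
  have hpt : (t : ℤ) ≤ ((p : ℤ) - 1) * t := by nlinarith
  -- first stage
  obtain ⟨c, hc0, hct, hc⟩ : ∃ c : ℤ, 0 ≤ c ∧ (t : ℤ) ≤ p * c ∧ ∀ k, k + 1 < n → (c : WithTop ℤ) ≤ x k := by
    obtain ⟨c, -, h1, h2⟩ := nsmul_le_imp (p := p) (A := ((p : ℤ) - 1) * t) (x := ⊤)
      (by rw [nsmul_top' hp.out.ne_zero]; exact le_top)
    refine ⟨c, by nlinarith, by linarith, fun k hk => ?_⟩
    have h3 := hrec k hk 0 0 le_rfl (by simp) (fun j _ => hpos j) (hpos _)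
    rw [zero_add] at h3
    obtain ⟨b, hb, hb1, hb2⟩ := nsmul_le_imp (p := p) h3
    have : c = b := by
      have h4 : (p : ℤ) * (c - b) < p * 1 := by linarith
      have h5 : (p : ℤ) * (b - c) < p * 1 := by linarith
      have h6 := lt_of_mul_lt_mul_left h4 (by omega)
      have h7 := lt_of_mul_lt_mul_left h5 (by omega)
      omega
    rw [this]; exact hb
  have hmain : ∀ j, j < n → ∃ b : ℤ, (b : WithTop ℤ) ≤ x (n - 1 - j) ∧ b ≤ t ∧
      (t : ℤ) * ((p : ℤ) ^ j - 1) ≤ p ^ j * b := by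
    intro j
    induction j with
    | zero => intro _; exact ⟨0, hpos _, by positivity, by simp⟩
    | succ j ih =>
      intro hj
      obtain ⟨b, hb, hbt, hbp⟩ := ih (by omega)
      have hidx : n - 1 - j = (n - 1 - (j + 1)) + 1 := by omega
      rw [hidx] at hb
      have h3 := hrec (n - 1 - (j + 1)) (by omega) b c hc0 (by linarith)
        (fun i hi => hc i (by omega)) hb
      obtain ⟨b', hb', h4, h5⟩ := nsmul_le_imp (p := p) h3
      refine ⟨b', hb', ?_, ?_⟩
      · have : (p : ℤ) * b' < p * (t + 1) := by linarith
        have := lt_of_mul_lt_mul_left this (by omega)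
        omega
      · have hpj : (0 : ℤ) ≤ (p : ℤ) ^ j := by positivity
        have := mul_le_mul_of_nonneg_left h4 hpj
        rw [pow_succ]
        nlinarith
  obtain ⟨b, hb, hbt, hbp⟩ := hmain (n - 1) (by omega)
  rw [Nat.sub_self] at hb
  refine le_trans (WithTop.coe_le_coe.2 ?_) hb
  by_contra! hlt
  have ht' : (t : ℤ) < (p : ℤ) ^ (n - 1) := by exact_mod_cast ht
  nlinarith

lemma big_imp (s n : ℕ) (hn : 2 ≤ n)
    (hbig : (s : ℚ) * ((p : ℚ) - 1) / (p : ℚ) *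
        (∑ j ∈ Finset.range (n - 2), ((1 : ℚ) / (p : ℚ)) ^ j) > (s : ℚ) - 1) : s < p ^ (n - 1) := by
  have hp1 : (1 : ℚ) < p := by exact_mod_cast hp.out.one_lt
  have hp0 : (p : ℚ) ≠ 0 := by positivity
  have h1 : ((1 : ℚ) / p) ≠ 1 := by
    rw [Ne, div_eq_one_iff_eq hp0]; exact hp1.ne
  rw [geom_sum_eq h1] at hbig
  have h2 : (s : ℚ) * ((p : ℚ) - 1) / (p : ℚ) * ((((1 : ℚ) / p) ^ (n - 2) - 1) / (1 / p - 1)) =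
      s * (1 - ((1 : ℚ) / p) ^ (n - 2)) := by
    have : (1 : ℚ) - p ≠ 0 := by linarith
    have h3 : ((1 : ℚ) / p - 1) ≠ 0 := sub_ne_zero.2 h1
    generalize ((1 : ℚ) / p) ^ (n - 2) = q
    field_simp
    ring
  rw [h2] at hbig
  have h3 : (s : ℚ) * ((1 : ℚ) / p) ^ (n - 2) < 1 := by linarith
  rw [div_pow, one_pow, mul_one_div, div_lt_one (by positivity)] at h3
  have h4 : s < p ^ (n - 2) := by exact_mod_cast h3
  exact lt_of_lt_of_le h4 (Nat.pow_le_pow_right hp.out.pos (by omega))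

end tr
end WTZ

open CompleteDiscreteValuation

/-- Let `L/K` be a totally ramified Galois extension of degree `p` of
complete discrete valued fields of characteristic `p`, with ramification break `s ≥ 1`.
For every `n ≥ 2` with `(s (p-1)/p) (1 + 1/p + ⋯ + 1/p^{n-3}) > s - 1`, every trace-zero
Witt vector `(x₀, …, x_{n-1}) ∈ Wₙ(O_L)` satisfies `v_L(x₀) ≥ s`. -/
theorem witt_trace_zero_first_coeff_valuation
    (p : ℕ) [Fact p.Prime]
    {K L : Type*} [Field K] [Field L] [Algebra K L] [CharP K p]
    (wK : CompleteDiscreteValuation K) (wL : CompleteDiscreteValuation L)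
    [IsGalois K L] [FiniteDimensional K L] (hdeg : Module.finrank K L = p)
    (htot : ∀ x : K, wL.v (algebraMap K L x) = p • wK.v x)
    (hGal : ∀ (σ : L ≃ₐ[K] L) (x : L), wL.v (σ x) = wL.v x)
    (s : ℕ) (hs : IsRamificationBreak K wL s) (hs1 : 1 ≤ s)
    (n : ℕ) (hn : 2 ≤ n)
    (hbig : (s : ℚ) * ((p : ℚ) - 1) / (p : ℚ) *
        (∑ j ∈ Finset.range (n - 2), ((1 : ℚ) / (p : ℚ)) ^ j) > (s : ℚ) - 1) :
    ∀ w : TruncatedWittVector p n wL.integers,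
      (∑ τ : L ≃ₐ[K] L, TruncatedWittVector.map (wL.galRes hGal τ) w = 0) →
      ((s : ℤ) : WithTop ℤ) ≤ wL.v ((w.coeff ⟨0, by omega⟩ : wL.integers) : L) := by
  intro w hw
  have hp : p.Prime := Fact.out
  have : CharP L p := charP_of_injective_algebraMap (algebraMap K L).injective p
  have hcard : Nat.card (L ≃ₐ[K] L) = p := by rw [IsGalois.card_aut_eq_finrank, hdeg]
  obtain ⟨t, rfl⟩ : ∃ t, s = t + 1 := ⟨s - 1, by omega⟩
  -- the generator
  obtain ⟨hs2, hs3⟩ := hs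
  have hs4 := hs3 t (by omega)
  unfold FaithfulOnQuotient at hs4
  push Not at hs4
  obtain ⟨σ, hσ, hσ1⟩ := hs4
  have hσp : σ ^ p = 1 := by rw [← hcard]; exact pow_card_eq_one'
  have h1 : ∀ x : L, 0 ≤ wL.v x → (((t : ℤ) + 1 : ℤ) : WithTop ℤ) ≤ wL.v (σ x - x) := by
    intro x hx
    have h := hσ1 x hx
    rcases WTZ.top_cases (wL.v (σ x - x)) with h' | ⟨a, h'⟩
    · rw [h']; exact le_top
    · rw [h'] at h ⊢
      rw [WithTop.coe_lt_coe] at h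
      exact WithTop.coe_le_coe.2 (by omega)
  have h2 : ∃ x : L, 0 ≤ wL.v x ∧ wL.v (σ x - x) ≤ (((t : ℤ) + 1 : ℤ) : WithTop ℤ) := by
    obtain ⟨x, hx, hx'⟩ := hs2 σ hσ
    exact ⟨x, hx, by exact_mod_cast hx'⟩
  obtain ⟨hA, hB⟩ := WTZ.ram_facts wK wL hdeg htot hGal σ hσp t h1 h2
  -- lift to Witt vectors over L
  let X : WittVector p wL.integers := w.out
  let x : WittVector p L := WittVector.map wL.integers.subtype X
  have hcoef : ∀ i, i < n → (∑ τ : L ≃ₐ[K] L, WittVector.map (τ : L →+* L) x).coeff i = 0 := by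
    intro i hi
    have e1 : ∑ τ : L ≃ₐ[K] L, WittVector.map (τ : L →+* L) x =
        WittVector.map wL.integers.subtype
          (∑ τ : L ≃ₐ[K] L, WittVector.map (wL.galRes hGal τ) X) := by
      rw [map_sum]
      refine Finset.sum_congr rfl fun τ _ => ?_
      ext j
      simp [x, galRes]
    have e2 : WittVector.truncate n (∑ τ : L ≃ₐ[K] L, WittVector.map (wL.galRes hGal τ) X) = 0 := by
      rw [map_sum, ← hw]
      rfl
    have e3 := congrArg (fun z => TruncatedWittVector.coeff (⟨i, hi⟩ : Fin n) z) e2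
    simp only [WittVector.coeff_truncate, TruncatedWittVector.coeff_zero] at e3
    rw [e1, WittVector.map_coeff, e3, map_zero]
  have hxpos : ∀ i, 0 ≤ wL.v (x.coeff i) := by
    intro i
    simp only [x, WittVector.map_coeff]
    exact (X.coeff i).2
  have hrec : ∀ k, k + 1 < n → ∀ b c : ℤ, 0 ≤ c → b ≤ p * c →
      (∀ j ≤ k, (c : WithTop ℤ) ≤ wL.v (x.coeff j)) →
      (b : WithTop ℤ) ≤ wL.v (x.coeff (k + 1)) →
      ((b + ((p : ℤ) - 1) * t : ℤ) : WithTop ℤ) ≤ p • wL.v (x.coeff k) := by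
    intro k hk b c hc hbc hj hb
    obtain ⟨z, hz, hz'⟩ := WTZ.witt_rel wL hGal hcard x k (hcoef _ hk)
    have h3 := hz' b c hc hbc hj hb
    have h4 := WTZ.tr_ge wL hcard σ hσ t hA z
    have h5 := congrArg wL.v hz
    rw [wL.v_neg, WTZ.v_prod] at h5
    simp only [hGal, Finset.sum_const, Finset.card_univ, ← Nat.card_eq_fintype_card, hcard] at h5
    rw [h5, WithTop.coe_add]
    exact le_trans (add_le_add h3 le_rfl) h4
  have hbig' := WTZ.big_imp (t + 1) n hn hbig
  have hge := WTZ.iterate (p := p) (fun i => wL.v (x.coeff i)) n t (by omega) hxpos hrec (by omega)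
  -- the last step: the valuation is not equal to t
  have htr0 : ∑ τ : L ≃ₐ[K] L, τ (x.coeff 0) = 0 := by
    have h3 := hcoef 0 (by omega)
    have h4 : ∀ S : Finset (L ≃ₐ[K] L), (∑ τ ∈ S, WittVector.map (τ : L →+* L) x).coeff 0 =
        ∑ τ ∈ S, τ (x.coeff 0) := by
      intro S
      have := map_sum (WittVector.constantCoeff (p := p) (R := L))
        (fun τ : L ≃ₐ[K] L => WittVector.map (τ : L →+* L) x) S
      exact this
    rw [← h4, h3]
  obtain ⟨z, hz⟩ := WTZ.hilbert90 hcard hdeg σ hσ _ htr0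
  have hne := hB z
  rw [← hz] at hne
  have hx0 : x.coeff 0 = ((w.coeff ⟨0, by omega⟩ : wL.integers) : L) := by
    simp only [x, X, WittVector.map_coeff]
    rw [← TruncatedWittVector.coeff_out]
    rfl
  rw [← hx0]
  rcases WTZ.top_cases (wL.v (x.coeff 0)) with h' | ⟨a, h'⟩
  · rw [h']; exact le_top
  · rw [h'] at hge hne ⊢
    rw [WithTop.coe_le_coe] at hge
    rw [Ne, WithTop.coe_eq_coe] at hne
    refine WithTop.coe_le_coe.2 ?_
    push_cast
    omega
end
end
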